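/- arXiv:2001.03938 — 2 statements merged into one kernel-verified Lean document; each statement's English description precedes it below -/
import Mathlib

section
/- Let G be a simple graph on [n] with no isolated vertex such that I = I(G) has almost maximal finite index. Then the depth of I as an S-module satisfies 3 ≤ depth(I) ≤ 4, where S = K[x_1,...,x_n]. -/
open Finsupp

namespace EP

variable (K : Type) [Field K]

/-! ## Simplicial chains over a linearly ordered vertex set -/

variable {V : Type} [Fintype V] [DecidableEq V] [LinearOrder V]

/-- Boundary of a single (oriented) face, given as a finset. -/
noncomputable def bdFace (s : Finset V) : Finset V →₀ K :=
  ∑ v ∈ s, ((-1 : K) ^ ((s.filter (fun w => w < v)).card)) • Finsupp.single (s.erase v) 1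

/-- The simplicial boundary map on the free module on all finsets of vertices
(the augmented oriented chain complex, with the empty set playing the role of
the `(-1)`-dimensional face). -/
noncomputable def bdS : (Finset V →₀ K) →ₗ[K] (Finset V →₀ K) :=
  Finsupp.lsum K fun s => LinearMap.toSpanSingleton K (Finset V →₀ K) (bdFace K s)

/-- Chains supported on faces of a complex `Δ` having `k` vertices. -/
noncomputable def faceSpan (Δ : Set (Finset V)) (k : ℕ) : Submodule K (Finset V →₀ K) :=
  Submodule.span K {c | ∃ F ∈ Δ, F.card = k ∧ c = Finsupp.single F 1}

/-- Dimension of the `d`-th reduced simplicial homology of `Δ` over `K`. -/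
noncomputable def redHomRank (Δ : Set (Finset V)) (d : ℕ) : ℕ :=
  Module.finrank K ↥(faceSpan K Δ (d+1) ⊓ LinearMap.ker (bdS K)) -
    Module.finrank K
      ↥(Submodule.map (bdS K) (faceSpan K Δ (d+2)) ⊓
          (faceSpan K Δ (d+1) ⊓ LinearMap.ker (bdS K)))

/-- The flag complex of a graph: faces are the cliques. -/
def flagComplex (G : SimpleGraph V) : Set (Finset V) :=
  {F | ∀ i ∈ F, ∀ j ∈ F, i ≠ j → G.Adj i j}

/-- The flag complex of the induced subgraph of `G` on `W`. -/
def flagComplexOn (G : SimpleGraph V) (W : Finset V) : Set (Finset V) :=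
  {F | (F : Set V) ⊆ (W : Set V) ∧ ∀ i ∈ F, ∀ j ∈ F, i ≠ j → G.Adj i j}

/-- The induced subcomplex of `Δ` on a vertex subset `W`. -/
def restrictComplex (Δ : Set (Finset V)) (W : Finset V) : Set (Finset V) :=
  {F | F ∈ Δ ∧ F ⊆ W}

/-- The oriented `1`-chain `[a,b]` (so `[a,b] = -[b,a]`). -/
noncomputable def edgeChain (a b : V) : Finset V →₀ K :=
  if a < b then Finsupp.single {a, b} 1 else -Finsupp.single {a, b} 1

/-- The oriented `2`-chain `[x,y,z]`, antisymmetric under transpositions. -/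
noncomputable def triChain (x y z : V) : Finset V →₀ K :=
  if (x < y ∧ y < z) ∨ (y < z ∧ z < x) ∨ (z < x ∧ x < y)
  then Finsupp.single {x, y, z} 1
  else -Finsupp.single {x, y, z} 1

/-! ## Graded Betti numbers of monomial ideals via the Taylor complex -/

variable {n : ℕ}

/-- The multidegree lcm of the monomial generators indexed by `S`. -/
def mlcm {r : ℕ} (g : Fin r → (Fin n → ℕ)) (S : Finset (Fin r)) : Fin n → ℕ :=
  fun x => S.sup fun k => g k x

/-- The differential of the Taylor complex tensored with the residue field `K`. -/
noncomputable def bdT {r : ℕ} (g : Fin r → (Fin n → ℕ)) :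
    (Finset (Fin r) →₀ K) →ₗ[K] (Finset (Fin r) →₀ K) :=
  Finsupp.lsum K fun S => LinearMap.toSpanSingleton K (Finset (Fin r) →₀ K)
    (∑ k ∈ S, if mlcm g (S.erase k) = mlcm g S
      then ((-1 : K) ^ ((S.filter (fun j => j < k)).card)) • Finsupp.single (S.erase k) (1 : K)
      else 0)

/-- The degree-`j` strand of the Taylor complex in homological degree `p`. -/
noncomputable def strand {r : ℕ} (g : Fin r → (Fin n → ℕ)) (p j : ℕ) :
    Submodule K (Finset (Fin r) →₀ K) :=
  Submodule.span K
    {c | ∃ S : Finset (Fin r), S.card = p ∧ (∑ x, mlcm g S x) = j ∧ c = Finsupp.single S 1}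

/-- `dim_K Tor_p(S/I, K)_j`, computed from the Taylor complex on the monomial
generators `g` of `I`. -/
noncomputable def torRank {r : ℕ} (g : Fin r → (Fin n → ℕ)) (p j : ℕ) : ℕ :=
  Module.finrank K ↥(strand K g p j ⊓ LinearMap.ker (bdT K g)) -
    Module.finrank K
      ↥(Submodule.map (bdT K g) (strand K g (p+1) j) ⊓
          (strand K g p j ⊓ LinearMap.ker (bdT K g)))

/-- The graded Betti number `β_{i,j}(I)` of the monomial ideal `I` generated by
the monomials with exponent vectors `g`, i.e. `dim_K Tor_i(I, K)_j = dim_K Tor_{i+1}(S/I, K)_j`. -/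
noncomputable def betti {r : ℕ} (g : Fin r → (Fin n → ℕ)) (i j : ℕ) : ℕ :=
  torRank K g (i+1) j

/-- The monomial with exponent vector `a`. -/
noncomputable def mono (a : Fin n → ℕ) : MvPolynomial (Fin n) K :=
  MvPolynomial.monomial (Finsupp.equivFunOnFinite.symm a) 1

/-- `g` is a list of exponent vectors of monomials generating the ideal `I`. -/
def IsGenSet {r : ℕ} (g : Fin r → (Fin n → ℕ)) (I : Ideal (MvPolynomial (Fin n) K)) : Prop :=
  Ideal.span (Set.range fun k => mono K (g k)) = I

/-- The ideal (generated by the monomials with exponent vectors `g`) has a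
`d`-linear resolution. -/
def HasLinRes {r : ℕ} (g : Fin r → (Fin n → ℕ)) (d : ℕ) : Prop :=
  ∀ i j, betti K g i j ≠ 0 → j = i + d

/-- Castelnuovo–Mumford regularity of a monomial ideal, from its Betti numbers. -/
noncomputable def regT {r : ℕ} (g : Fin r → (Fin n → ℕ)) : ℕ :=
  sSup {d | ∃ i j, betti K g i j ≠ 0 ∧ j = i + d}

/-! ## Edge ideals -/

/-- The edge ideal of a simple graph. -/
noncomputable def edgeIdeal (G : SimpleGraph (Fin n)) : Ideal (MvPolynomial (Fin n) K) :=
  Ideal.span {m | ∃ i j : Fin n, G.Adj i j ∧ m = MvPolynomial.X i * MvPolynomial.X j}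

/-- The edge set of `G` as a finset. -/
noncomputable def edgeFins (G : SimpleGraph (Fin n)) : Finset (Sym2 (Fin n)) :=
  letI : Fintype ↥G.edgeSet := Fintype.ofFinite _
  G.edgeFinset

/-- The canonical monomial (exponent vector) generators of the edge ideal of `G`. -/
noncomputable def edgeGens (G : SimpleGraph (Fin n)) : Fin (edgeFins G).card → (Fin n → ℕ) :=
  fun k x => if x ∈ ((edgeFins G).equivFin.symm k : Sym2 (Fin n)) then 1 else 0

/-- The graded Betti numbers `β_{i,j}(I(G))` of the edge ideal of `G` over `K`. -/
noncomputable def gBetti (G : SimpleGraph (Fin n)) (i j : ℕ) : ℕ :=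
  betti K (edgeGens G) i j

/-- The projective dimension `pd(I(G))` of the edge ideal of `G` over `K`. -/
noncomputable def gPd (G : SimpleGraph (Fin n)) : ℕ :=
  sSup {i | ∃ j, gBetti K G i j ≠ 0}

/-- The Green–Lazarsfeld index of the edge ideal of `G` over `K`
(`⊤` iff the ideal has a linear resolution). -/
noncomputable def gIndex (G : SimpleGraph (Fin n)) : ℕ∞ :=
  sInf {N : ℕ∞ | ∃ i j : ℕ, N = (i : ℕ∞) ∧ i + 2 < j ∧ gBetti K G i j ≠ 0}

/-- The regularity of the edge ideal of `G` over `K`. -/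
noncomputable def gReg (G : SimpleGraph (Fin n)) : ℕ :=
  sSup {d | ∃ i j, gBetti K G i j ≠ 0 ∧ j = i + d}

/-- The edge ideal of `G` has a (2-)linear resolution over `K`. -/
def gLinRes (G : SimpleGraph (Fin n)) : Prop :=
  ∀ i j, gBetti K G i j ≠ 0 → j = i + 2

/-- The edge ideal of `G` has almost maximal finite index over `K`:
`index(I(G)) = pd(I(G)) - 1` (with the index finite). -/
def AMFI (G : SimpleGraph (Fin n)) : Prop :=
  gIndex K G + 1 = (gPd K G : ℕ∞)

/-! ## Graph-theoretic notions -/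

/-- `H` contains an induced (chordless) cycle of length `l`. -/
def HasInducedCycle {W : Type} (H : SimpleGraph W) (l : ℕ) : Prop :=
  ∃ f : ZMod l → W, Function.Injective f ∧
    ∀ i j : ZMod l, H.Adj (f i) (f j) ↔ (j = i + 1 ∨ i = j + 1)

/-- `H` is chordal: it has no induced cycle of length greater than `3`. -/
def Chordal {W : Type} (H : SimpleGraph W) : Prop :=
  ∀ l : ℕ, 3 < l → ¬ HasInducedCycle H l

end EP

set_option linter.unusedSectionVars false
set_option linter.unusedSimpArgs false

namespace HH
section
variable {K : Type} [Field K] {α : Type} [Fintype α] [DecidableEq α] (ρ : α → ℕ)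

def cnt (k : α) (T : Finset α) : ℕ := (T.filter (fun j => ρ j < ρ k)).card

def eps (K : Type) [Field K] (k : α) (T : Finset α) : K := (-1 : K) ^ cnt ρ k T

def D (f : Finset α → K) (T : Finset α) : K :=
  ∑ k, if k ∈ T then 0 else eps ρ K k T * f (insert k T)

lemma eps_insert (k j : α) (T : Finset α) (hk : k ∉ T) :
    eps ρ K j (insert k T) = (if ρ k < ρ j then -1 else 1) * eps ρ K j T := by
  unfold eps cnt
  rw [Finset.filter_insert]
  split_ifs with h
  · rw [Finset.card_insert_of_notMem (by simp [hk]), pow_succ]; ring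
  · simp

lemma eps_sq (k : α) (T : Finset α) : eps ρ K k T * eps ρ K k T = 1 := by
  unfold eps
  rw [← mul_pow]; simp

lemma eps_swap (hρ : Function.Injective ρ) (k j : α) (T : Finset α) (hk : k ∉ T) (hj : j ∉ T)
    (h : k ≠ j) : eps ρ K k T * eps ρ K j (insert k T)
      = - (eps ρ K j T * eps ρ K k (insert j T)) := by
  rw [eps_insert ρ k j T hk, eps_insert ρ j k T hj]
  have : ρ k ≠ ρ j := fun e => h (hρ e)
  rcases lt_or_gt_of_ne this with h1 | h1
  · rw [if_pos h1, if_neg (by omega)]; ring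
  · rw [if_neg (by omega), if_pos h1]; ring

lemma eps_swap2 (hρ : Function.Injective ρ) (k j : α) (T : Finset α) (hk : k ∉ T) (hj : j ∉ T)
    (h : k ≠ j) : eps ρ K k (insert j T) * eps ρ K j (insert k T)
      = - (eps ρ K j T * eps ρ K k T) := by
  rw [eps_insert ρ k j T hk, eps_insert ρ j k T hj]
  have : ρ k ≠ ρ j := fun e => h (hρ e)
  rcases lt_or_gt_of_ne this with h1 | h1
  · rw [if_neg (by omega), if_pos h1]; ring
  · rw [if_pos h1, if_neg (by omega)]; ring

lemma D_add (f g : Finset α → K) (T) : D ρ (fun S => f S + g S) T = D ρ f T + D ρ g T := by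
  unfold D
  rw [← Finset.sum_add_distrib]
  refine Finset.sum_congr rfl fun k _ => ?_
  split_ifs <;> ring

lemma D_sub (f g : Finset α → K) (T) : D ρ (fun S => f S - g S) T = D ρ f T - D ρ g T := by
  unfold D
  rw [← Finset.sum_sub_distrib]
  refine Finset.sum_congr rfl fun k _ => ?_
  split_ifs <;> ring

lemma D_congr (f g : Finset α → K) (T) (h : ∀ k, k ∉ T → f (insert k T) = g (insert k T)) :
    D ρ f T = D ρ g T := by
  unfold D
  refine Finset.sum_congr rfl fun k _ => ?_
  split_ifs with hk
  · rfl
  · rw [h k hk]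

lemma D_zero (f : Finset α → K) (T) (h : ∀ k, k ∉ T → f (insert k T) = 0) :
    D ρ f T = 0 := by
  unfold D
  refine Finset.sum_eq_zero fun k _ => ?_
  split_ifs with hk
  · rfl
  · rw [h k hk, mul_zero]

lemma D_ne (f : Finset α → K) (T) (h : D ρ f T ≠ 0) : ∃ k, k ∉ T ∧ f (insert k T) ≠ 0 := by
  by_contra! hc
  exact h (D_zero ρ f T hc)

lemma DD (hρ : Function.Injective ρ) (f : Finset α → K) (T) : D ρ (D ρ f) T = 0 := by
  have : D ρ (D ρ f) T = ∑ x : α × α, if x.1 ∈ T ∨ x.2 ∈ insert x.1 T then 0 else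
      eps ρ K x.1 T * eps ρ K x.2 (insert x.1 T) * f (insert x.2 (insert x.1 T)) := by
    rw [Fintype.sum_prod_type]
    unfold D
    refine Finset.sum_congr rfl fun k _ => ?_
    split_ifs with hk
    · simp [hk]
    · rw [Finset.mul_sum]
      refine Finset.sum_congr rfl fun j _ => ?_
      by_cases hj : j ∈ insert k T
      · simp [hj]
      · simp only [hj, hk, or_self, if_false]; ring
  rw [this]
  refine Finset.sum_involution (fun x _ => (x.2, x.1)) ?_ ?_ ?_ ?_
  · rintro ⟨k, j⟩ _
    simp only [Finset.mem_insert]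
    by_cases h : k ∈ T ∨ j = k ∨ j ∈ T
    · rw [if_pos h, if_pos (by tauto)]; ring
    · rw [if_neg h, if_neg (by tauto)]
      push Not at h
      rw [eps_swap ρ hρ k j T h.1 h.2.2 (Ne.symm h.2.1), Finset.insert_comm]
      ring
  · rintro ⟨k, j⟩ _ h e
    simp only [Prod.mk.injEq] at e
    apply h
    rw [if_pos]
    right
    simp [e.1]
  · simp
  · simp

/-- support in family and degree -/
def Sup (F : Set (Finset α)) (q : ℤ) (f : Finset α → K) : Prop :=
  ∀ S, f S ≠ 0 → S ∈ F ∧ (S.card : ℤ) = q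

def van (K : Type) [Field K] (F : Set (Finset α)) (q : ℤ) : Prop :=
  ∀ f : Finset α → K, Sup F q f → (∀ T ∈ F, D ρ f T = 0) →
    ∃ e : Finset α → K, Sup F (q+1) e ∧ ∀ T ∈ F, D ρ e T = f T

open Classical in
noncomputable def res (F : Set (Finset α)) (f : Finset α → K) : Finset α → K :=
  fun S => if S ∈ F then f S else 0

lemma res_in {F : Set (Finset α)} {f : Finset α → K} {S} (h : S ∈ F) : res F f S = f S := by
  simp [res, h]
lemma res_out {F : Set (Finset α)} {f : Finset α → K} {S} (h : S ∉ F) : res F f S = 0 := by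
  simp [res, h]

def Cvx (F : Set (Finset α)) : Prop :=
  ∀ A B C : Finset α, A ∈ F → C ∈ F → A ⊆ B → B ⊆ C → B ∈ F

lemma D_deg {F : Set (Finset α)} {q : ℤ} {f : Finset α → K} (h : Sup F q f) {T}
    (hT : D ρ f T ≠ 0) : (T.card : ℤ) = q - 1 := by
  obtain ⟨k, hk, h2⟩ := D_ne ρ f T hT
  have := (h _ h2).2
  rw [Finset.card_insert_of_notMem hk] at this
  push_cast at this; omega

lemma Sup.res_D {F G : Set (Finset α)} {q : ℤ} {f : Finset α → K} (h : Sup G (q+1) f) :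
    Sup F q (res F (D ρ f)) := by
  intro S hS
  by_cases hF : S ∈ F
  · rw [res_in hF] at hS
    have := D_deg ρ h hS
    exact ⟨hF, by omega⟩
  · exact absurd (res_out hF) hS

lemma Sup.res {F G : Set (Finset α)} {q : ℤ} {f : Finset α → K} (h : Sup G q f) :
    Sup F q (res F f) := by
  intro S hS
  by_cases hF : S ∈ F
  · rw [res_in hF] at hS
    exact ⟨hF, (h S hS).2⟩
  · exact absurd (res_out hF) hS

lemma Sup.mono {F G : Set (Finset α)} {q : ℤ} {f : Finset α → K} (h : Sup G q f) (hGF : G ⊆ F) :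
    Sup F q f := fun S hS => ⟨hGF (h S hS).1, (h S hS).2⟩

lemma Sup.add {F : Set (Finset α)} {q : ℤ} {f g : Finset α → K} (h : Sup F q f) (h' : Sup F q g) :
    Sup F q (fun S => f S + g S) := by
  intro S hS
  by_cases hf : f S = 0
  · exact h' S (by intro h0; apply hS; simp [hf, h0])
  · exact h S hf

lemma Sup.sub {F : Set (Finset α)} {q : ℤ} {f g : Finset α → K} (h : Sup F q f) (h' : Sup F q g) :
    Sup F q (fun S => f S - g S) := by
  intro S hS
  by_cases hf : f S = 0
  · exact h' S (by intro h0; apply hS; simp [hf, h0])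
  · exact h S hf

lemma Sup.out {F : Set (Finset α)} {q : ℤ} {f : Finset α → K} (h : Sup F q f) {S} (hS : S ∉ F) :
    f S = 0 := by
  by_contra h0
  exact hS (h S h0).1

lemma D_res_D (hρ : Function.Injective ρ) {F : Set (Finset α)} (hF : Cvx F) {q : ℤ}
    {f : Finset α → K} (h : Sup F q f) {T} (hT : T ∈ F) : D ρ (res F (D ρ f)) T = 0 := by
  rw [← DD ρ hρ f T]
  apply D_congr
  intro k hk
  by_cases hm : insert k T ∈ F
  · exact res_in hm
  · rw [res_out hm]
    by_contra h0
    obtain ⟨j, hj, h2⟩ := D_ne ρ f _ (Ne.symm h0)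
    exact hm (hF T _ _ hT (h _ h2).1 (Finset.subset_insert _ _) (Finset.subset_insert _ _))

/-- splitting data -/
structure Spl (F L U : Set (Finset α)) : Prop where
  cvx : Cvx F
  uni : ∀ S, S ∈ F ↔ S ∈ L ∨ S ∈ U
  low : ∀ S T, S ∈ U → T ∈ L → ¬ S ⊆ T

namespace Spl
variable {ρ} {F L U : Set (Finset α)}

lemma UF (s : Spl F L U) : U ⊆ F := fun S h => (s.uni S).2 (Or.inr h)
lemma LF (s : Spl F L U) : L ⊆ F := fun S h => (s.uni S).2 (Or.inl h)
lemma dis (s : Spl F L U) {S} (h : S ∈ L) : S ∉ U := fun h' => s.low S S h' h (Finset.Subset.refl _)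

lemma D_resU (s : Spl F L U) {f : Finset α → K} {q} (hf : Sup F q f) {T} (hT : T ∈ U) :
    D ρ (res U f) T = D ρ f T := by
  apply D_congr
  intro k hk
  by_cases h : insert k T ∈ U
  · exact res_in h
  · rw [res_out h]
    by_contra h0
    have := (s.uni _).1 (hf _ (Ne.symm h0)).1
    rcases this with h1 | h1
    · exact s.low _ _ hT h1 (Finset.subset_insert _ _)
    · exact h h1

lemma D_L (s : Spl F L U) {f : Finset α → K} {q} (hf : Sup L q f) {T} (hT : T ∈ U) : D ρ f T = 0 := by
  by_contra h0
  obtain ⟨k, hk, h2⟩ := D_ne ρ f T h0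
  exact s.low _ _ hT (hf _ h2).1 (Finset.subset_insert _ _)

lemma L1 (s : Spl F L U) (hρ : Function.Injective ρ) {q : ℤ} (hL : van ρ K L q) (hU : van ρ K U q) :
    van ρ K F q := by
  intro f hf hc
  obtain ⟨e, he, h1⟩ := hU (res U f) hf.res (fun T hT => by
    rw [s.D_resU hf hT]; exact hc T (s.UF hT))
  have heF : Sup F (q+1) e := he.mono s.UF
  have hg : Sup F q (fun S => f S - res F (D ρ e) S) := hf.sub (heF.res_D ρ)
  have hgL : Sup L q (fun S => f S - res F (D ρ e) S) := by
    intro S hS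
    refine ⟨?_, (hg S hS).2⟩
    rcases (s.uni S).1 (hg S hS).1 with h | h
    · exact h
    · exfalso; apply hS
      change f S - res F (D ρ e) S = 0
      rw [res_in (s.UF h), h1 S h, res_in h, sub_self]
  obtain ⟨e2, he2, h2⟩ := hL _ hgL (fun T hT => by
    rw [D_sub, hc T (s.LF hT), D_res_D ρ hρ s.cvx heF (s.LF hT), sub_zero])
  refine ⟨fun S => e S + e2 S, heF.add (he2.mono s.LF), fun T hT => ?_⟩
  rw [D_add]
  rcases (s.uni T).1 hT with h | h
  · rw [h2 T h, res_in hT]; ring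
  · rw [s.D_L he2 h, h1 T h, res_in h, add_zero]

lemma L2 (s : Spl F L U) (hρ : Function.Injective ρ) {q : ℤ} (hF : van ρ K F q) (hU : van ρ K U (q+1)) :
    van ρ K L q := by
  intro f hf hc
  obtain ⟨e, he, h1⟩ := hF f (hf.mono s.LF) (fun T hT => by
    rcases (s.uni T).1 hT with h | h
    · exact hc T h
    · exact s.D_L hf h)
  obtain ⟨g, hg, h2⟩ := hU (res U e) he.res (fun T hT => by
    rw [s.D_resU he hT, h1 T (s.UF hT)]
    exact hf.out (fun h => s.dis h hT))
  have hgF := hg.mono s.UF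
  have h3 : Sup F (q+1) (fun S => e S - res F (D ρ g) S) := he.sub (hgF.res_D ρ)
  refine ⟨fun S => e S - res F (D ρ g) S, ?_, fun T hT => ?_⟩
  · intro S hS
    refine ⟨?_, (h3 S hS).2⟩
    rcases (s.uni S).1 (h3 S hS).1 with h | h
    · exact h
    · exfalso; apply hS
      change e S - res F (D ρ g) S = 0
      rw [res_in (s.UF h), h2 S h, res_in h, sub_self]
  · rw [D_sub, D_res_D ρ hρ s.cvx hgF (s.LF hT), sub_zero, h1 T (s.LF hT)]

lemma L3 (s : Spl F L U) (hρ : Function.Injective ρ) {q : ℤ} (hF : van ρ K F q) (hL : van ρ K L (q-1)) :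
    van ρ K U q := by
  intro f hf hc
  have hfF := hf.mono s.UF
  have hfF2 : Sup F (q - 1 + 1) f := by simpa using hfF
  have hres : ∀ S, res L (D ρ f) S = res F (D ρ f) S := by
    intro S
    by_cases h : S ∈ L
    · rw [res_in h, res_in (s.LF h)]
    · rw [res_out h]
      by_cases h' : S ∈ F
      · rw [res_in h', hc S (((s.uni S).1 h').resolve_left h)]
      · rw [res_out h']
  obtain ⟨e, he, h1⟩ := hL (res L (D ρ f)) (hfF2.res_D ρ) (fun T hT => by
    rw [funext hres]; exact D_res_D ρ hρ s.cvx hfF (s.LF hT))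
  have he2 : Sup F q e := by simpa using he.mono s.LF
  obtain ⟨x, hx, h2⟩ := hF (fun S => f S - e S) (hfF.sub he2) (fun T hT => by
    rw [D_sub]
    rcases (s.uni T).1 hT with h | h
    · rw [h1 T h, res_in h, sub_self]
    · rw [hc T h, s.D_L he h, sub_self])
  refine ⟨res U x, hx.res, fun T hT => ?_⟩
  rw [s.D_resU hx hT, h2 T (s.UF hT), he.out (fun h => s.dis h hT), sub_zero]

end Spl

def hom (v : α) (f : Finset α → K) (S : Finset α) : K :=
  if v ∈ S then eps ρ K v (S.erase v) * f (S.erase v) else 0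

lemma homotopy (hρ : Function.Injective ρ) (v : α) (f : Finset α → K) (T) :
    D ρ (hom ρ v f) T + hom ρ v (D ρ f) T = f T := by
  by_cases hv : v ∈ T
  · obtain ⟨T, hvT, rfl⟩ : ∃ T', v ∉ T' ∧ T = insert v T' :=
      ⟨T.erase v, by simp, by simp [Finset.insert_erase hv]⟩
    unfold hom D
    rw [if_pos hv, Finset.erase_insert hvT, Finset.mul_sum, ← Finset.sum_add_distrib,
      Finset.sum_eq_single v]
    · rw [if_pos hv, if_neg hvT, ← mul_assoc, eps_sq]; ring
    · intro k _ hk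
      by_cases hkT : k ∈ T
      · simp [hkT]
      · have h1 : k ∉ insert v T := by simp [hk, hkT]
        have h2 : (insert k (insert v T)).erase v = insert k T := by
          rw [Finset.insert_comm, Finset.erase_insert]
          simp [hvT, Ne.symm hk]
        rw [if_neg h1, if_neg hkT]
        beta_reduce
        rw [if_pos (by simp), h2, ← mul_assoc, ← mul_assoc,
          eps_swap2 ρ hρ k v T hkT hvT hk]
        ring
    · simp
  · have : hom ρ v (D ρ f) T = 0 := by simp [hom, hv]
    rw [this, add_zero]
    unfold D
    rw [Finset.sum_eq_single v]
    · rw [if_neg hv]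
      unfold hom
      rw [if_pos (by simp), Finset.erase_insert hv, ← mul_assoc, eps_sq, one_mul]
    · intro k _ hk
      split_ifs with h
      · rfl
      · unfold hom
        rw [if_neg (by simp [hv, Ne.symm hk]), mul_zero]
    · simp

lemma cone (hρ : Function.Injective ρ) {F : Set (Finset α)} (v : α)
    (h1 : ∀ S ∈ F, insert v S ∈ F) (h2 : ∀ S ∈ F, S.erase v ∈ F) (q : ℤ) : van ρ K F q := by
  intro f hf hc
  refine ⟨hom ρ v f, ?_, fun T hT => ?_⟩
  · intro S hS
    unfold hom at hS
    by_cases hv : v ∈ S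
    · rw [if_pos hv] at hS
      have := hf _ (right_ne_zero_of_mul hS)
      refine ⟨?_, ?_⟩
      · have := h1 _ this.1
        rwa [Finset.insert_erase hv] at this
      · rw [← this.2, ← Finset.insert_erase hv, Finset.card_insert_of_notMem (by simp)]
        simp
    · simp [hv] at hS
  · have := homotopy (K := K) ρ hρ v f T
    rw [← this]
    have h0 : hom ρ v (D ρ f) T = 0 := by
      unfold hom
      rw [hc _ (h2 _ hT)]; simp
    rw [h0, add_zero]

/-- shift by an apex -/
lemma shift (hρ : Function.Injective ρ) {L U : Set (Finset α)} (v : α) (hL : ∀ S ∈ L, v ∉ S)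
    (hc : Cvx L) (hU : ∀ S, S ∈ U ↔ v ∈ S ∧ S.erase v ∈ L) (q : ℤ) :
    van ρ K L q ↔ van ρ K U (q+1) := by
  have s : Spl {S | S.erase v ∈ L} L U := by
    refine ⟨?_, ?_, ?_⟩
    · intro A B C hA hC h1 h2
      exact hc _ _ _ hA hC (Finset.erase_subset_erase _ h1) (Finset.erase_subset_erase _ h2)
    · intro S
      rw [hU]
      by_cases hv : v ∈ S
      · simp only [Set.mem_ofPred_eq, hv, true_and]
        constructor
        · exact Or.inr
        · rintro (h | h)
          · exact absurd hv (hL _ h)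
          · exact h
      · simp [hv, Finset.erase_eq_of_notMem hv]
    · intro S T hS hT hST
      exact hL _ hT (hST ((hU S).1 hS).1)
  have hcone : ∀ q, van ρ K {S | S.erase v ∈ L} q := by
    apply cone ρ hρ v
    · intro S hS
      simp only [Set.mem_ofPred_eq] at hS ⊢
      rwa [Finset.erase_insert_eq_erase]
    · intro S hS
      simp only [Set.mem_ofPred_eq] at hS ⊢
      rwa [Finset.erase_idem]
  constructor
  · intro h
    exact s.L3 hρ (hcone _) (by simpa using h)
  · intro h
    exact s.L2 hρ (hcone _) h

end
end HH

namespace HH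
section
variable {K : Type} [Field K] {α β : Type} [Fintype α] [DecidableEq α] [Fintype β] [DecidableEq β]

/-- transport along an embedding plus a fixed set -/
def phi (ι : β ↪ α) (M : Finset α) (T : Finset β) : Finset α := T.map ι ∪ M

lemma mem_phi_iota {ι : β ↪ α} {M : Finset α} (hM : ∀ k, ι k ∉ M) (T : Finset β) (k : β) :
    ι k ∈ phi ι M T ↔ k ∈ T := by
  simp [phi, hM]

lemma phi_inj {ι : β ↪ α} {M : Finset α} (hM : ∀ k, ι k ∉ M) : Function.Injective (phi ι M) := by
  intro S T h
  ext k
  rw [← mem_phi_iota hM S k, h, mem_phi_iota hM]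

lemma phi_insert {ι : β ↪ α} {M : Finset α} (k : β) (T : Finset β) :
    phi ι M (insert k T) = insert (ι k) (phi ι M T) := by
  simp [phi, Finset.map_insert, Finset.insert_union]

lemma card_phi {ι : β ↪ α} {M : Finset α} (hM : ∀ k, ι k ∉ M) (T : Finset β) :
    (phi ι M T).card = T.card + M.card := by
  unfold phi
  rw [Finset.card_union_of_disjoint, Finset.card_map]
  rw [Finset.disjoint_left]
  intro a ha
  simp only [Finset.mem_map] at ha
  obtain ⟨k, _, rfl⟩ := ha
  exact hM k

lemma D_phi (ρ : α → ℕ) (ρ2 : β → ℕ) {ι : β ↪ α} {M : Finset α} (hM : ∀ k, ι k ∉ M)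
    (ho : ∀ j k, ρ (ι j) < ρ (ι k) ↔ ρ2 j < ρ2 k) (hMo : ∀ k, ∀ m ∈ M, ¬ ρ m < ρ (ι k))
    (f : Finset α → K) (hf : ∀ S, f S ≠ 0 → ∃ T, S = phi ι M T) (T : Finset β) :
    D ρ f (phi ι M T) = D ρ2 (fun S => f (phi ι M S)) T := by
  unfold D
  have h1 : ∀ k, eps ρ K (ι k) (phi ι M T) = eps ρ2 K k T := by
    intro k
    unfold eps cnt
    congr 1
    rw [← Finset.card_map ι]
    congr 1
    ext a
    simp only [phi, Finset.mem_filter, Finset.mem_union, Finset.mem_map]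
    constructor
    · rintro ⟨⟨j, hj, rfl⟩ | h, h2⟩
      · exact ⟨j, ⟨hj, (ho j k).1 h2⟩, rfl⟩
      · exact absurd h2 (hMo k a h)
    · rintro ⟨j, ⟨hj, h2⟩, rfl⟩
      exact ⟨Or.inl ⟨j, hj, rfl⟩, (ho j k).2 h2⟩
  have h2 : ∑ k, (if k ∈ T then 0 else eps ρ2 K k T * f (phi ι M (insert k T)))
      = ∑ a ∈ Finset.univ.map ι, if a ∈ phi ι M T then 0 else
        eps ρ K a (phi ι M T) * f (insert a (phi ι M T)) := by
    rw [Finset.sum_map]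
    refine Finset.sum_congr rfl fun k _ => ?_
    rw [h1, phi_insert]
    simp only [mem_phi_iota hM]
  rw [h2]
  symm
  apply Finset.sum_subset (Finset.subset_univ _)
  intro a _ ha
  split_ifs with h
  · rfl
  · by_contra h0
    obtain ⟨T2, hT2⟩ := hf _ (right_ne_zero_of_mul h0)
    have : a ∈ phi ι M T2 := by rw [← hT2]; simp
    simp only [phi, Finset.mem_union, Finset.mem_map] at this
    rcases this with ⟨k, _, rfl⟩ | h3
    · simp at ha
    · exact h (by simp [phi, h3])

open Classical in
noncomputable def push (ι : β ↪ α) (M : Finset α) (g : Finset β → K) (S : Finset α) : K :=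
  if h : ∃ T, S = phi ι M T then g h.choose else 0

lemma push_phi {ι : β ↪ α} {M : Finset α} (hM : ∀ k, ι k ∉ M) (g : Finset β → K) (T) :
    push ι M g (phi ι M T) = g T := by
  have h : ∃ T', phi ι M T = phi ι M T' := ⟨T, rfl⟩
  unfold push
  rw [dif_pos h, ← phi_inj hM h.choose_spec]

lemma push_ne {ι : β ↪ α} {M : Finset α} (g : Finset β → K) (S)
    (h : push ι M g S ≠ 0) : ∃ T, S = phi ι M T := by
  by_contra hc
  exact h (by simp [push, hc])

lemma transport (ρ : α → ℕ) (ρ2 : β → ℕ) {ι : β ↪ α} {M : Finset α} (hM : ∀ k, ι k ∉ M)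
    (ho : ∀ j k, ρ (ι j) < ρ (ι k) ↔ ρ2 j < ρ2 k) (hMo : ∀ k, ∀ m ∈ M, ¬ ρ m < ρ (ι k))
    (F : Set (Finset β)) (G : Set (Finset α)) (hG : ∀ S, S ∈ G ↔ ∃ T ∈ F, S = phi ι M T) (q : ℤ) :
    van ρ K G (q + M.card) ↔ van ρ2 K F q := by
  have hGF : ∀ T, phi ι M T ∈ G ↔ T ∈ F := by
    intro T
    rw [hG]
    constructor
    · rintro ⟨T2, h, e⟩
      rwa [phi_inj hM e]
    · intro h; exact ⟨T, h, rfl⟩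
  have pull : ∀ (f : Finset α → K) (q : ℤ), Sup G (q + M.card) f →
      Sup F q (fun S => f (phi ι M S)) := by
    intro f q hf S hS
    have := hf _ hS
    rw [hGF, card_phi hM] at this
    refine ⟨this.1, ?_⟩
    have := this.2
    push_cast at this; omega
  have psh : ∀ (g : Finset β → K) (q : ℤ), Sup F q g → Sup G (q + M.card) (push ι M g) := by
    intro g q hg S hS
    obtain ⟨T, rfl⟩ := push_ne g S hS
    rw [push_phi hM] at hS
    have := hg _ hS
    rw [hGF, card_phi hM]
    refine ⟨this.1, ?_⟩
    push_cast; omega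
  have hS : ∀ (f : Finset α → K) (q : ℤ), Sup G q f → ∀ S, f S ≠ 0 → ∃ T, S = phi ι M T := by
    intro f q hf S h
    obtain ⟨T, _, e⟩ := (hG S).1 (hf S h).1
    exact ⟨T, e⟩
  have hpp : ∀ g : Finset β → K, (fun S => push ι M g (phi ι M S)) = g :=
    fun g => funext fun S => push_phi hM g S
  constructor
  · intro h g hg hc
    obtain ⟨e, he, h1⟩ := h (push ι M g) (psh g q hg) (by
      intro S hSG
      obtain ⟨T, hT, rfl⟩ := (hG S).1 hSG
      rw [D_phi ρ ρ2 hM ho hMo _ (push_ne g), hpp]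
      exact hc T hT)
    refine ⟨fun S => e (phi ι M S), pull e _ (by convert he using 1; ring), ?_⟩
    intro T hT
    rw [← D_phi ρ ρ2 hM ho hMo _ (hS e _ he), h1 _ ((hGF T).2 hT), push_phi hM]
  · intro h f hf hc
    obtain ⟨e, he, h1⟩ := h _ (pull f q hf) (by
      intro T hT
      rw [← D_phi ρ ρ2 hM ho hMo _ (hS f _ hf)]
      exact hc _ ((hGF T).2 hT))
    refine ⟨push ι M e, by convert psh e _ he using 1; ring, ?_⟩
    intro S hSG
    obtain ⟨T, hT, rfl⟩ := (hG S).1 hSG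
    rw [D_phi ρ ρ2 hM ho hMo _ (push_ne e), hpp, h1 T hT]

lemma van_empty (ρ : α → ℕ) {F : Set (Finset α)} {q : ℤ} (h : ∀ S ∈ F, (S.card : ℤ) ≠ q) :
    van ρ K F q := by
  intro f hf _
  have : f = 0 := by
    funext S
    by_contra h0
    exact h S (hf S h0).1 (hf S h0).2
  subst this
  refine ⟨0, ?_, ?_⟩
  · intro S hS; simp at hS
  · intro T _; exact D_zero ρ _ _ (by simp)

end

section
variable {K : Type} [Field K] {r n : ℕ} (E : Fin r → Finset (Fin n)) (W : Finset (Fin n))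

def rk : Fin r ⊕ Fin n → ℕ := Sum.elim (fun k => k.val) (fun x => r + x.val)

lemma rk_inj : Function.Injective (rk : Fin r ⊕ Fin n → ℕ) := by
  rintro (a | a) (b | b) h <;> simp only [rk, Sum.elim_inl, Sum.elim_inr] at h
  · congr 1; exact Fin.ext h
  · have := a.isLt; omega
  · have := b.isLt; omega
  · congr 1; exact Fin.ext (by omega)

def DW : Set (Finset (Fin r ⊕ Fin n)) :=
  {S | (∀ x, x ∉ W → Sum.inr x ∈ S) ∧ ∀ k, Sum.inl k ∈ S → ∀ x ∈ E k, Sum.inr x ∉ S}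

def DA (t : ℕ) : Set (Finset (Fin r ⊕ Fin n)) :=
  {S | S ∈ DW E W ∧ ∃ x ∈ W, x.val < t ∧ ∀ k, Sum.inl k ∈ S → x ∉ E k}

def DB (t : ℕ) : Set (Finset (Fin r ⊕ Fin n)) :=
  {S | S ∈ DW E W ∧ ∃ k : Fin r, k.val < t ∧ ∀ x ∈ E k, Sum.inr x ∉ S}

def TW : Set (Finset (Fin r)) := {S | ∀ x, x ∈ W ↔ ∃ k ∈ S, x ∈ E k}

def ZW : Set (Finset (Fin n)) := {s | (∀ x, x ∉ W → x ∈ s) ∧ ∀ k, ∃ x ∈ E k, x ∈ s}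

lemma cvxDW : Cvx (DW E W) := by
  rintro A B C ⟨hA, _⟩ ⟨_, hC⟩ h1 h2
  exact ⟨fun x hx => h1 (hA x hx), fun k hk x hx hB => hC k (h2 hk) x hx (h2 hB)⟩

lemma cvxDA (t) : Cvx (DA E W t) := by
  rintro A B C ⟨hA, _⟩ ⟨hC, x, hx, hxt, h⟩ h1 h2
  exact ⟨cvxDW E W A B C hA hC h1 h2, x, hx, hxt, fun k hk => h k (h2 hk)⟩

lemma cvxDB (t) : Cvx (DB E W t) := by
  rintro A B C ⟨hA, _⟩ ⟨hC, x, hxt, h⟩ h1 h2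
  exact ⟨cvxDW E W A B C hA hC h1 h2, x, hxt, fun k hk hh => h k hk (h2 hh)⟩

lemma vanDA (t : ℕ) (q : ℤ) : van rk K (DA E W t) q := by
  induction t with
  | zero =>
    apply van_empty
    rintro S ⟨_, x, _, h, _⟩
    omega
  | succ t ih =>
    have s : Spl (DA E W (t+1)) (DA E W t) {S | S ∈ DA E W (t+1) ∧ S ∉ DA E W t} := by
      refine ⟨cvxDA E W _, ?_, ?_⟩
      · intro S
        constructor
        · intro h
          by_cases h' : S ∈ DA E W t
          · exact Or.inl h'
          · exact Or.inr ⟨h, h'⟩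
        · rintro (⟨h, x, hx, hxt, h2⟩ | h)
          · exact ⟨h, x, hx, by omega, h2⟩
          · exact h.1
      · rintro S T ⟨⟨hS, _⟩, hn⟩ ⟨hT, x, hx, hxt, h⟩ hST
        exact hn ⟨hS, x, hx, hxt, fun k hk => h k (hST hk)⟩
    refine s.L1 rk_inj ih ?_
    by_cases htn : ∃ x ∈ W, x.val = t
    · obtain ⟨x, hx, hxt⟩ := htn
      have key : ∀ S, (S ∈ DA E W (t+1) ∧ S ∉ DA E W t) ↔
          S ∈ DW E W ∧ (∀ k, Sum.inl k ∈ S → x ∉ E k) ∧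
          ∀ y ∈ W, y.val < t → ∃ k, Sum.inl k ∈ S ∧ y ∈ E k := by
        intro S
        constructor
        · rintro ⟨⟨hS, y, hy, hyt, h⟩, hn⟩
          have h3 : ∀ y ∈ W, y.val < t → ∃ k, Sum.inl k ∈ S ∧ y ∈ E k := by
            intro y hy hyt
            by_contra! hc
            exact hn ⟨hS, y, hy, hyt, hc⟩
          refine ⟨hS, ?_, h3⟩
          by_cases hlt : y.val < t
          · obtain ⟨k, hk, hk2⟩ := h3 y hy hlt
            exact absurd hk2 (h k hk)
          · have : y = x := Fin.ext (by omega)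
            rwa [← this]
        · rintro ⟨hS, h1, h2⟩
          refine ⟨⟨hS, x, hx, by omega, h1⟩, ?_⟩
          rintro ⟨_, y, hy, hyt, h⟩
          obtain ⟨k, hk, hk2⟩ := h2 y hy hyt
          exact h k hk hk2
      apply cone rk rk_inj (Sum.inr x)
      · intro S hS
        have hS' := (key S).1 hS
        refine (key _).2 ⟨⟨?_, ?_⟩, ?_, ?_⟩
        · intro y hy; exact Finset.mem_insert_of_mem (hS'.1.1 y hy)
        · intro k hk y hy hy2
          have hkS : Sum.inl k ∈ S := by simpa using hk
          rcases Finset.mem_insert.1 hy2 with h | h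
          · rw [Sum.inr.injEq] at h
            rw [h] at hy
            exact hS'.2.1 k hkS hy
          · exact hS'.1.2 k hkS y hy h
        · intro k hk
          exact hS'.2.1 k (by simpa using hk)
        · intro y hy hyt
          obtain ⟨k, hk, h⟩ := hS'.2.2 y hy hyt
          exact ⟨k, Finset.mem_insert_of_mem hk, h⟩
      · intro S hS
        have hS' := (key S).1 hS
        refine (key _).2 ⟨⟨?_, ?_⟩, ?_, ?_⟩
        · intro y hy
          refine Finset.mem_erase.2 ⟨?_, hS'.1.1 y hy⟩
          intro h
          rw [Sum.inr.injEq] at h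
          subst h
          exact hy hx
        · intro k hk y hy hy2
          exact hS'.1.2 k (Finset.mem_of_mem_erase hk) y hy (Finset.mem_of_mem_erase hy2)
        · intro k hk
          exact hS'.2.1 k (Finset.mem_of_mem_erase hk)
        · intro y hy hyt
          obtain ⟨k, hk, h⟩ := hS'.2.2 y hy hyt
          exact ⟨k, Finset.mem_erase.2 ⟨by simp, hk⟩, h⟩
    · apply van_empty
      rintro S ⟨⟨hS, x, hx, hxt, h⟩, hn⟩
      exfalso
      by_cases hlt : x.val < t
      · exact hn ⟨hS, x, hx, hlt, h⟩
      · exact htn ⟨x, hx, by omega⟩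

lemma vanDB (t : ℕ) (q : ℤ) : van rk K (DB E W t) q := by
  induction t with
  | zero =>
    apply van_empty
    rintro S ⟨_, x, h, _⟩
    omega
  | succ t ih =>
    have s : Spl (DB E W (t+1)) (DB E W t) {S | S ∈ DB E W (t+1) ∧ S ∉ DB E W t} := by
      refine ⟨cvxDB E W _, ?_, ?_⟩
      · intro S
        constructor
        · intro h
          by_cases h' : S ∈ DB E W t
          · exact Or.inl h'
          · exact Or.inr ⟨h, h'⟩
        · rintro (⟨h, x, hxt, h2⟩ | h)
          · exact ⟨h, x, by omega, h2⟩
          · exact h.1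
      · rintro S T ⟨⟨hS, _⟩, hn⟩ ⟨hT, x, hxt, h⟩ hST
        exact hn ⟨hS, x, hxt, fun k hk hh => h k hk (hST hh)⟩
    refine s.L1 rk_inj ih ?_
    by_cases htn : ∃ x : Fin r, x.val = t
    · obtain ⟨x, hxt⟩ := htn
      have key : ∀ S, (S ∈ DB E W (t+1) ∧ S ∉ DB E W t) ↔
          S ∈ DW E W ∧ (∀ k ∈ E x, Sum.inr k ∉ S) ∧
          ∀ y : Fin r, y.val < t → ∃ k ∈ E y, Sum.inr k ∈ S := by
        intro S
        constructor
        · rintro ⟨⟨hS, y, hyt, h⟩, hn⟩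
          have h3 : ∀ y : Fin r, y.val < t → ∃ k ∈ E y, Sum.inr k ∈ S := by
            intro y hyt
            by_contra! hc
            exact hn ⟨hS, y, hyt, hc⟩
          refine ⟨hS, ?_, h3⟩
          by_cases hlt : y.val < t
          · obtain ⟨k, hk, hk2⟩ := h3 y hlt
            exact absurd hk2 (h k hk)
          · have : y = x := Fin.ext (by omega)
            rwa [← this]
        · rintro ⟨hS, h1, h2⟩
          refine ⟨⟨hS, x, by omega, h1⟩, ?_⟩
          rintro ⟨_, y, hyt, h⟩
          obtain ⟨k, hk, hk2⟩ := h2 y hyt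
          exact h k hk hk2
      apply cone rk rk_inj (Sum.inl x)
      · intro S hS
        have hS' := (key S).1 hS
        refine (key _).2 ⟨⟨?_, ?_⟩, ?_, ?_⟩
        · intro y hy; exact Finset.mem_insert_of_mem (hS'.1.1 y hy)
        · intro k hk y hy hy2
          have hyS : Sum.inr y ∈ S := by simpa using hy2
          rcases Finset.mem_insert.1 hk with h | h
          · rw [Sum.inl.injEq] at h
            rw [h] at hy
            exact hS'.2.1 y hy hyS
          · exact hS'.1.2 k h y hy hyS
        · intro k hk
          have := hS'.2.1 k hk
          simpa using this
        · intro y hyt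
          obtain ⟨k, hk, h⟩ := hS'.2.2 y hyt
          exact ⟨k, hk, Finset.mem_insert_of_mem h⟩
      · intro S hS
        have hS' := (key S).1 hS
        refine (key _).2 ⟨⟨?_, ?_⟩, ?_, ?_⟩
        · intro y hy
          exact Finset.mem_erase.2 ⟨by simp, hS'.1.1 y hy⟩
        · intro k hk y hy hy2
          exact hS'.1.2 k (Finset.mem_of_mem_erase hk) y hy (Finset.mem_of_mem_erase hy2)
        · intro k hk hh
          exact hS'.2.1 k hk (Finset.mem_of_mem_erase hh)
        · intro y hyt
          obtain ⟨k, hk, h⟩ := hS'.2.2 y hyt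
          exact ⟨k, hk, Finset.mem_erase.2 ⟨by simp, h⟩⟩
    · apply van_empty
      rintro S ⟨⟨hS, x, hxt, h⟩, hn⟩
      exfalso
      by_cases hlt : x.val < t
      · exact hn ⟨hS, x, hlt, h⟩
      · exact htn ⟨x, by omega⟩

lemma vanT (q : ℤ) : van (fun k : Fin r => k.val) K (TW E W) q
    ↔ van rk K (DW E W) (q + (Wᶜ : Finset (Fin n)).card) := by
  have s : Spl (DW E W) (DA E W n) {S | S ∈ DW E W ∧ S ∉ DA E W n} := by
    refine ⟨cvxDW E W, ?_, ?_⟩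
    · intro S
      constructor
      · intro h
        by_cases h' : S ∈ DA E W n
        · exact Or.inl h'
        · exact Or.inr ⟨h, h'⟩
      · rintro (h | h)
        · exact h.1
        · exact h.1
    · rintro S T ⟨hS, hn⟩ ⟨hT, x, hx, hxt, h⟩ hST
      exact hn ⟨hS, x, hx, hxt, fun k hk => h k (hST hk)⟩
  have h1 := transport (K := K) (rk : Fin r ⊕ Fin n → ℕ) (fun k : Fin r => k.val)
    (ι := Function.Embedding.inl)
    (M := (Wᶜ).map Function.Embedding.inr) (by simp) (by intro j k; simp [rk])
    (by
      intro k m hm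
      simp only [Finset.mem_map] at hm
      obtain ⟨x, _, rfl⟩ := hm
      have := k.isLt
      simp only [rk, Function.Embedding.inr_apply, Function.Embedding.inl_apply, Sum.elim_inl,
        Sum.elim_inr]
      omega) (TW E W) {S | S ∈ DW E W ∧ S ∉ DA E W n} (by
      intro S
      constructor
      · rintro ⟨hS, hn⟩
        have hcov : ∀ x ∈ W, ∃ k, Sum.inl k ∈ S ∧ x ∈ E k := by
          intro x hx
          by_contra! hc
          exact hn ⟨hS, x, hx, x.isLt, hc⟩
        refine ⟨Finset.univ.filter (fun k => Sum.inl k ∈ S), ?_, ?_⟩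
        · intro x
          constructor
          · intro hx
            obtain ⟨k, hk⟩ := hcov x hx
            exact ⟨k, by simpa using hk.1, hk.2⟩
          · rintro ⟨k, hk, hx⟩
            by_contra hxW
            exact hS.2 k (by simpa using hk) x hx (hS.1 x hxW)
        · ext a
          rcases a with a | a
          · simp [phi]
          · simp only [phi, Finset.mem_union, Finset.mem_map]
            constructor
            · intro ha
              right
              refine ⟨a, ?_, rfl⟩
              rw [Finset.mem_compl]
              intro haW
              obtain ⟨k, hk, h⟩ := hcov a haW
              exact hS.2 k hk a h ha
            · rintro (⟨k, _, h⟩ | ⟨k, hk, h⟩)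
              · simp at h
              · simp only [Function.Embedding.inr_apply, Sum.inr.injEq] at h
                subst h
                exact hS.1 _ (Finset.mem_compl.1 hk)
      · rintro ⟨T, hT, rfl⟩
        have m1 : ∀ k, Sum.inl k ∈ phi Function.Embedding.inl ((Wᶜ).map Function.Embedding.inr) T
            ↔ k ∈ T := by simp [phi]
        have m2 : ∀ x, Sum.inr x ∈ phi Function.Embedding.inl ((Wᶜ).map Function.Embedding.inr) T
            ↔ x ∉ W := by simp [phi]
        refine ⟨⟨fun x hx => (m2 x).2 hx, ?_⟩, ?_⟩
        · intro k hk x hx h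
          exact (m2 x).1 h ((hT x).2 ⟨k, (m1 k).1 hk, hx⟩)
        · rintro ⟨_, x, hx, _, h⟩
          obtain ⟨k, hk, hk2⟩ := (hT x).1 hx
          exact h k ((m1 k).2 hk) hk2) q
  rw [← h1, Finset.card_map]
  constructor
  · intro h; exact s.L1 rk_inj (vanDA E W n _) h
  · intro h; exact s.L3 rk_inj h (vanDA E W n _)

lemma vanZ (q : ℤ) : van (fun k : Fin n => k.val) K (ZW E W) q ↔ van rk K (DW E W) q := by
  have s : Spl (DW E W) (DB E W r) {S | S ∈ DW E W ∧ S ∉ DB E W r} := by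
    refine ⟨cvxDW E W, ?_, ?_⟩
    · intro S
      constructor
      · intro h
        by_cases h' : S ∈ DB E W r
        · exact Or.inl h'
        · exact Or.inr ⟨h, h'⟩
      · rintro (h | h)
        · exact h.1
        · exact h.1
    · rintro S T ⟨hS, hn⟩ ⟨hT, x, hxt, h⟩ hST
      exact hn ⟨hS, x, hxt, fun k hk hh => h k hk (hST hh)⟩
  have h1 := transport (K := K) (rk : Fin r ⊕ Fin n → ℕ) (fun k : Fin n => k.val)
    (ι := Function.Embedding.inr)
    (M := ∅) (by simp) (by intro j k; simp [rk])
    (by simp) (ZW E W) {S | S ∈ DW E W ∧ S ∉ DB E W r} (by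
      intro S
      constructor
      · rintro ⟨hS, hn⟩
        have hcov : ∀ k, ∃ x ∈ E k, Sum.inr x ∈ S := by
          intro k
          by_contra! hc
          exact hn ⟨hS, k, k.isLt, hc⟩
        refine ⟨Finset.univ.filter (fun k => Sum.inr k ∈ S), ⟨?_, ?_⟩, ?_⟩
        · intro x hx
          simpa using hS.1 x hx
        · intro k
          obtain ⟨x, hx, h⟩ := hcov k
          exact ⟨x, hx, by simpa using h⟩
        · ext a
          rcases a with a | a
          · simp only [phi, Finset.union_empty, Finset.mem_map, Function.Embedding.inr_apply,
              reduceCtorEq, and_false, exists_false, iff_false]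
            intro ha
            obtain ⟨x, hx, h⟩ := hcov a
            exact hS.2 a ha x hx h
          · simp [phi]
      · rintro ⟨T, hT, rfl⟩
        have m1 : ∀ k, Sum.inl k ∉ phi (Function.Embedding.inr : Fin n ↪ Fin r ⊕ Fin n) ∅ T := by
          simp [phi]
        have m2 : ∀ x, Sum.inr x ∈ phi (Function.Embedding.inr : Fin n ↪ Fin r ⊕ Fin n) ∅ T
            ↔ x ∈ T := by simp [phi]
        refine ⟨⟨fun x hx => (m2 x).2 (hT.1 x hx), ?_⟩, ?_⟩
        · intro k hk
          exact absurd hk (m1 k)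
        · rintro ⟨_, k, _, h⟩
          obtain ⟨x, hx, hk2⟩ := hT.2 k
          exact h x hx ((m2 x).2 hk2)) q
  rw [← h1]
  simp only [Finset.card_empty, Nat.cast_zero, add_zero]
  constructor
  · intro h; exact s.L1 rk_inj (vanDB E W r _) h
  · intro h; exact s.L3 rk_inj h (vanDB E W r _)

end
end HH

namespace HH
section

open Classical in
noncomputable def nb {n : ℕ} (H : SimpleGraph (Fin n)) (v : Fin n) (W : Finset (Fin n)) :
    Finset (Fin n) := W.filter (fun w => H.Adj v w)

lemma mem_nb {n : ℕ} {H : SimpleGraph (Fin n)} {v w : Fin n} {W : Finset (Fin n)} :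
    w ∈ nb H v W ↔ w ∈ W ∧ H.Adj v w := by simp [nb]

/-- the properties of nonvanishing homology which are used -/
structure HS {n : ℕ} (H : SimpleGraph (Fin n)) (h : ℤ → Finset (Fin n) → Prop) : Prop where
  E1 : ∀ c W v, v ∈ W → h c W → h c (W.erase v) ∨ h (c-1) (nb H v W)
  E2 : ∀ c W v, v ∈ W → h c (W.erase v) → h c W ∨ h c (nb H v W)
  E3 : ∀ c W v, v ∈ W → h c (nb H v W) → h (c+1) W ∨ h c (W.erase v)
  con : ∀ c W v, v ∈ W → (∀ w ∈ W, w ≠ v → H.Adj v w) → ¬ h c W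
  emp : h 0 ∅
  emp1 : ∀ c, h c ∅ → c = 0
  neg : ∀ c W, h c W → 0 ≤ c
  mv : ∀ c A B, (∀ a ∈ A, a ∉ B → ∀ b ∈ B, b ∉ A → ¬ H.Adj a b) → h c (A ∪ B) →
    h c A ∨ h c B ∨ h (c-1) (A ∩ B)

variable {n : ℕ} (H : SimpleGraph (Fin n))

def Z (W : Finset (Fin n)) : Set (Finset (Fin n)) :=
  {s | (∀ x, x ∉ W → x ∈ s) ∧ ∀ a b, a ∉ s → b ∉ s → a ≠ b → H.Adj a b}

def hh (K : Type) [Field K] (c : ℤ) (W : Finset (Fin n)) : Prop :=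
  ¬ van (fun k : Fin n => k.val) K (Z H W) (n - c)

lemma Z_up {W : Finset (Fin n)} {s t : Finset (Fin n)} (hs : s ∈ Z H W) (hst : s ⊆ t) :
    t ∈ Z H W :=
  ⟨fun x hx => hst (hs.1 x hx), fun a b ha hb hab => hs.2 a b (fun h => ha (hst h))
    (fun h => hb (hst h)) hab⟩

lemma Z_mono {W W2 : Finset (Fin n)} {s : Finset (Fin n)} (hs : s ∈ Z H W) (h : W ⊆ W2) :
    s ∈ Z H W2 :=
  ⟨fun x hx => hs.1 x (fun hh => hx (h hh)), hs.2⟩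

lemma Z_cvx (W : Finset (Fin n)) : Cvx (Z H W) := fun _ _ _ hA _ h1 _ => Z_up H hA h1

def ZL (W : Finset (Fin n)) (v : Fin n) : Set (Finset (Fin n)) := {s | s ∈ Z H W ∧ v ∉ s}

lemma ZL_cvx (W : Finset (Fin n)) (v) : Cvx (ZL H W v) :=
  fun _ _ _ hA hC h1 h2 => ⟨Z_up H hA.1 h1, fun h => hC.2 (h2 h)⟩

lemma splZ (W : Finset (Fin n)) (v : Fin n) :
    Spl (Z H W) (ZL H W v) (Z H (W.erase v)) := by
  refine ⟨Z_cvx H W, ?_, ?_⟩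
  · intro S
    constructor
    · intro h
      by_cases hv : v ∈ S
      · right
        refine ⟨fun x hx => ?_, h.2⟩
        by_cases hxv : x = v
        · rwa [hxv]
        · exact h.1 x (fun hh => hx (Finset.mem_erase.2 ⟨hxv, hh⟩))
      · exact Or.inl ⟨h, hv⟩
    · rintro (h | h)
      · exact h.1
      · exact Z_mono H h (Finset.erase_subset _ _)
  · intro S T hS hT hST
    exact hT.2 (hST (hS.1 v (by simp)))

lemma val_inj : Function.Injective (fun k : Fin n => k.val) := Fin.val_injective

variable (K : Type) [Field K]

lemma shiftZ (W : Finset (Fin n)) (v : Fin n) (hv : v ∈ W) (q : ℤ) :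
    van (fun k : Fin n => k.val) K (ZL H W v) q ↔
      van (fun k : Fin n => k.val) K (Z H (nb H v W)) (q+1) := by
  apply shift _ val_inj v
  · intro S hS; exact hS.2
  · exact ZL_cvx H W v
  · intro S
    constructor
    · intro hS
      have hvS : v ∈ S := hS.1 v (by simp [mem_nb])
      have hadj : ∀ x, x ∉ S → x ∈ W ∧ H.Adj v x := by
        intro x hx
        by_contra hc
        exact hx (hS.1 x (by rwa [mem_nb]))
      refine ⟨hvS, ⟨?_, ?_⟩, by simp⟩
      · intro x hx
        refine Finset.mem_erase.2 ⟨fun h => hx (h ▸ hv), ?_⟩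
        by_contra hc
        exact hx (hadj x hc).1
      · intro a b ha hb hab
        rw [Finset.mem_erase, not_and_or, not_not] at ha hb
        rcases ha with rfl | ha
        · rcases hb with rfl | hb
          · exact absurd rfl hab
          · exact (hadj b hb).2
        · rcases hb with rfl | hb
          · exact (hadj a ha).2.symm
          · exact hS.2 a b ha hb hab
    · rintro ⟨hvS, ⟨h1, h2⟩, _⟩
      refine ⟨?_, ?_⟩
      · intro x hx
        by_contra hc
        have hxv : v ≠ x := fun h => hc (h ▸ hvS)
        apply hx
        rw [mem_nb]
        refine ⟨?_, h2 v x (by simp) (fun h => hc (Finset.mem_of_mem_erase h)) hxv⟩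
        by_contra hxW
        exact hc (Finset.mem_of_mem_erase (h1 x hxW))
      · intro a b ha hb hab
        exact h2 a b (fun h => ha (Finset.mem_of_mem_erase h))
          (fun h => hb (Finset.mem_of_mem_erase h)) hab

theorem hhHS : HS H (hh H K) := by
  refine ⟨?_, ?_, ?_, ?_, ?_, ?_, ?_, ?_⟩
  · intro c W v hv h
    unfold hh at *
    by_contra! hc
    refine h ((splZ H W v).L1 val_inj ?_ hc.1)
    rw [shiftZ H K W v hv]
    convert hc.2 using 1; ring
  · intro c W v hv h
    unfold hh at *
    by_contra! hc
    refine h ((splZ H W v).L3 val_inj hc.1 ?_)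
    rw [shiftZ H K W v hv]
    convert hc.2 using 1; ring
  · intro c W v hv h
    unfold hh at *
    by_contra! hc
    apply h
    have := (splZ H W v).L2 val_inj (K := K) (q := n - (c+1)) hc.1 (by
      convert hc.2 using 1; ring)
    rw [shiftZ H K W v hv] at this
    convert this using 1; ring
  · intro c W v hv hadj
    unfold hh
    rw [not_not]
    apply cone _ val_inj v
    · intro S hS; exact Z_up H hS (Finset.subset_insert _ _)
    · intro S hS
      have hW : ∀ x, x ∉ S → x ∈ W := by
        intro x hx
        by_contra hc
        exact hx (hS.1 x hc)
      refine ⟨?_, ?_⟩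
      · intro x hx
        exact Finset.mem_erase.2 ⟨fun h => hx (h ▸ hv), hS.1 x hx⟩
      · intro a b ha hb hab
        rw [Finset.mem_erase, not_and_or, not_not] at ha hb
        rcases ha with rfl | ha
        · rcases hb with rfl | hb
          · exact absurd rfl hab
          · exact hadj b (hW b hb) (Ne.symm hab)
        · rcases hb with rfl | hb
          · exact (hadj a (hW a ha) hab).symm
          · exact hS.2 a b ha hb hab
  · intro hvan
    classical
    obtain ⟨e, he, h1⟩ := hvan (fun S => if S = Finset.univ then 1 else 0) (by
      intro S hS
      have : S = Finset.univ := by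
        by_contra hc
        simp [hc] at hS
      subst this
      exact ⟨⟨fun x _ => Finset.mem_univ x, fun a b ha => absurd (Finset.mem_univ a) ha⟩,
        by simp⟩) (by
      intro T hT
      have : T = Finset.univ := Finset.eq_univ_iff_forall.2 (fun x => hT.1 x (by simp))
      subst this
      exact D_zero _ _ _ (fun k hk => absurd (Finset.mem_univ k) hk))
    have h2 := h1 Finset.univ
      ⟨fun x _ => Finset.mem_univ x, fun a b ha => absurd (Finset.mem_univ a) ha⟩
    rw [D_zero _ _ _ (fun k hk => absurd (Finset.mem_univ k) hk)] at h2
    simp at h2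
  · intro c h
    by_contra hc
    apply h
    apply van_empty
    intro S hS
    have : S = Finset.univ := Finset.eq_univ_iff_forall.2 (fun x => hS.1 x (by simp))
    subst this
    simp only [Finset.card_univ, Fintype.card_fin]
    omega
  · intro c W h
    by_contra hc
    apply h
    apply van_empty
    intro S hS
    have := Finset.card_le_univ S
    simp only [Fintype.card_fin] at this
    omega
  · intro c A B hAB h
    unfold hh at *
    by_contra! hc
    obtain ⟨hA, hB, hI⟩ := hc
    have s1 : Spl (Z H (A ∪ B)) {s | s ∈ Z H B ∧ s ∉ Z H A} (Z H A) := by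
      refine ⟨Z_cvx H _, ?_, ?_⟩
      · intro S
        constructor
        · intro hS
          by_cases hSA : S ∈ Z H A
          · exact Or.inr hSA
          · left
            refine ⟨⟨?_, hS.2⟩, hSA⟩
            have : ∃ x, x ∉ A ∧ x ∉ S := by
              by_contra! hc
              exact hSA ⟨hc, hS.2⟩
            obtain ⟨x, hxA, hxS⟩ := this
            have hxB : x ∈ B := by
              by_contra hxB
              exact hxS (hS.1 x (by simp [hxA, hxB]))
            intro y hy
            by_contra hyS
            have hyA : y ∈ A := by
              by_contra hyA
              exact hyS (hS.1 y (by simp [hyA, hy]))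
            exact hAB y hyA hy x hxB hxA (hS.2 y x hyS hxS (fun h => hy (h ▸ hxB)))
        · rintro (hS | hS)
          · exact Z_mono H hS.1 Finset.subset_union_right
          · exact Z_mono H hS Finset.subset_union_left
      · intro S T hS hT hST
        exact hT.2 (Z_up H hS hST)
    have s2 : Spl (Z H B) {s | s ∈ Z H B ∧ s ∉ Z H A} (Z H (A ∩ B)) := by
      refine ⟨Z_cvx H _, ?_, ?_⟩
      · intro S
        constructor
        · intro hS
          by_cases hSA : S ∈ Z H A
          · right
            refine ⟨fun x hx => ?_, hS.2⟩
            by_cases hxA : x ∈ A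
            · exact hS.1 x (fun h => hx (by simp [hxA, h]))
            · exact hSA.1 x hxA
          · exact Or.inl ⟨hS, hSA⟩
        · rintro (hS | hS)
          · exact hS.1
          · exact Z_mono H hS Finset.inter_subset_right
      · intro S T hS hT hST
        exact hT.2 (Z_up H (Z_mono H hS Finset.inter_subset_left) hST)
    refine h (s1.L1 val_inj (s2.L2 val_inj hB ?_) hA)
    convert hI using 1; ring

end
end HH

namespace HH
namespace HS
variable {n : ℕ} {H : SimpleGraph (Fin n)} {h : ℤ → Finset (Fin n) → Prop}

lemma nb_self_insert {v : Fin n} {W : Finset (Fin n)} : nb H v (insert v W) = nb H v W := by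
  ext x
  simp only [mem_nb, Finset.mem_insert]
  constructor
  · rintro ⟨rfl | h1, h2⟩
    · exact absurd h2 (SimpleGraph.irrefl _)
    · exact ⟨h1, h2⟩
  · rintro ⟨h1, h2⟩; exact ⟨Or.inr h1, h2⟩

lemma nb_cone {v : Fin n} {W : Finset (Fin n)} (hW : ∀ w ∈ W, H.Adj v w) : nb H v W = W := by
  ext x; rw [mem_nb]; exact ⟨fun h => h.1, fun h => ⟨h, hW x h⟩⟩

lemma I1 (s : HS H h) {c W v} (hv : v ∉ W) (hc : h c (insert v W)) :
    h c W ∨ h (c-1) (nb H v W) := by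
  have := s.E1 c (insert v W) v (by simp) hc
  rwa [Finset.erase_insert hv, nb_self_insert] at this

lemma I2 (s : HS H h) {c W v} (hv : v ∉ W) (hc : h c W) :
    h c (insert v W) ∨ h c (nb H v W) := by
  have := s.E2 c (insert v W) v (by simp) (by rwa [Finset.erase_insert hv])
  rwa [nb_self_insert] at this

lemma I3 (s : HS H h) {c W v} (hv : v ∉ W) (hc : h c (nb H v W)) :
    h (c+1) (insert v W) ∨ h c W := by
  have := s.E3 c (insert v W) v (by simp) (by rwa [nb_self_insert])
  rwa [Finset.erase_insert hv] at this

lemma con1 (s : HS H h) {c W v} (hW : ∀ w ∈ W, H.Adj v w) : ¬ h c (insert v W) := by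
  apply s.con c _ v (by simp)
  intro w hw hne
  exact hW w ((Finset.mem_insert.1 hw).resolve_left hne)

lemma zero (s : HS H h) (W) : h 0 W → W = ∅ := by
  induction W using Finset.induction_on with
  | empty => intro _; rfl
  | insert v W hv ih =>
    intro h0
    exfalso
    rcases s.I1 hv h0 with h1 | h1
    · have := ih h1
      subst this
      exact s.con1 (by simp) h0
    · have := s.neg _ _ h1
      omega

lemma susp (s : HS H h) {c X a b} (ha : a ∉ X) (hb : b ∉ X) (hab : a ≠ b) (hn : ¬ H.Adj b a)
    (hA : ∀ x ∈ X, H.Adj a x) (hB : ∀ x ∈ X, H.Adj b x) (hX : h c X) :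
    h (c+1) (insert b (insert a X)) := by
  have e : nb H b (insert a X) = X := by
    ext x
    simp only [mem_nb, Finset.mem_insert]
    constructor
    · rintro ⟨rfl | h1, h2⟩
      · exact absurd h2 hn
      · exact h1
    · intro hx; exact ⟨Or.inr hx, hB x hx⟩
  have := s.I3 (c := c) (W := insert a X) (v := b) (by simp [hb, Ne.symm hab]) (by rwa [e])
  rcases this with h1 | h1
  · exact h1
  · exact absurd h1 (s.con1 hA)

lemma two (s : HS H h) {a b} (hab : a ≠ b) (hn : ¬ H.Adj b a) : h 1 {b, a} := by
  have := s.susp (c := 0) (X := ∅) (a := a) (b := b) (by simp) (by simp) hab hn (by simp)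
    (by simp) s.emp
  simpa using this

lemma cut (s : HS H h) {m : ℤ} (lo2 : ∀ U, h 2 U → m ≤ U.card) {C Q : Finset (Fin n)}
    (hC : h 2 C) (cC : (C.card : ℤ) = m) (hQC : Q ⊆ C) (hQ : ¬ h 1 Q) : ¬ h 1 (C \ Q) := by
  intro h1
  have hne : (C \ Q).Nonempty := by
    rw [Finset.nonempty_iff_ne_empty]
    intro h0
    rw [h0] at h1
    have := s.emp1 _ h1
    omega
  obtain ⟨x, hx⟩ := hne
  have hx1 : ¬ h 1 {x} := by
    have := s.con1 (c := 1) (W := ∅) (v := x) (by simp)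
    simpa using this
  classical
  obtain ⟨U, hU, hmax⟩ := Finset.exists_max_image
    ((C \ Q).powerset.filter (fun U => U.Nonempty ∧ ¬ h 1 U)) Finset.card
    ⟨{x}, by simp only [Finset.mem_filter, Finset.mem_powerset, Finset.singleton_subset_iff]
             exact ⟨hx, by simp, hx1⟩⟩
  simp only [Finset.mem_filter, Finset.mem_powerset] at hU hmax
  obtain ⟨hUC, hUne, hU1⟩ := hU
  have hnoadj : ∀ v ∈ C \ Q, v ∉ U → ∀ u ∈ U, ¬ H.Adj u v := by
    intro v hv hvU u hu hadj
    have := hmax (insert v U) ⟨Finset.insert_subset hv hUC, by simp, by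
      intro hc
      rcases s.I1 hvU hc with h2 | h2
      · exact hU1 h2
      · have := s.zero _ (by simpa using h2)
        have hm : u ∈ nb H v U := mem_nb.2 ⟨hu, hadj.symm⟩
        rw [this] at hm
        simp at hm⟩
    rw [Finset.card_insert_of_notMem hvU] at this
    omega
  have hUC2 : U ⊆ C := hUC.trans Finset.sdiff_subset
  have hex : ∃ v ∈ C \ Q, v ∉ U := by
    by_contra! hc
    have : U = C \ Q := Finset.Subset.antisymm hUC hc
    rw [this] at hU1
    exact hU1 h1
  obtain ⟨v, hv, hvU⟩ := hex
  have hu1 : (U ∪ Q) ∪ (C \ U) = C := by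
    ext y
    simp only [Finset.mem_union, Finset.mem_sdiff]
    have := @hUC2 y
    have := @hQC y
    tauto
  have hu2 : (U ∪ Q) ∩ (C \ U) = Q := by
    ext y
    simp only [Finset.mem_union, Finset.mem_sdiff, Finset.mem_inter]
    have := @hUC y
    have := @hQC y
    simp only [Finset.mem_sdiff] at *
    tauto
  have := s.mv 2 (U ∪ Q) (C \ U) (by
    intro a ha ha2 b hb hb2
    simp only [Finset.mem_union, Finset.mem_sdiff] at ha ha2 hb hb2
    have haU : a ∈ U := by
      have := @hQC a
      tauto
    exact hnoadj b (Finset.mem_sdiff.2 (by tauto)) (by tauto) a haU) (by rwa [hu1])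
  rw [hu2] at this
  rcases this with h2 | h2 | h2
  · have h3 := lo2 _ h2
    have : (U ∪ Q).card < C.card := by
      apply Finset.card_lt_card
      refine ⟨Finset.union_subset hUC2 hQC, fun hh => ?_⟩
      have := hh (Finset.mem_sdiff.1 hv).1
      simp only [Finset.mem_union] at this
      have := (Finset.mem_sdiff.1 hv).2
      tauto
    omega
  · have h3 := lo2 _ h2
    have : (C \ U).card < C.card := by
      apply Finset.card_lt_card
      refine ⟨Finset.sdiff_subset, fun hh => ?_⟩
      obtain ⟨u, hu⟩ := hUne
      have := hh (hUC2 hu)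
      simp [hu] at this
    omega
  · exact hQ (by simpa using h2)

/-- standing bounds -/
structure Bd (H : SimpleGraph (Fin n)) (h : ℤ → Finset (Fin n) → Prop) (m : ℤ) : Prop where
  hs : HS H h
  lo : ∀ c U, 2 ≤ c → h c U → m - 2 + c ≤ U.card
  hi : ∀ c U, h c U → (U.card : ℤ) ≤ m - 1 + c

/-- `x` misses exactly `w` in `C` -/
def Miss (H : SimpleGraph (Fin n)) (C : Finset (Fin n)) (x w : Fin n) : Prop :=
  w ∈ C ∧ ¬ H.Adj x w ∧ ∀ t ∈ C, t ≠ w → H.Adj x t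

def NC (H : SimpleGraph (Fin n)) (C : Finset (Fin n)) (x : Fin n) : Prop :=
  x ∉ C ∧ ∃ w ∈ C, ¬ H.Adj x w

variable {m : ℤ} {C : Finset (Fin n)}

lemma minC (b : Bd H h m) (hC : h 2 C) (cC : (C.card : ℤ) = m) {u} (hu : u ∈ C) :
    h 1 (nb H u C) := by
  rcases b.hs.E1 2 C u hu hC with h1 | h1
  · have := b.lo _ _ (by norm_num) h1
    have := Finset.card_erase_lt_of_mem hu
    omega
  · simpa using h1

lemma F1 (b : Bd H h m) (hC : h 2 C) (cC : (C.card : ℤ) = m) {x} (hx : NC H C x) :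
    h 2 (insert x C) := by
  obtain ⟨hxC, w, hw, hn⟩ := hx
  rcases b.hs.I2 hxC hC with h1 | h1
  · exact h1
  · have := b.lo _ _ (by norm_num) h1
    have : (nb H x C).card < C.card := by
      apply Finset.card_lt_card
      refine ⟨fun y hy => (mem_nb.1 hy).1, fun hh => hn (mem_nb.1 (hh hw)).2⟩
    omega

lemma F2 (b : Bd H h m) (hC : h 2 C) (cC : (C.card : ℤ) = m) {x y} (hx : NC H C x)
    (hy : NC H C y) (hxy : x ≠ y) : ∃ u, Miss H C y u ∧ h 2 (insert x (C.erase u)) := by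
  have hx2 := F1 b hC cC hx
  obtain ⟨hyC, u, hu, hn⟩ := hy
  have hyx : y ∉ insert x C := by simp [hyC, Ne.symm hxy]
  have h2 : h 2 (nb H y (insert x C)) := by
    rcases b.hs.I2 hyx hx2 with h1 | h1
    · have := b.hi _ _ h1
      rw [Finset.card_insert_of_notMem hyx, Finset.card_insert_of_notMem hx.1] at this
      push_cast at this; omega
    · exact h1
  have hsub : nb H y (insert x C) ⊆ insert x (C.erase u) := by
    intro t ht
    rw [mem_nb, Finset.mem_insert] at ht
    rw [Finset.mem_insert, Finset.mem_erase]
    rcases ht.1 with h1 | h1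
    · exact Or.inl h1
    · refine Or.inr ⟨fun e => hn (e ▸ ht.2), h1⟩
  have heq : nb H y (insert x C) = insert x (C.erase u) := by
    apply Finset.eq_of_subset_of_card_le hsub
    have := b.lo _ _ (by norm_num) h2
    rw [Finset.card_insert_of_notMem (by simp [hx.1]), Finset.card_erase_of_mem hu]
    have : 0 < C.card := Finset.card_pos.2 ⟨u, hu⟩
    omega
  refine ⟨u, ⟨hu, hn, fun t ht htu => ?_⟩, heq ▸ h2⟩
  have : t ∈ nb H y (insert x C) := by
    rw [heq]; simp [ht, htu]
  exact (mem_nb.1 this).2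

lemma F2b (b : Bd H h m) (cC : (C.card : ℤ) = m) {x w u} (hxC : x ∉ C)
    (hx : Miss H C x w) (hu : u ∈ C) (h2 : h 2 (insert x (C.erase u))) :
    u ≠ w ∧ ∀ t ∈ C, t ≠ u → t ≠ w → H.Adj w t := by
  have huw : u ≠ w := by
    rintro rfl
    refine b.hs.con1 ?_ h2
    intro t ht
    rw [Finset.mem_erase] at ht
    exact hx.2.2 t ht.2 ht.1
  refine ⟨huw, fun t ht htu htw => ?_⟩
  by_contra hn
  have hc : ((insert x (C.erase u)).card : ℤ) = m := by
    rw [Finset.card_insert_of_notMem (by simp [hxC]), Finset.card_erase_of_mem hu]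
    have : 0 < C.card := Finset.card_pos.2 ⟨u, hu⟩
    omega
  have h1 := minC b h2 hc (u := t) (by simp [ht, htu])
  refine b.hs.con 1 _ x ?_ ?_ h1
  · rw [mem_nb]
    exact ⟨by simp, (hx.2.2 t ht htw).symm⟩
  · intro z hz hzx
    rw [mem_nb, Finset.mem_insert, Finset.mem_erase] at hz
    rcases hz.1 with h3 | h3
    · exact absurd h3 hzx
    · apply hx.2.2 z h3.2
      rintro rfl
      exact hn hz.2.symm

lemma Miss.uniq {x w u} (h1 : Miss H C x w) (h2 : Miss H C x u) : w = u := by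
  by_contra hne
  exact h1.2.1 (h2.2.2 w h1.1 hne)

lemma F3 (b : Bd H h m) (hC : h 2 C) (cC : (C.card : ℤ) = m) {x y z} (hx : NC H C x)
    (hy : NC H C y) (hz : NC H C z) (hxy : x ≠ y) (hxz : x ≠ z) (hyz : y ≠ z) : False := by
  obtain ⟨w, mw, _⟩ := F2 b hC cC hy hx hxy.symm
  obtain ⟨u, mu, hu⟩ := F2 b hC cC hx hy hxy
  obtain ⟨t, mt, ht⟩ := F2 b hC cC hx hz hxz
  obtain ⟨t2, mt2, ht2⟩ := F2 b hC cC hy hz hyz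
  have := mt2.uniq mt
  subst this
  obtain ⟨n1, a1⟩ := F2b b cC hx.1 mw mu.1 hu
  obtain ⟨n2, a2⟩ := F2b b cC hx.1 mw mt.1 ht
  obtain ⟨n3, a3⟩ := F2b b cC hy.1 mu mt2.1 ht2
  refine b.hs.con 2 C w mw.1 ?_ hC
  intro y' hy' hne
  by_cases h1 : y' = u
  · subst h1
    exact a2 y' hy' (Ne.symm n3) hne
  · exact a1 y' hy' h1 hne

lemma caseS (b : Bd H h m) (hC : h 2 C) (cC : (C.card : ℤ) = m) (hn : m + 3 ≤ n)
    (hiso : ∀ v, ∃ w, w ≠ v ∧ ¬ H.Adj v w) {a d}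
    (ha : a ∉ C) (hd : d ∉ C) (hA : ∀ x ∈ C, H.Adj a x) (hD : ∀ x ∈ C, H.Adj d x)
    (had : a ≠ d) (hna : ¬ H.Adj d a) : False := by
  have hS := b.hs.susp ha hd had hna hA hD hC
  norm_num at hS
  have hd2 : d ∉ insert a C := by simp [hd, Ne.symm had]
  set S := insert d (insert a C) with hSdef
  have cS : (S.card : ℤ) = m + 2 := by
    rw [hSdef, Finset.card_insert_of_notMem hd2, Finset.card_insert_of_notMem ha]
    push_cast; omega
  have key : ∀ z, z ∉ S → ∀ t ∈ S, H.Adj z t := by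
    intro z hz t ht
    by_contra hzt
    rcases b.hs.I2 hz hS with h1 | h1
    · have := b.hi _ _ h1
      rw [Finset.card_insert_of_notMem hz] at this
      push_cast at this; omega
    · have hsub : nb H z S ⊆ S.erase t := by
        intro y hy
        rw [mem_nb] at hy
        exact Finset.mem_erase.2 ⟨fun e => hzt (e ▸ hy.2), hy.1⟩
      have heq : nb H z S = S.erase t := by
        apply Finset.eq_of_subset_of_card_le hsub
        have := b.lo _ _ (by norm_num) h1
        rw [Finset.card_erase_of_mem ht]
        omega
      rw [heq] at h1
      have ht' := ht
      rw [hSdef, Finset.mem_insert, Finset.mem_insert] at ht'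
      rcases ht' with rfl | rfl | htC
      · rw [hSdef, Finset.erase_insert hd2] at h1
        exact b.hs.con1 hA h1
      · rw [hSdef, Finset.erase_insert_of_ne (Ne.symm had), Finset.erase_insert ha] at h1
        exact b.hs.con1 hD h1
      · have htd : d ≠ t := fun e => hd (e ▸ htC)
        have hta : a ≠ t := fun e => ha (e ▸ htC)
        rw [hSdef, Finset.erase_insert_of_ne htd, Finset.erase_insert_of_ne hta] at h1
        rcases b.hs.I1 (by simp [hd, Ne.symm had]) h1 with h2 | h2
        · exact b.hs.con1 (fun x hx => hA x (Finset.mem_of_mem_erase hx)) h2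
        · norm_num at h2
          have := b.lo _ _ (by norm_num) h2
          have h3 : nb H d (insert a (C.erase t)) ⊆ C.erase t := by
            intro y hy
            rw [mem_nb, Finset.mem_insert] at hy
            rcases hy.1 with rfl | h4
            · exact absurd hy.2 hna
            · exact h4
          have := Finset.card_le_card h3
          have := Finset.card_erase_lt_of_mem htC
          omega
  have hex : ∃ z, z ∉ S := by
    by_contra! hc
    have : S = Finset.univ := Finset.eq_univ_iff_forall.2 hc
    rw [this] at cS
    simp only [Finset.card_univ, Fintype.card_fin] at cS
    omega
  obtain ⟨z, hz⟩ := hex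
  obtain ⟨z', hne, hnz⟩ := hiso z
  have hz' : z' ∉ S := fun hh => hnz (key z hz z' hh)
  have h4 := b.hs.susp hz hz' (Ne.symm hne) (fun hh => hnz hh.symm) (key z hz) (key z' hz') hS
  have := b.hi _ _ h4
  rw [Finset.card_insert_of_notMem (by simp [hz', hne]), Finset.card_insert_of_notMem hz] at this
  push_cast at this; omega

lemma pairB (b : Bd H h m) (hC : h 2 C) (cC : (C.card : ℤ) = m) {x y a}
    (hx : NC H C x) (hy : NC H C y) (hxy : x ≠ y) (ha : a ∉ C) (hA : ∀ t ∈ C, H.Adj a t)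
    (hax : a ≠ x) (hay : a ≠ y) (hna : ¬ H.Adj a x) : False := by
  have haW : a ∉ insert y (insert x C) := by simp [ha, hax, hay]
  have c1 : ((insert y (insert x C)).card : ℤ) = m + 2 := by
    rw [Finset.card_insert_of_notMem (by simp [hy.1, Ne.symm hxy]),
      Finset.card_insert_of_notMem hx.1]
    push_cast; omega
  have h2 : h 2 (nb H a (insert y (insert x C))) := by
    by_cases hady : H.Adj a y
    · have : nb H a (insert y (insert x C)) = insert y C := by
        ext t
        simp only [mem_nb, Finset.mem_insert]
        constructor
        · rintro ⟨rfl | rfl | h1, h2⟩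
          · exact Or.inl rfl
          · exact absurd h2 hna
          · exact Or.inr h1
        · rintro (rfl | h1)
          · exact ⟨Or.inl rfl, hady⟩
          · exact ⟨Or.inr (Or.inr h1), hA t h1⟩
      rw [this]
      exact F1 b hC cC hy
    · have : nb H a (insert y (insert x C)) = C := by
        ext t
        simp only [mem_nb, Finset.mem_insert]
        constructor
        · rintro ⟨rfl | rfl | h1, h2⟩
          · exact absurd h2 hady
          · exact absurd h2 hna
          · exact h1
        · intro h1
          exact ⟨Or.inr (Or.inr h1), hA t h1⟩
      rw [this]
      exact hC
  rcases b.hs.I3 haW h2 with h3 | h3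
  · have := b.hi _ _ h3
    rw [Finset.card_insert_of_notMem haW] at this
    push_cast at this; omega
  · have := b.hi _ _ h3
    omega

lemma triFree (b : Bd H h m) (hC : h 2 C) (cC : (C.card : ℤ) = m) {t d e}
    (ht : t ∈ C) (hd : d ∈ C) (he : e ∈ C) (htd : H.Adj t d) (hte : H.Adj t e)
    (hde : H.Adj d e) : False := by
  have h1 := minC b hC cC ht
  have h2 : h 1 ((nb H t C).erase d) := by
    rcases b.hs.E1 1 _ d (mem_nb.2 ⟨hd, htd⟩) h1 with h2 | h2
    · exact h2
    · have h3 := b.hs.zero _ (by simpa using h2)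
      have : e ∈ nb H d (nb H t C) := mem_nb.2 ⟨mem_nb.2 ⟨he, hte⟩, hde⟩
      rw [h3] at this
      simp at this
  have e1 : (nb H t C).erase d = nb H t (C.erase d) := by
    ext y
    simp only [mem_nb, Finset.mem_erase]
    tauto
  rw [e1] at h2
  have htd' : t ≠ d := htd.ne
  rcases b.hs.E3 1 (C.erase d) t (by simp [ht, htd']) h2 with h3 | h3
  · have := b.lo _ _ (by norm_num) h3
    have := Finset.card_erase_lt_of_mem hd
    omega
  · have e2 : (C.erase d).erase t = C \ {t, d} := by
      ext y
      simp only [Finset.mem_erase, Finset.mem_sdiff, Finset.mem_insert, Finset.mem_singleton]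
      tauto
    rw [e2] at h3
    refine b.hs.cut (m := m) (fun U hU => by have := b.lo _ _ (by norm_num) hU; omega) hC cC ?_ ?_ h3
    · intro y hy
      simp only [Finset.mem_insert, Finset.mem_singleton] at hy
      rcases hy with rfl | rfl <;> assumption
    · exact b.hs.con1 (by simpa using htd)

lemma caseOne (b : Bd H h m) (hC : h 2 C) (cC : (C.card : ℤ) = m) (hn : m + 3 ≤ n)
    (hiso : ∀ v, ∃ w, w ≠ v ∧ ¬ H.Adj v w) {x} (hx : NC H C x)
    (hA : ∀ a, a ∉ C → a ≠ x → ∀ t ∈ C, H.Adj a t) : False := by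
  have hcl : ∀ a d, a ∉ C → a ≠ x → d ∉ C → d ≠ x → a ≠ d → H.Adj a d := by
    intro a d ha hax hd hdx had
    by_contra hna
    exact caseS b hC cC hn hiso ha hd (hA a ha hax) (hA d hd hdx) had (fun hh => hna hh.symm)
  have hnx : ∀ a, a ∉ C → a ≠ x → ¬ H.Adj x a := by
    intro a ha hax
    obtain ⟨z, hz, hnz⟩ := hiso a
    have hzC : z ∉ C := fun hh => hnz (hA a ha hax z hh)
    by_cases hzx : z = x
    · subst hzx; exact fun hh => hnz hh.symm
    · exact absurd (hcl a z ha hax hzC hzx (Ne.symm hz)) hnz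
  set N := nb H x Finset.univ with hN
  have hNC : N ⊆ C := by
    intro y hy
    have hy2 := (mem_nb.1 hy).2
    by_contra hyC
    exact hnx y hyC hy2.ne' hy2
  have hNlt : N.card < C.card := by
    apply Finset.card_lt_card
    refine ⟨hNC, fun hh => ?_⟩
    obtain ⟨w, hw, hnw⟩ := hx.2
    exact hnw (mem_nb.1 (hh hw)).2
  have hexa : ∃ a, a ∉ insert x C := by
    by_contra! hc
    have h1 : insert x C = Finset.univ := Finset.eq_univ_iff_forall.2 hc
    have h2 := Finset.card_insert_of_notMem hx.1
    rw [h1] at h2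
    simp only [Finset.card_univ, Fintype.card_fin] at h2
    omega
  obtain ⟨a, ha⟩ := hexa
  simp only [Finset.mem_insert, not_or] at ha
  obtain ⟨hax, haC⟩ := ha
  have key : ∀ c U, U ⊆ N → h c U → (n : ℤ) - N.card + U.card ≤ m - 1 + (c + 1) := by
    intro c U hU hc
    set W : Finset (Fin n) := Finset.univ \ (N \ U) with hW
    have hxN : x ∉ N := by simp [hN, mem_nb]
    have hxW : x ∈ W := by simp [hW, hxN]
    have e1 : nb H x W = U := by
      ext y
      simp only [mem_nb, hW, Finset.mem_sdiff, Finset.mem_univ, true_and]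
      constructor
      · rintro ⟨h1, h2⟩
        by_contra hyU
        exact h1 ⟨mem_nb.2 ⟨Finset.mem_univ _, h2⟩, hyU⟩
      · intro hy
        exact ⟨fun hh => hh.2 hy, (mem_nb.1 (hU hy)).2⟩
    rcases b.hs.E3 c W x hxW (by rwa [e1]) with h1 | h1
    · have h2 := b.hi _ _ h1
      have h3 : W.card = n - (N.card - U.card) := by
        rw [hW, Finset.card_sdiff_of_subset (Finset.subset_univ _), Finset.card_univ,
          Fintype.card_fin, Finset.card_sdiff_of_subset hU]
      have h4 := Finset.card_le_card hU
      have h5 : N.card ≤ n := by simpa using Finset.card_le_univ N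
      omega
    · exfalso
      refine b.hs.con c _ a ?_ ?_ h1
      · rw [Finset.mem_erase]
        refine ⟨hax, ?_⟩
        simp only [hW, Finset.mem_sdiff, Finset.mem_univ, true_and]
        exact fun hh => haC (hNC hh.1)
      · intro w hw hwa
        rw [Finset.mem_erase] at hw
        by_cases hwC : w ∈ C
        · exact hA a haC hax w hwC
        · exact hcl a w haC hax hwC hw.1 (Ne.symm hwa)
  have k0 := key 0 ∅ (by simp) b.hs.emp
  simp only [Finset.card_empty, Nat.cast_zero] at k0
  have hclq : ∀ u ∈ N, ∀ v ∈ N, u ≠ v → H.Adj u v := by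
    intro u hu v hv huv
    by_contra hnuv
    have h1 : h 1 {u, v} := b.hs.two (Ne.symm huv) hnuv
    have k1 := key 1 {u, v} (by
      intro y hy
      simp only [Finset.mem_insert, Finset.mem_singleton] at hy
      rcases hy with rfl | rfl <;> assumption) h1
    rw [Finset.card_pair huv] at k1
    have hxu : H.Adj x u := (mem_nb.1 hu).2
    have hxv : H.Adj x v := (mem_nb.1 hv).2
    have hau := hA a haC hax u (hNC hu)
    have hav := hA a haC hax v (hNC hv)
    have h2 := b.hs.susp (c := 1) (X := {u, v}) (a := a) (b := x)
      (by simp [hau.ne, hav.ne]) (by simp [hxu.ne, hxv.ne]) hax (hnx a haC hax)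
      (by simp [hau, hav]) (by simp [hxu, hxv]) h1
    have h3 := b.lo _ _ (by norm_num) h2
    have h4 := Finset.card_le_four (a := x) (b := a) (c := u) (d := v)
    have h5 : ((insert x (insert a ({u, v} : Finset (Fin n)))).card : ℤ) ≤ 4 := by exact_mod_cast h4
    push_cast at *
    omega
  have h3 : 2 < N.card := by omega
  obtain ⟨t, d, e, ht, hd, he, htd, hte, hde⟩ := Finset.two_lt_card_iff.1 h3
  exact triFree b hC cC (hNC ht) (hNC hd) (hNC he) (hclq t ht d hd htd) (hclq t ht e he hte)
    (hclq d hd e he hde)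

lemma upper (b : Bd H h m) (hC : h 2 C) (cC : (C.card : ℤ) = m) 
    (hiso : ∀ v, ∃ w, w ≠ v ∧ ¬ H.Adj v w) : (n : ℤ) < m + 3 := by
  by_contra hlt
  have hn : m + 3 ≤ n := by omega
  have cone_of : ∀ z, z ∉ C → ¬ NC H C z → ∀ t ∈ C, H.Adj z t := by
    intro z hz hnc t ht
    by_contra hh
    exact hnc ⟨hz, t, ht, hh⟩
  by_cases hex : ∃ x, NC H C x
  · obtain ⟨x, hx⟩ := hex
    by_cases hex2 : ∃ y, NC H C y ∧ x ≠ y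
    · obtain ⟨y, hy, hxy⟩ := hex2
      have hexa : ∃ a, a ∉ insert y (insert x C) := by
        by_contra! hc
        have h1 : insert y (insert x C) = Finset.univ := Finset.eq_univ_iff_forall.2 hc
        have h2 := Finset.card_insert_of_notMem (a := y) (s := insert x C)
          (by simp [hy.1, Ne.symm hxy])
        rw [h1, Finset.card_insert_of_notMem hx.1] at h2
        simp only [Finset.card_univ, Fintype.card_fin] at h2
        omega
      obtain ⟨a, ha⟩ := hexa
      simp only [Finset.mem_insert, not_or] at ha
      obtain ⟨hay, hax, haC⟩ := ha
      have hA : ∀ t ∈ C, H.Adj a t := by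
        apply cone_of a haC
        intro hnc
        exact F3 b hC cC hx hy hnc hxy (Ne.symm hax) (Ne.symm hay)
      obtain ⟨z, hz, hnz⟩ := hiso a
      have hzC : z ∉ C := fun hh => hnz (hA z hh)
      by_cases hzn : NC H C z
      · by_cases h1 : z = x
        · subst h1
          exact pairB b hC cC hx hy hxy haC hA hax hay hnz
        · by_cases h2 : z = y
          · subst h2
            exact pairB b hC cC hy hx (Ne.symm hxy) haC hA hay hax hnz
          · exact F3 b hC cC hx hy hzn hxy (Ne.symm h1) (Ne.symm h2)
      · exact caseS b hC cC hn hiso haC hzC hA (cone_of z hzC hzn) (Ne.symm hz)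
          (fun hh => hnz hh.symm)
    · refine caseOne b hC cC hn hiso hx ?_
      intro a ha hax
      exact cone_of a ha (fun hnc => hex2 ⟨a, hnc, Ne.symm hax⟩)
  · have hexa : ∃ a, a ∉ C := by
      by_contra! hc
      have h1 : C = Finset.univ := Finset.eq_univ_iff_forall.2 hc
      rw [h1] at cC
      simp only [Finset.card_univ, Fintype.card_fin] at cC
      omega
    obtain ⟨a, ha⟩ := hexa
    have hA := cone_of a ha (fun hnc => hex ⟨a, hnc⟩)
    obtain ⟨z, hz, hnz⟩ := hiso a
    have hzC : z ∉ C := fun hh => hnz (hA z hh)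
    exact caseS b hC cC hn hiso ha hzC hA (cone_of z hzC (fun hnc => hex ⟨z, hnc⟩)) (Ne.symm hz)
      (fun hh => hnz hh.symm)

theorem core (s : HS H h) (p : ℤ) (hp : 0 ≤ p)
    (hiso : ∀ v, ∃ w, w ≠ v ∧ ¬ H.Adj v w)
    (lo : ∀ c U, 2 ≤ c → h c U → p + c ≤ U.card)
    (hi : ∀ c U, h c U → (U.card : ℤ) ≤ p + 1 + c)
    (ex : ∃ c W, 2 ≤ c ∧ h c W ∧ (W.card : ℤ) = p + c)
    (top : ∃ c W, h c W ∧ (W.card : ℤ) = p + 1 + c) : p + 3 ≤ n ∧ (n : ℤ) ≤ p + 4 := by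
  have b : Bd H h (p+2) := ⟨s, fun c U h1 h2 => by have := lo c U h1 h2; omega,
    fun c U h2 => by have := hi c U h2; omega⟩
  obtain ⟨c, C, hc, hC, cC⟩ := ex
  have hc2 : c = 2 := by
    by_contra hne
    have : C.Nonempty := by
      rw [← Finset.card_pos]; omega
    obtain ⟨v, hv⟩ := this
    rcases s.E1 c C v hv hC with h1 | h1
    · have := lo _ _ hc h1
      have := Finset.card_erase_lt_of_mem hv
      omega
    · have h2 := lo _ _ (by omega) h1
      have hsub : nb H v C ⊆ C.erase v := by
        intro y hy
        rw [mem_nb] at hy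
        exact Finset.mem_erase.2 ⟨hy.2.ne', hy.1⟩
      have heq : nb H v C = C.erase v := by
        apply Finset.eq_of_subset_of_card_le hsub
        rw [Finset.card_erase_of_mem hv]
        omega
      refine s.con c C v hv ?_ hC
      intro w hw hne
      have : w ∈ nb H v C := by rw [heq]; exact Finset.mem_erase.2 ⟨hne, hw⟩
      exact (mem_nb.1 this).2
  subst hc2
  refine ⟨?_, by have := upper b hC cC hiso; omega⟩
  have hCn : C.card ≤ n := by simpa using Finset.card_le_univ C
  by_contra hlt
  obtain ⟨c, W, hW, cW⟩ := top
  have hWn : W.card ≤ n := by simpa using Finset.card_le_univ W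
  have h0 := s.neg _ _ hW
  have hc0 : c ≠ 0 := by
    rintro rfl
    have := s.zero _ hW
    subst this
    simp at cW
    omega
  have hc1 : c = 1 := by omega
  subst hc1
  have eW : W = Finset.univ := by
    rw [← Finset.card_eq_iff_eq_univ, Fintype.card_fin]; omega
  have eC : C = Finset.univ := by
    rw [← Finset.card_eq_iff_eq_univ, Fintype.card_fin]; omega
  have := s.cut (m := p+2) (fun U hU => by have := lo _ _ (by norm_num) hU; omega) hC cC
    (Q := ∅) (by simp) (fun h1 => by have := s.emp1 _ h1; omega)
  apply this
  rw [Finset.sdiff_empty, eC, ← eW]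
  exact hW

end HS
end HH

namespace HH
section
variable {K : Type} [Field K] {r n : ℕ} (E : Fin r → Finset (Fin n))

def gE : Fin r → (Fin n → ℕ) := fun k x => if x ∈ E k then 1 else 0

def cov (S : Finset (Fin r)) : Finset (Fin n) :=
  Finset.univ.filter (fun x => ∃ k ∈ S, x ∈ E k)

lemma mem_TW {W : Finset (Fin n)} {S : Finset (Fin r)} : S ∈ TW E W ↔ cov E S = W := by
  unfold TW cov
  rw [Finset.ext_iff]
  simp only [Set.mem_ofPred_eq, Finset.mem_filter, Finset.mem_univ, true_and]
  exact forall_congr' fun x => Iff.comm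

lemma mlcm_eq (S : Finset (Fin r)) (x : Fin n) :
    EP.mlcm (gE E) S x = if x ∈ cov E S then 1 else 0 := by
  unfold EP.mlcm
  split_ifs with h
  · simp only [cov, Finset.mem_filter, Finset.mem_univ, true_and] at h
    obtain ⟨k, hk, hx⟩ := h
    apply le_antisymm
    · apply Finset.sup_le
      intro b _
      unfold gE
      split_ifs <;> simp
    · have : gE E k x = 1 := by simp [gE, hx]
      rw [← this]
      exact Finset.le_sup (f := fun k => gE E k x) hk
  · simp only [cov, Finset.mem_filter, Finset.mem_univ, true_and] at h
    push Not at h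
    apply le_antisymm
    · apply Finset.sup_le
      intro b hb
      simp [gE, h b hb]
    · simp

lemma mlcm_iff (S T : Finset (Fin r)) :
    EP.mlcm (gE E) S = EP.mlcm (gE E) T ↔ cov E S = cov E T := by
  constructor
  · intro h
    ext x
    have := congrFun h x
    rw [mlcm_eq, mlcm_eq] at this
    by_cases h1 : x ∈ cov E S <;> by_cases h2 : x ∈ cov E T <;> simp_all
  · intro h
    ext x
    rw [mlcm_eq, mlcm_eq, h]

lemma mlcm_sum (S : Finset (Fin r)) : ∑ x, EP.mlcm (gE E) S x = (cov E S).card := by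
  simp [mlcm_eq]

lemma bdT_apply (e : Finset (Fin r) →₀ K) (T : Finset (Fin r)) :
    (EP.bdT K (gE E) e) T = D (fun k : Fin r => k.val) (res (TW E (cov E T)) e) T := by
  unfold EP.bdT
  rw [Finsupp.lsum_apply, Finsupp.sum_fintype _ _ (by simp)]
  simp only [LinearMap.toSpanSingleton_apply, Finsupp.finsetSum_apply, Finsupp.smul_apply,
    smul_eq_mul, Finset.mul_sum]
  have : ∀ S : Finset (Fin r), (∑ k ∈ S, e S * (if EP.mlcm (gE E) (S.erase k) = EP.mlcm (gE E) S
      then ((-1 : K) ^ ((S.filter (fun j => j < k)).card)) • Finsupp.single (S.erase k) (1 : K)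
      else 0 : Finset (Fin r) →₀ K) T) = ∑ k, if k ∈ S ∧ S.erase k = T ∧ cov E T = cov E S then
        eps (fun k : Fin r => k.val) K k T * e S else 0 := by
    intro S
    rw [← Finset.sum_subset (Finset.subset_univ S)]
    · refine Finset.sum_congr rfl fun k hk => ?_
      by_cases h1 : S.erase k = T
      · subst h1
        by_cases h2 : cov E (S.erase k) = cov E S
        · rw [if_pos ((mlcm_iff E _ _).2 h2), if_pos ⟨hk, rfl, h2⟩]
          simp only [Finsupp.smul_apply, Finsupp.single_eq_same, smul_eq_mul, mul_one]
          rw [mul_comm]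
          congr 1
          unfold eps cnt
          congr 2
          ext j
          simp only [Finset.mem_filter, Finset.mem_erase, Fin.lt_def]
          constructor
          · rintro ⟨a, b⟩
            exact ⟨⟨by rintro rfl; exact lt_irrefl _ b, a⟩, b⟩
          · rintro ⟨a, b⟩
            exact ⟨a.2, b⟩
        · rw [if_neg (fun h => h2 ((mlcm_iff E _ _).1 h)), if_neg (by tauto)]; simp
      · rw [if_neg (c := k ∈ S ∧ S.erase k = T ∧ cov E T = cov E S) (by tauto)]
        split_ifs
        · simp [Finsupp.single_apply, h1]
        · simp
    · intro k _ hk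
      rw [if_neg (by tauto)]
  rw [Finset.sum_congr rfl fun S _ => this S, Finset.sum_comm]
  unfold D
  refine Finset.sum_congr rfl fun k _ => ?_
  split_ifs with hk
  · refine Finset.sum_eq_zero fun S _ => ?_
    rw [if_neg]
    rintro ⟨_, rfl, _⟩
    simp at hk
  · rw [Finset.sum_eq_single (insert k T)]
    · rw [Finset.erase_insert hk]
      by_cases h : cov E T = cov E (insert k T)
      · rw [if_pos ⟨by simp, rfl, h⟩, res_in ((mem_TW E).2 h.symm)]
      · rw [if_neg (by tauto), res_out (fun h' => h ((mem_TW E).1 h').symm), mul_zero]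
    · intro S _ hS
      rw [if_neg]
      rintro ⟨h1, rfl, _⟩
      exact hS (Finset.insert_erase h1).symm
    · simp

lemma mem_strand (p j : ℕ) (c : Finset (Fin r) →₀ K) :
    c ∈ EP.strand K (gE E) p j ↔ ∀ S, c S ≠ 0 → S.card = p ∧ (cov E S).card = j := by
  have : EP.strand K (gE E) p j
      = Finsupp.supported K K {S : Finset (Fin r) | S.card = p ∧ (cov E S).card = j} := by
    rw [Finsupp.supported_eq_span_single]
    unfold EP.strand
    congr 1
    ext c
    simp only [Set.mem_ofPred_eq, Set.mem_image, mlcm_sum]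
    constructor
    · rintro ⟨S, h1, h2, rfl⟩
      exact ⟨S, ⟨h1, h2⟩, rfl⟩
    · rintro ⟨S, ⟨h1, h2⟩, rfl⟩
      exact ⟨S, h1, h2, rfl⟩
  rw [this, Finsupp.mem_supported]
  constructor
  · intro h S hS
    exact h (by simpa using hS)
  · intro h S hS
    exact h S (by simpa using hS)

lemma tor_iff (p j : ℕ) : EP.torRank K (gE E) p j ≠ 0 ↔
    ∃ W : Finset (Fin n), W.card = j ∧ ¬ van (fun k : Fin r => k.val) K (TW E W) p := by
  constructor
  · intro h
    by_contra! hc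
    apply h
    unfold EP.torRank
    have : EP.strand K (gE E) p j ⊓ LinearMap.ker (EP.bdT K (gE E)) ≤
        Submodule.map (EP.bdT K (gE E)) (EP.strand K (gE E) (p+1) j) := by
      rintro f ⟨h1, h2⟩
      rw [SetLike.mem_coe, mem_strand] at h1
      rw [SetLike.mem_coe, LinearMap.mem_ker] at h2
      have key : ∀ W : Finset (Fin n), ∃ e : Finset (Fin r) → K, W.card = j →
          Sup (TW E W) (p+1) e ∧ ∀ T ∈ TW E W, D (fun k : Fin r => k.val) e T = f T := by
        intro W
        by_cases hW : W.card = j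
        · obtain ⟨e, he, he2⟩ := hc W hW (res (TW E W) f) (by
            intro S hS
            by_cases hST : S ∈ TW E W
            · rw [res_in hST] at hS
              exact ⟨hST, by rw [(h1 S hS).1]⟩
            · rw [res_out hST] at hS
              exact absurd rfl hS) (by
            intro T hT
            have := bdT_apply E f T
            rw [h2, (mem_TW E).1 hT] at this
            exact this.symm)
          exact ⟨e, fun _ => ⟨he, fun T hT => by rw [he2 T hT, res_in hT]⟩⟩
        · exact ⟨0, fun h => absurd h hW⟩
      choose e he using key
      let e' : Finset (Fin r) →₀ K := Finsupp.equivFunOnFinite.symm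
        (fun S => if (cov E S).card = j then e (cov E S) S else 0)
      have he' : ∀ S, e' S = if (cov E S).card = j then e (cov E S) S else 0 := fun S => rfl
      refine ⟨e', ?_, ?_⟩
      · rw [SetLike.mem_coe, mem_strand]
        intro S hS
        rw [he'] at hS
        split_ifs at hS with hj
        · exact ⟨by have := ((he _ hj).1 S hS).2; exact_mod_cast this, hj⟩
        · exact absurd rfl hS
      · ext T
        rw [bdT_apply]
        by_cases hj : (cov E T).card = j
        · rw [← (he _ hj).2 T ((mem_TW E).2 rfl)]
          apply D_congr
          intro k _
          by_cases hi : insert k T ∈ TW E (cov E T)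
          · rw [res_in hi, he', (mem_TW E).1 hi, if_pos hj]
          · rw [res_out hi, ((he _ hj).1).out hi]
        · have : f T = 0 := by
            by_contra hf
            exact hj (h1 T hf).2
          rw [this]
          apply D_zero
          intro k _
          by_cases hi : insert k T ∈ TW E (cov E T)
          · rw [res_in hi, he', (mem_TW E).1 hi, if_neg hj]
          · rw [res_out hi]
    rw [inf_eq_right.2 this, Nat.sub_self]
  · rintro ⟨W, hW, hv⟩ h0
    apply hv
    intro f hf hD
    have hle : Submodule.map (EP.bdT K (gE E)) (EP.strand K (gE E) (p+1) j) ⊓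
          (EP.strand K (gE E) p j ⊓ LinearMap.ker (EP.bdT K (gE E))) ≤
          EP.strand K (gE E) p j ⊓ LinearMap.ker (EP.bdT K (gE E)) := inf_le_right
    have heq := Submodule.eq_of_le_of_finrank_le hle (by
      unfold EP.torRank at h0
      omega)
    let f' : Finset (Fin r) →₀ K := Finsupp.equivFunOnFinite.symm f
    have hf' : ∀ S, f' S = f S := fun S => rfl
    have hm : f' ∈ EP.strand K (gE E) p j ⊓ LinearMap.ker (EP.bdT K (gE E)) := by
      refine ⟨?_, ?_⟩
      · rw [SetLike.mem_coe, mem_strand]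
        intro S hS
        have := hf S hS
        rw [mem_TW] at this
        exact ⟨by exact_mod_cast this.2, by rw [this.1, hW]⟩
      · rw [SetLike.mem_coe, LinearMap.mem_ker]
        ext T
        rw [bdT_apply]
        by_cases hT : T ∈ TW E W
        · rw [(mem_TW E).1 hT]
          refine Eq.trans ?_ (hD T hT)
          apply D_congr
          intro k _
          by_cases hi : insert k T ∈ TW E W
          · rw [res_in hi, hf']
          · rw [res_out hi, hf.out hi]
        · apply D_zero
          intro k _
          by_cases hi : insert k T ∈ TW E (cov E T)
          · rw [res_in hi, hf']
            apply hf.out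
            rw [mem_TW] at hi hT ⊢
            rw [hi]; exact hT
          · rw [res_out hi]
    rw [← heq] at hm
    obtain ⟨e, he, he2⟩ := hm.1
    rw [SetLike.mem_coe, mem_strand] at he
    refine ⟨res (TW E W) e, ?_, ?_⟩
    · intro S hS
      by_cases hST : S ∈ TW E W
      · rw [res_in hST] at hS
        exact ⟨hST, by rw [(he S hS).1]; push_cast; rfl⟩
      · rw [res_out hST] at hS
        exact absurd rfl hS
    · intro T hT
      have := bdT_apply E e T
      rw [he2, (mem_TW E).1 hT] at this
      exact this.symm

end

section
variable {n : ℕ} (G : SimpleGraph (Fin n)) (K : Type) [Field K]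

noncomputable def EG (k : Fin (EP.edgeFins G).card) : Finset (Fin n) :=
  Finset.univ.filter (fun x => x ∈ ((EP.edgeFins G).equivFin.symm k : Sym2 (Fin n)))

lemma gE_EG : gE (EG G) = EP.edgeGens G := by
  funext k x
  simp [gE, EG, EP.edgeGens]

lemma ZW_eq (W : Finset (Fin n)) : ZW (EG G) W = Z Gᶜ W := by
  ext s
  simp only [ZW, Z, Set.mem_ofPred_eq, SimpleGraph.compl_adj]
  refine and_congr_right fun _ => ?_
  constructor
  · intro h a b ha hb hab
    refine ⟨hab, fun hG => ?_⟩
    have hm : s(a, b) ∈ EP.edgeFins G := by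
      simp [EP.edgeFins, hG]
    obtain ⟨x, hx, hs⟩ := h ((EP.edgeFins G).equivFin ⟨_, hm⟩)
    simp [EG] at hx
    rcases hx with rfl | rfl
    · exact ha hs
    · exact hb hs
  · intro h k
    obtain ⟨⟨z, hz⟩, hk⟩ : ∃ z, z = (EP.edgeFins G).equivFin.symm k := ⟨_, rfl⟩
    induction z using Sym2.ind with
    | _ a b =>
      have hG : G.Adj a b := by simpa [EP.edgeFins] using hz
      by_contra! hc
      simp only [EG, ← hk, Finset.mem_filter, Finset.mem_univ, true_and, Sym2.mem_iff] at hc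
      exact (h a b (hc a (Or.inl rfl)) (hc b (Or.inr rfl)) hG.ne).2 hG

lemma hh_iff (c : ℤ) (W : Finset (Fin n)) : hh Gᶜ K c W ↔
    ¬ van (fun k : Fin (EP.edgeFins G).card => k.val) K (TW (EG G) W) (W.card - c) := by
  unfold hh
  rw [← ZW_eq, vanZ, vanT]
  have := Finset.card_add_card_compl W
  rw [Fintype.card_fin] at this
  have : (W.card : ℤ) - c + (Wᶜ).card = n - c := by omega
  rw [this]

lemma betti_iff (i j : ℕ) : EP.gBetti K G i j ≠ 0 ↔
    ∃ W : Finset (Fin n), W.card = j ∧ hh Gᶜ K (j - i - 1) W := by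
  unfold EP.gBetti EP.betti
  rw [← gE_EG, tor_iff]
  refine exists_congr fun W => and_congr_right fun h => ?_
  rw [hh_iff, h]
  have : (j:ℤ) - (j - i - 1) = ((i+1 : ℕ) : ℤ) := by push_cast; ring
  rw [this]

lemma hh_range {c : ℤ} {W : Finset (Fin n)} (h : hh Gᶜ K c W) (hW : W ≠ ∅) :
    1 ≤ (W.card : ℤ) - c ∧ (W.card : ℤ) - c ≤ (EP.edgeFins G).card := by
  rw [hh_iff] at h
  by_contra hc
  apply h
  apply van_empty
  intro S hS he
  apply hc
  rw [← he]
  refine ⟨?_, ?_⟩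
  · have : S ≠ ∅ := by
      rintro rfl
      rw [mem_TW] at hS
      apply hW
      rw [← hS]
      simp [cov]
    have := Finset.card_pos.2 (Finset.nonempty_iff_ne_empty.2 this)
    omega
  · have := Finset.card_le_univ S
    rw [Fintype.card_fin] at this
    exact_mod_cast this

theorem final (hiso : ∀ v : Fin n, ∃ w, G.Adj v w) (h : EP.AMFI K G) :
    3 ≤ n - EP.gPd K G ∧ n - EP.gPd K G ≤ 4 := by
  have s := hhHS Gᶜ K
  have toB : ∀ c U, hh Gᶜ K c U → U ≠ ∅ → ∃ i : ℕ, (i:ℤ) = U.card - c - 1 ∧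
      EP.gBetti K G i U.card ≠ 0 := by
    intro c U hc hU
    have := (hh_range G K hc hU).1
    obtain ⟨i, hi⟩ := Int.eq_ofNat_of_zero_le (a := (U.card : ℤ) - c - 1) (by omega)
    refine ⟨i, hi.symm, (betti_iff G K _ _).2 ⟨U, rfl, ?_⟩⟩
    have e : (U.card : ℤ) - i - 1 = c := by omega
    rw [e]; exact hc
  have bdd : BddAbove {i | ∃ j, EP.gBetti K G i j ≠ 0} := by
    refine ⟨(EP.edgeFins G).card, ?_⟩
    rintro i ⟨j, hj⟩
    obtain ⟨W, hW, hc⟩ := (betti_iff G K _ _).1 hj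
    by_cases h0 : W = ∅
    · subst h0
      have := s.emp1 _ hc
      simp at hW
      omega
    · have := (hh_range G K hc h0).2
      omega
  have hP : ∀ i j, EP.gBetti K G i j ≠ 0 → i ≤ EP.gPd K G := fun i j hij => le_csSup bdd ⟨j, hij⟩
  unfold EP.AMFI at h
  have hlow : ∀ i j, i + 2 < j → EP.gBetti K G i j ≠ 0 → EP.gPd K G ≤ i + 1 := by
    intro i j h1 h2
    have : EP.gIndex K G ≤ (i : ℕ∞) := sInf_le ⟨i, j, rfl, h1, h2⟩
    have : EP.gIndex K G + 1 ≤ (i : ℕ∞) + 1 := by gcongr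
    rw [h] at this
    exact_mod_cast this
  have hne : {N : ℕ∞ | ∃ i j : ℕ, N = (i : ℕ∞) ∧ i + 2 < j ∧ EP.gBetti K G i j ≠ 0}.Nonempty := by
    by_contra hc
    rw [Set.not_nonempty_iff_eq_empty] at hc
    unfold EP.gIndex at h
    rw [hc, sInf_empty] at h
    simp at h
  obtain ⟨i, j, hi, hij, hb⟩ := csInf_mem hne
  have hi : EP.gIndex K G = (i : ℕ∞) := hi
  have hiP : i + 1 = EP.gPd K G := by
    rw [hi] at h
    exact_mod_cast h
  obtain ⟨j2, hj2⟩ : ∃ j, EP.gBetti K G (EP.gPd K G) j ≠ 0 :=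
    Nat.sSup_mem (s := {i | ∃ j, EP.gBetti K G i j ≠ 0}) ⟨i, j, hb⟩ bdd
  have := s.core (EP.gPd K G : ℤ) (by omega)
    (by
      intro v
      obtain ⟨w, hw⟩ := hiso v
      exact ⟨w, hw.ne', by simp [SimpleGraph.compl_adj, hw]⟩)
    (by
      intro c U hc hh1
      have hU : U ≠ ∅ := by
        rintro rfl
        have := s.emp1 _ hh1
        omega
      obtain ⟨a, ha, hb⟩ := toB c U hh1 hU
      have := hlow a _ (by omega) hb
      omega)
    (by
      intro c U hh1
      by_cases hU : U = ∅
      · subst hU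
        have := s.emp1 _ hh1
        simp
        omega
      · obtain ⟨a, ha, hb⟩ := toB c U hh1 hU
        have := hP a _ hb
        omega)
    (by
      obtain ⟨W, hW, hc⟩ := (betti_iff G K _ _).1 hb
      exact ⟨_, W, by omega, hc, by omega⟩)
    (by
      obtain ⟨W, hW, hc⟩ := (betti_iff G K _ _).1 hj2
      exact ⟨_, W, hc, by omega⟩)
  omega

end
end HH



/-- If `G` has no isolated vertex and `I(G)` has almost maximal finite
index, then `3 ≤ depth(I(G)) ≤ 4`, where by the Auslander–Buchsbaum formula
`depth(I(G)) = n − pd(I(G))`. -/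
theorem statement10 (K : Type) [Field K] (n : ℕ) (G : SimpleGraph (Fin n))
    (hiso : ∀ v : Fin n, ∃ w, G.Adj v w) (h : EP.AMFI K G) :
    3 ≤ n - EP.gPd K G ∧ n - EP.gPd K G ≤ 4 := by
  exact HH.final G K hiso h
end

section
/- Let G be a simple graph whose complement is the cycle C_m of length m > 3, with the single extra vertex construction G_{(a)_1}: the complement Ḡ consists of the cycle 1-2-...-(t+3)-1 together with one extra vertex t+4 joined only to vertex 1, where m = t+3 and t ≥ 1. Then the edge ideal I(G) satisfies β_{t+1, t+4}(I(G)) ≠ 0 and β_{t+2, j}(I(G)) = 0 for all j, so pd(I(G)) = t+1 while index(I(G)) = t. -/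
open Finsupp

/-- The graph `G_{(a)_1}`: a cycle `0 - 1 - ⋯ - (t+2) - 0` together with one extra vertex
`t+3` joined only to the vertex `0`. -/
def Ga1 (t : ℕ) : SimpleGraph (Fin (t + 4)) :=
  SimpleGraph.fromRel (fun i j =>
    ((j : ℕ) = (i : ℕ) + 1 ∧ (j : ℕ) ≤ t + 2) ∨ ((i : ℕ) = 0 ∧ (j : ℕ) = t + 2) ∨
    ((i : ℕ) = 0 ∧ (j : ℕ) = t + 3))

set_option linter.unusedSectionVars false
set_option linter.unusedSimpArgs false

/-! ## Helper development -/
namespace Aux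

section chain
variable {K : Type} [Field K] {X : Type} [Fintype X] [DecidableEq X]

def sg (K : Type) [Field K] (ρ : X → ℕ) (t : Finset X) (x : X) : K :=
  (-1) ^ ((t.filter (fun w => ρ w < ρ x)).card)

lemma sg_sq (ρ : X → ℕ) (t : Finset X) (x : X) : sg K ρ t x * sg K ρ t x = 1 := by
  unfold sg
  rw [← mul_pow]; simp

lemma sg_ne (ρ : X → ℕ) (t : Finset X) (x : X) : sg K ρ t x ≠ 0 := by
  intro h
  have := sg_sq (K := K) ρ t x
  simp [h] at this

lemma sg_insert (ρ : X → ℕ) (t : Finset X) (x y : X) (hx : x ∉ t) :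
    sg K ρ (insert x t) y = if ρ x < ρ y then - sg K ρ t y else sg K ρ t y := by
  unfold sg
  rw [Finset.filter_insert]
  split_ifs with h
  · rw [Finset.card_insert_of_notMem (by simp [hx]), pow_succ]; ring
  · rfl

lemma sg_swap (ρ : X → ℕ) (hρ : Function.Injective ρ) (t : Finset X) (x y : X) (hx : x ∉ t)
    (hy : y ∉ t) (hxy : x ≠ y) :
    sg K ρ t x * sg K ρ (insert x t) y = - (sg K ρ t y * sg K ρ (insert y t) x) := by
  rw [sg_insert _ _ _ _ hx, sg_insert _ _ _ _ hy]
  have : ρ x ≠ ρ y := fun h => hxy (hρ h)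
  rcases lt_or_gt_of_ne this with h | h
  · simp [h, h.le.not_gt]; ring
  · simp [h, h.le.not_gt]; ring

def D (K : Type) [Field K] (ρ : X → ℕ) : (Finset X → K) →ₗ[K] (Finset X → K) where
  toFun c t := ∑ x ∈ tᶜ, sg K ρ t x * c (insert x t)
  map_add' a b := by
    funext t; simp [mul_add, Finset.sum_add_distrib]
  map_smul' a b := by
    funext t; simp only [Pi.smul_apply, smul_eq_mul, Finset.mul_sum, RingHom.id_apply]
    refine Finset.sum_congr rfl fun x _ => by ring

lemma D_apply (ρ : X → ℕ) (c : Finset X → K) (t : Finset X) :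
    D K ρ c t = ∑ x ∈ tᶜ, sg K ρ t x * c (insert x t) := rfl

lemma D_D (ρ : X → ℕ) (hρ : Function.Injective ρ) (c : Finset X → K) :
    D K ρ (D K ρ c) = 0 := by
  funext t
  simp only [D_apply, Finset.mul_sum, Pi.zero_apply]
  rw [Finset.sum_sigma']
  refine Finset.sum_involution (fun a _ => ⟨a.2, a.1⟩) ?_ ?_ ?_ ?_
  · rintro ⟨x, y⟩ h
    simp only [Finset.mem_sigma, Finset.mem_compl, Finset.mem_insert, not_or] at h
    obtain ⟨hx, hyx, hy⟩ := h
    have h1 := sg_swap (K := K) ρ hρ t x y hx hy (Ne.symm hyx)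
    dsimp only
    rw [Finset.insert_comm y x t, ← mul_assoc, ← mul_assoc, h1]; ring
  · rintro ⟨x, y⟩ h _ h2
    simp only [Finset.mem_sigma, Finset.mem_compl, Finset.mem_insert, not_or] at h
    simp only [Sigma.mk.injEq, heq_eq_eq] at h2
    exact h.2.1 h2.1
  · rintro ⟨x, y⟩ h
    simp only [Finset.mem_sigma, Finset.mem_compl, Finset.mem_insert, not_or] at h ⊢
    exact ⟨h.2.2, Ne.symm h.2.1, h.1⟩
  · rintro ⟨x, y⟩ h; rfl

def hv (ρ : X → ℕ) (v : X) (c : Finset X → K) : Finset X → K :=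
  fun t => if v ∈ t then sg K ρ (t.erase v) v * c (t.erase v) else 0

lemma homotopy (ρ : X → ℕ) (hρ : Function.Injective ρ) (v : X) (c : Finset X → K)
    (t : Finset X) : D K ρ (hv ρ v c) t + hv ρ v (D K ρ c) t = c t := by
  by_cases hvt : v ∈ t
  · obtain ⟨s, hs, rfl⟩ : ∃ s, v ∉ s ∧ t = insert v s :=
      ⟨t.erase v, by simp, (Finset.insert_erase hvt).symm⟩
    have hc : sᶜ = insert v (insert v s)ᶜ := by
      ext x; simp only [Finset.mem_compl, Finset.mem_insert, not_or]
      constructor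
      · intro hx
        by_cases hxv : x = v
        · exact Or.inl hxv
        · exact Or.inr ⟨hxv, hx⟩
      · rintro (rfl | h)
        · exact hs
        · exact h.2
    simp only [hv, if_pos hvt, Finset.erase_insert hs, D_apply]
    rw [hc, Finset.sum_insert (by simp), mul_add, ← mul_assoc, sg_sq, one_mul, add_left_comm,
      Finset.mul_sum, ← Finset.sum_add_distrib, Finset.sum_eq_zero, add_zero]
    intro x hx
    simp only [Finset.mem_compl, Finset.mem_insert, not_or] at hx
    obtain ⟨hxv, hxs⟩ := hx
    have e1 : insert x (insert v s) = insert v (insert x s) := Finset.insert_comm _ _ _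
    have e2 : v ∉ insert x s := by simp [hs, Ne.symm hxv]
    rw [e1, if_pos (by simp), Finset.erase_insert e2]
    have h1 := sg_swap (K := K) ρ hρ s x v hxs hs hxv
    have h2 : sg K ρ s x * sg K ρ s x = 1 := sg_sq _ _ _
    have h3 : sg K ρ s v * sg K ρ s v = 1 := sg_sq _ _ _
    rw [sg_insert _ _ _ _ hs, sg_insert _ _ _ _ hxs]
    have : ρ x ≠ ρ v := fun h => hxv (hρ h)
    rcases lt_or_gt_of_ne this with h | h
    · simp [h, h.le.not_gt]; ring
    · simp [h, h.le.not_gt]; ring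
  · simp only [hv, if_neg hvt, D_apply, add_zero]
    rw [Finset.sum_eq_single v]
    · simp [Finset.erase_insert hvt, ← mul_assoc, sg_sq]
    · intro x hx hxv
      rw [if_neg, mul_zero]
      simp [hvt, Ne.symm hxv]
    · intro h; simp [hvt] at h

def Sup (A : Set (Finset X)) (p : ℕ) (c : Finset X → K) : Prop :=
  ∀ t, c t ≠ 0 → t ∈ A ∧ t.card = p

def Down (A : Set (Finset X)) : Prop := ∀ t x, x ∉ t → insert x t ∈ A → t ∈ A

lemma Sup.sub {A : Set (Finset X)} {p : ℕ} {a b : Finset X → K} (ha : Sup A p a)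
    (hb : Sup A p b) : Sup A p (a - b) := by
  intro t ht
  by_cases h : a t = 0
  · by_cases h' : b t = 0
    · simp [h, h'] at ht
    · exact hb t h'
  · exact ha t h

lemma Sup.add {A : Set (Finset X)} {p : ℕ} {a b : Finset X → K} (ha : Sup A p a)
    (hb : Sup A p b) : Sup A p (a + b) := by
  intro t ht
  by_cases h : a t = 0
  · by_cases h' : b t = 0
    · simp [h, h'] at ht
    · exact hb t h'
  · exact ha t h

lemma Sup.mono {A B : Set (Finset X)} (h : A ⊆ B) {p : ℕ} {a : Finset X → K} (ha : Sup A p a) :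
    Sup B p a := fun t ht => ⟨h (ha t ht).1, (ha t ht).2⟩

lemma Sup.D {A : Set (Finset X)} (hA : Down A) (ρ : X → ℕ) {p : ℕ} {a : Finset X → K}
    (ha : Sup A (p + 1) a) : Sup A p (D K ρ a) := by
  intro t ht
  rw [D_apply] at ht
  obtain ⟨x, hx, hne⟩ := Finset.exists_ne_zero_of_sum_ne_zero ht
  have := ha _ (right_ne_zero_of_mul hne)
  rw [Finset.mem_compl] at hx
  rw [Finset.card_insert_of_notMem hx] at this
  exact ⟨hA t x hx this.1, by omega⟩

def Acyc (K : Type) [Field K] (ρ : X → ℕ) (A : Set (Finset X)) : Prop :=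
  ∀ (q : ℕ) (c : Finset X → K), Sup A q c → D K ρ c = 0 → ∃ a, Sup A (q + 1) a ∧ D K ρ a = c

open Classical in
lemma acyc_of_match (ρ : X → ℕ) (hρ : Function.Injective ρ) (A : Set (Finset X)) (hA : Down A)
    (Y : Set X) (m : Finset X → X) (hm1 : ∀ s ∈ A, m s ∉ Y)
    (hm2 : ∀ s ∈ A, insert (m s) s ∈ A)
    (hm3 : ∀ s ∈ A, ∀ x ∉ Y, m (insert x s) = m s) : Acyc K ρ A := by
  have key : ∀ (k q : ℕ) (c : Finset X → K), Sup A q c →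
      (∀ t, c t ≠ 0 → (t.filter (· ∈ Y)).card < k) → D K ρ c = 0 →
      ∃ a, Sup A (q + 1) a ∧ D K ρ a = c := by
    intro k
    induction k with
    | zero =>
      intro q c _ hk _
      refine ⟨0, fun t ht => by simp at ht, ?_⟩
      rw [map_zero]
      funext t
      by_contra h
      exact absurd (hk t (Ne.symm h)) (by simp)
    | succ k ih =>
      intro q c hc hk hD
      let a : Finset X → K := fun t => if t ∈ A then hv ρ (m t) c t else 0
      have haA : ∀ t, a t ≠ 0 → t ∈ A ∧ m t ∈ t ∧ c (t.erase (m t)) ≠ 0 := by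
        intro t ht
        simp only [a, hv] at ht
        split_ifs at ht with h1 h2
        · exact ⟨h1, h2, right_ne_zero_of_mul ht⟩
        · simp at ht
        · simp at ht
      have ha : Sup A (q + 1) a := by
        intro t ht
        obtain ⟨h1, h2, h3⟩ := haA t ht
        refine ⟨h1, ?_⟩
        have := (hc _ h3).2
        rw [Finset.card_erase_of_mem h2] at this
        have : 0 < t.card := Finset.card_pos.2 ⟨_, h2⟩
        omega
      have hak : ∀ t, a t ≠ 0 → (t.filter (· ∈ Y)).card < k + 1 := by
        intro t ht
        obtain ⟨h1, h2, h3⟩ := haA t ht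
        have := hk _ h3
        rwa [Finset.filter_erase, Finset.erase_eq_of_notMem] at this
        simp [hm1 t h1]
      have hsup : Sup A q (c - D K ρ a) := hc.sub (ha.D hA ρ)
      obtain ⟨b, hb, hb2⟩ := ih q (c - D K ρ a) hsup (by
        intro t ht
        by_contra hlt
        apply ht
        have htA : t ∈ A := (hsup t ht).1
        have hYz : ∀ x ∉ t, x ∈ Y → ∀ f : Finset X → K,
            (∀ s, f s ≠ 0 → (s.filter (· ∈ Y)).card < k + 1) → f (insert x t) = 0 := by
          intro x hx hxY f hf
          by_contra h
          have := hf _ h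
          rw [Finset.filter_insert, if_pos hxY, Finset.card_insert_of_notMem (by simp [hx])] at this
          omega
        have e : D K ρ a t = D K ρ (hv ρ (m t) c) t := by
          rw [D_apply, D_apply]
          refine Finset.sum_congr rfl fun x hx => ?_
          rw [Finset.mem_compl] at hx
          congr 1
          by_cases hxY : x ∈ Y
          · rw [hYz x hx hxY a hak, hYz x hx hxY (hv ρ (m t) c)]
            intro s hs
            simp only [hv] at hs
            split_ifs at hs with h2
            · have := hk _ (right_ne_zero_of_mul hs)
              rwa [Finset.filter_erase, Finset.erase_eq_of_notMem] at this
              simp [hm1 t htA]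
            · simp at hs
          · simp only [a]
            split_ifs with h1
            · rw [hm3 t htA x hxY]
            · simp only [hv]
              split_ifs with h2
              · have : c ((insert x t).erase (m t)) = 0 := by
                  by_contra h
                  have h3 := (hc _ h).1
                  have h4 := hm2 _ h3
                  have h5 := hm3 _ h3 (m t) (hm1 t htA)
                  rw [Finset.insert_erase h2, hm3 t htA x hxY] at h5
                  rw [← h5, Finset.insert_erase h2] at h4
                  exact h1 h4
                rw [this, mul_zero]
              · rfl
        have h := homotopy ρ hρ (m t) c t
        rw [hD, ← e] at h
        simp only [hv, Pi.zero_apply, mul_zero, ite_self, add_zero] at h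
        simp [h]) (by rw [map_sub, hD, D_D ρ hρ, sub_zero])
      refine ⟨a + b, ha.add hb, ?_⟩
      rw [map_add, hb2]; abel
  intro q c hc hD
  exact key (Fintype.card X + 1) q c hc
    (fun t _ => Nat.lt_succ_of_le (Finset.card_le_univ _)) hD

def RelExact (K : Type) [Field K] (ρ : X → ℕ) (Γ A : Set (Finset X)) (p : ℕ) : Prop :=
  ∀ b : Finset X → K, Sup Γ p b → (∀ t ∉ A, D K ρ b t = 0) →
    ∃ w, Sup Γ (p + 1) w ∧ ∀ t ∉ A, b t = D K ρ w t

lemma transfer (ρ : X → ℕ) (hρ : Function.Injective ρ) (Γ A B : Set (Finset X))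
    (hΓ : Down Γ) (hAΓ : A ⊆ Γ) (hBΓ : B ⊆ Γ) (hA : Acyc K ρ A)
    (hB : Acyc K ρ B) (q : ℕ) (h : RelExact K ρ Γ B (q + 1)) : RelExact K ρ Γ A (q + 1) := by
  intro b hb hbA
  have h1 : Sup A q (D K ρ b) := by
    intro t ht
    refine ⟨?_, (hb.D hΓ ρ t ht).2⟩
    by_contra h; exact ht (hbA t h)
  obtain ⟨a, ha, hab⟩ := hA q _ h1 (D_D ρ hρ b)
  have hz : D K ρ (b - a) = 0 := by rw [map_sub, hab, sub_self]
  have hzs : Sup Γ (q + 1) (b - a) := hb.sub (ha.mono hAΓ)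
  obtain ⟨w, hw, hwB⟩ := h (b - a) hzs (by simp [hz])
  have h2 : Sup B (q + 1) (b - a - D K ρ w) := by
    intro t ht
    refine ⟨?_, ((hzs.sub (hw.D hΓ ρ)) t ht).2⟩
    by_contra h; apply ht
    have := hwB t h
    simp only [Pi.sub_apply] at this ⊢
    rw [this, sub_self]
  obtain ⟨a2, ha2, ha2b⟩ := hB _ _ h2 (by rw [map_sub, hz, D_D ρ hρ, sub_zero])
  refine ⟨w + a2, hw.add (ha2.mono hBΓ), fun t ht => ?_⟩
  rw [map_add, ha2b]
  have : a t = 0 := by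
    by_contra h; exact ht (ha t h).1
  simp [this]

end chain

section pairs
variable {K : Type} [Field K] {r n : ℕ}

def rk (r n : ℕ) : Fin r ⊕ Fin n → ℕ := Sum.elim (fun k => k.val) (fun x => r + x.val)

lemma rk_inj : Function.Injective (rk r n) := by
  rintro (a | a) (b | b) h <;> simp only [rk, Sum.elim_inl, Sum.elim_inr] at h
  · rw [Fin.ext h]
  · omega
  · omega
  · congr 1; ext; omega

def Gam (e : Fin r → Finset (Fin n)) (W : Finset (Fin n)) : Set (Finset (Fin r ⊕ Fin n)) :=
  {s | (∀ k, Sum.inl k ∈ s → ∀ x ∈ e k, x ∈ W ∧ Sum.inr x ∉ s) ∧ ∀ x, Sum.inr x ∈ s → x ∈ W}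

def A1 (e : Fin r → Finset (Fin n)) (W : Finset (Fin n)) : Set (Finset (Fin r ⊕ Fin n)) :=
  {s | s ∈ Gam e W ∧ ∃ x ∈ W, ∀ k ∈ s.toLeft, x ∉ e k}

def A2 (e : Fin r → Finset (Fin n)) (W : Finset (Fin n)) : Set (Finset (Fin r ⊕ Fin n)) :=
  {s | s ∈ Gam e W ∧ ∃ k, ∀ x ∈ e k, x ∈ W ∧ x ∉ s.toRight}

lemma down_Gam (e : Fin r → Finset (Fin n)) (W : Finset (Fin n)) : Down (Gam e W) := by
  rintro t x hx ⟨h1, h2⟩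
  refine ⟨fun k hk y hy => ?_, fun y hy => h2 y (Finset.mem_insert_of_mem hy)⟩
  obtain ⟨h3, h4⟩ := h1 k (Finset.mem_insert_of_mem hk) y hy
  exact ⟨h3, fun h => h4 (Finset.mem_insert_of_mem h)⟩

lemma down_A1 (e : Fin r → Finset (Fin n)) (W : Finset (Fin n)) : Down (A1 e W) := by
  rintro t x hx ⟨h1, y, hy, h2⟩
  refine ⟨down_Gam e W t x hx h1, y, hy, fun k hk => h2 k ?_⟩
  rw [Finset.mem_toLeft] at hk ⊢
  exact Finset.mem_insert_of_mem hk

lemma down_A2 (e : Fin r → Finset (Fin n)) (W : Finset (Fin n)) : Down (A2 e W) := by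
  rintro t x hx ⟨h1, k, h2⟩
  refine ⟨down_Gam e W t x hx h1, k, fun y hy => ⟨(h2 y hy).1, fun h => (h2 y hy).2 ?_⟩⟩
  rw [Finset.mem_toRight] at h ⊢
  exact Finset.mem_insert_of_mem h

lemma toLeft_insert_inr (s : Finset (Fin r ⊕ Fin n)) (y : Fin n) :
    (insert (Sum.inr y) s).toLeft = s.toLeft := by
  ext k; simp

lemma toRight_insert_inl (s : Finset (Fin r ⊕ Fin n)) (y : Fin r) :
    (insert (Sum.inl y) s).toRight = s.toRight := by
  ext k; simp

open Classical in
lemma acyc_A1 (e : Fin r → Finset (Fin n)) (W : Finset (Fin n)) :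
    Acyc K (rk r n) (A1 e W) := by
  rcases isEmpty_or_nonempty (Fin r ⊕ Fin n) with hE | hE
  · intro q c hc _
    refine ⟨0, fun t ht => by simp at ht, ?_⟩
    rw [map_zero]; funext t
    by_contra h
    obtain ⟨⟨_, x, _⟩, _⟩ := hc t (Ne.symm h)
    exact hE.elim (Sum.inr x)
  · let F : Finset (Fin r) → Fin r ⊕ Fin n := fun S =>
      if h : ∃ x ∈ W, ∀ k ∈ S, x ∉ e k then Sum.inr h.choose else Classical.arbitrary _
    have hF : ∀ s ∈ A1 e W, ∃ x ∈ W, (∀ k ∈ s.toLeft, x ∉ e k) ∧ F s.toLeft = Sum.inr x := by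
      rintro s ⟨_, h⟩
      refine ⟨h.choose, h.choose_spec.1, h.choose_spec.2, ?_⟩
      simp only [F]; rw [dif_pos h]
    refine acyc_of_match _ rk_inj _ (down_A1 e W) (Set.range Sum.inl) (fun s => F s.toLeft) ?_ ?_ ?_
    · intro s hs
      obtain ⟨x, _, _, h⟩ := hF s hs
      rw [h]; simp
    · intro s hs
      obtain ⟨x, hx, hxs, h⟩ := hF s hs
      rw [h]
      obtain ⟨⟨h1, h2⟩, _⟩ := hs
      refine ⟨⟨fun k hk y hy => ?_, fun y hy => ?_⟩, x, hx, by rwa [toLeft_insert_inr]⟩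
      · have hk' : Sum.inl k ∈ s := by simpa using hk
        refine ⟨(h1 k hk' y hy).1, ?_⟩
        rw [Finset.mem_insert, not_or]
        refine ⟨?_, (h1 k hk' y hy).2⟩
        intro hyx
        have : y = x := by simpa using hyx
        subst this
        exact hxs k (by simpa using hk') hy
      · rw [Finset.mem_insert] at hy
        rcases hy with hy | hy
        · have : y = x := by simpa using hy
          rwa [this]
        · exact h2 y hy
    · rintro s hs (x | x) hx
      · simp at hx
      · simp only [toLeft_insert_inr]

open Classical in
lemma acyc_A2 (e : Fin r → Finset (Fin n)) (W : Finset (Fin n)) :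
    Acyc K (rk r n) (A2 e W) := by
  rcases isEmpty_or_nonempty (Fin r ⊕ Fin n) with hE | hE
  · intro q c hc _
    refine ⟨0, fun t ht => by simp at ht, ?_⟩
    rw [map_zero]; funext t
    by_contra h
    obtain ⟨⟨_, x, _⟩, _⟩ := hc t (Ne.symm h)
    exact hE.elim (Sum.inl x)
  · let F : Finset (Fin n) → Fin r ⊕ Fin n := fun U =>
      if h : ∃ k, ∀ x ∈ e k, x ∈ W ∧ x ∉ U then Sum.inl h.choose else Classical.arbitrary _
    have hF : ∀ s ∈ A2 e W, ∃ k, (∀ x ∈ e k, x ∈ W ∧ x ∉ s.toRight) ∧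
        F s.toRight = Sum.inl k := by
      rintro s ⟨_, h⟩
      refine ⟨h.choose, h.choose_spec, ?_⟩
      simp only [F]; rw [dif_pos h]
    refine acyc_of_match _ rk_inj _ (down_A2 e W) (Set.range Sum.inr) (fun s => F s.toRight)
      ?_ ?_ ?_
    · intro s hs
      obtain ⟨x, _, h⟩ := hF s hs
      rw [h]; simp
    · intro s hs
      obtain ⟨k, hk, h⟩ := hF s hs
      rw [h]
      obtain ⟨⟨h1, h2⟩, _⟩ := hs
      refine ⟨⟨fun l hl y hy => ?_, fun y hy => h2 y (by simpa using hy)⟩, k,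
        by rwa [toRight_insert_inl]⟩
      rw [Finset.mem_insert] at hl
      rcases hl with hl | hl
      · have : l = k := by simpa using hl
        subst this
        simpa using hk y hy
      · simpa using h1 l hl y hy
    · rintro s hs (x | x) hx
      · simp only [toRight_insert_inl]
      · simp at hx

lemma rel_iff (e : Fin r → Finset (Fin n)) (W : Finset (Fin n)) (q : ℕ) :
    RelExact K (rk r n) (Gam e W) (A1 e W) (q + 1) ↔
      RelExact K (rk r n) (Gam e W) (A2 e W) (q + 1) :=
  ⟨transfer _ rk_inj _ _ _ (down_Gam e W) (fun _ h => h.1) (fun _ h => h.1) (acyc_A2 e W)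
    (acyc_A1 e W) q,
   transfer _ rk_inj _ _ _ (down_Gam e W) (fun _ h => h.1) (fun _ h => h.1) (acyc_A1 e W)
    (acyc_A2 e W) q⟩

lemma insert_inl_disjSum (S : Finset (Fin r)) (U : Finset (Fin n)) (k : Fin r) :
    insert (Sum.inl k) (S.disjSum U) = (insert k S).disjSum U := by
  ext (a | a) <;> simp

lemma insert_inr_disjSum (S : Finset (Fin r)) (U : Finset (Fin n)) (k : Fin n) :
    insert (Sum.inr k) (S.disjSum U) = S.disjSum (insert k U) := by
  ext (a | a) <;> simp

lemma sg_inl (S : Finset (Fin r)) (k : Fin r) :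
    sg K (rk r n) (S.disjSum ∅) (Sum.inl k) = (-1) ^ ((S.filter (fun j => j < k)).card) := by
  have : (S.disjSum (∅ : Finset (Fin n))).filter (fun w => rk r n w < rk r n (Sum.inl k)) =
      (S.filter (fun j => j < k)).disjSum ∅ := by
    ext (a | a) <;> simp [rk]
  rw [sg, this]; simp only [Finset.card_disjSum, Finset.card_empty, add_zero, zero_add]

lemma sg_inr (U : Finset (Fin n)) (k : Fin n) :
    sg K (rk r n) ((∅ : Finset (Fin r)).disjSum U) (Sum.inr k) =
      (-1) ^ ((U.filter (fun j => j < k)).card) := by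
  have : ((∅ : Finset (Fin r)).disjSum U).filter (fun w => rk r n w < rk r n (Sum.inr k)) =
      (∅ : Finset (Fin r)).disjSum (U.filter (fun j => j < k)) := by
    ext (a | a) <;> simp [rk]
  rw [sg, this]; simp only [Finset.card_disjSum, Finset.card_empty, add_zero, zero_add]

lemma D_sum (c : Finset (Fin r ⊕ Fin n) → K) (t : Finset (Fin r ⊕ Fin n)) :
    D K (rk r n) c t =
      (∑ k, if Sum.inl k ∈ t then 0 else sg K (rk r n) t (Sum.inl k) * c (insert (Sum.inl k) t)) +
      ∑ x, if Sum.inr x ∈ t then 0 else sg K (rk r n) t (Sum.inr x) * c (insert (Sum.inr x) t) := by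
  rw [D_apply, ← Fintype.sum_sum_type (fun y => if y ∈ t then (0 : K) else
    sg K (rk r n) t y * c (insert y t))]
  rw [← Finset.sum_subset (Finset.subset_univ tᶜ)]
  · refine Finset.sum_congr rfl fun x hx => ?_
    rw [if_neg (by simpa using hx)]
  · intro x _ hx
    rw [if_pos (by simpa using hx)]

/-! ### Taylor side -/

lemma bdT_apply (g : Fin r → (Fin n → ℕ)) (c : Finset (Fin r) →₀ K) (S : Finset (Fin r)) :
    EP.bdT K g c S = ∑ k, if k ∈ S then 0 else
      (if EP.mlcm g (insert k S) = EP.mlcm g S then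
        ((-1 : K) ^ ((S.filter (fun j => j < k)).card)) * c (insert k S) else 0) := by
  induction c using Finsupp.induction_linear with
  | zero => simp
  | add f g hf hg =>
    rw [map_add, Finsupp.add_apply, hf, hg, ← Finset.sum_add_distrib]
    refine Finset.sum_congr rfl fun k _ => ?_
    split_ifs <;> simp [mul_add]
  | single T a =>
    simp only [EP.bdT, Finsupp.lsum_single, LinearMap.toSpanSingleton_apply, Finsupp.smul_apply,
      Finsupp.finsetSum_apply, smul_eq_mul, Finset.mul_sum]
    rw [← Finset.sum_subset (Finset.subset_univ T)]
    · refine Finset.sum_congr rfl fun k hk => ?_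
      by_cases hS : T.erase k = S
      · subst hS
        simp only [Finset.mem_erase, ne_eq, not_true_eq_false, false_and, if_false,
          Finset.insert_erase hk, Finsupp.single_eq_same]
        have : (T.erase k).filter (fun j => j < k) = T.filter (fun j => j < k) := by
          ext j; simp only [Finset.mem_filter, Finset.mem_erase]
          constructor
          · rintro ⟨⟨_, h⟩, h'⟩; exact ⟨h, h'⟩
          · rintro ⟨h, h'⟩; exact ⟨⟨h'.ne, h⟩, h'⟩
        rw [this]
        by_cases h : EP.mlcm g (T.erase k) = EP.mlcm g T
        · simp [h, mul_comm]
        · simp [h, Ne.symm h]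
      · have h1 : ∀ P : Prop, [Decidable P] → (if P then ((-1 : K) ^ ((T.filter (fun j => j < k)).card)) •
            Finsupp.single (T.erase k) (1 : K) else 0) S = 0 := by
          intro P _; split_ifs <;> simp [Finsupp.single_apply, hS]
        rw [h1, mul_zero]
        by_cases hkS : k ∈ S
        · simp [hkS]
        · have : T ≠ insert k S := by
            rintro rfl; exact hS (Finset.erase_insert hkS)
          simp [Finsupp.single_apply, this]
    · intro k _ hk
      have : T ≠ insert k S := by
        rintro rfl; simp at hk
      simp [Finsupp.single_apply, this]

def IsInd (e : Fin r → Finset (Fin n)) (g : Fin r → (Fin n → ℕ)) : Prop :=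
  ∀ k x, g k x = if x ∈ e k then 1 else 0

lemma mlcm_eq {e : Fin r → Finset (Fin n)} {g : Fin r → (Fin n → ℕ)} (h : IsInd e g)
    (S : Finset (Fin r)) (x : Fin n) : EP.mlcm g S x = if x ∈ S.biUnion e then 1 else 0 := by
  unfold EP.mlcm
  simp only [h _ x]
  split_ifs with hx
  · rw [Finset.mem_biUnion] at hx
    obtain ⟨k, hk, hxk⟩ := hx
    apply le_antisymm
    · refine Finset.sup_le fun k _ => ?_
      split_ifs <;> simp
    · have := Finset.le_sup (f := fun k => if x ∈ e k then 1 else 0) hk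
      simpa [hxk] using this
  · rw [Finset.mem_biUnion] at hx
    push Not at hx
    rw [← Nat.le_zero]
    refine Finset.sup_le fun k hk => ?_
    simp [hx k hk]

lemma mlcm_eq_iff {e : Fin r → Finset (Fin n)} {g : Fin r → (Fin n → ℕ)} (h : IsInd e g)
    (S T : Finset (Fin r)) : EP.mlcm g S = EP.mlcm g T ↔ S.biUnion e = T.biUnion e := by
  constructor
  · intro hh
    ext x
    have := congrFun hh x
    rw [mlcm_eq h, mlcm_eq h] at this
    by_cases h1 : x ∈ S.biUnion e <;> by_cases h2 : x ∈ T.biUnion e <;>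
      simp only [h1, h2, if_true, if_false, iff_true, iff_self, one_ne_zero, zero_ne_one] at this ⊢
  · intro hh
    funext x
    rw [mlcm_eq h, mlcm_eq h, hh]

lemma mlcm_sum {e : Fin r → Finset (Fin n)} {g : Fin r → (Fin n → ℕ)} (h : IsInd e g)
    (S : Finset (Fin r)) : ∑ x, EP.mlcm g S x = (S.biUnion e).card := by
  simp only [mlcm_eq h]
  rw [Finset.sum_ite_mem, Finset.univ_inter, Finset.sum_const, smul_eq_mul, mul_one]

lemma mem_strand {e : Fin r → Finset (Fin n)} {g : Fin r → (Fin n → ℕ)} (h : IsInd e g)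
    (p j : ℕ) (c : Finset (Fin r) →₀ K) : c ∈ EP.strand K g p j ↔
      ∀ S, c S ≠ 0 → S.card = p ∧ (S.biUnion e).card = j := by
  have : EP.strand K g p j =
      Finsupp.supported K K {S : Finset (Fin r) | S.card = p ∧ (S.biUnion e).card = j} := by
    rw [Finsupp.supported_eq_span_single]
    unfold EP.strand
    congr 1
    ext c
    simp only [mlcm_sum h, Set.mem_ofPred_eq, Set.mem_image]
    constructor
    · rintro ⟨S, h1, h2, rfl⟩; exact ⟨S, ⟨h1, h2⟩, rfl⟩
    · rintro ⟨S, ⟨h1, h2⟩, rfl⟩; exact ⟨S, h1, h2, rfl⟩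
  rw [this, Finsupp.mem_supported]
  constructor
  · intro hh S hS; exact hh (by simpa using hS)
  · intro hh S hS; exact hh S (by simpa using hS)

lemma torRank_eq_zero (g : Fin r → (Fin n → ℕ)) (p j : ℕ) :
    EP.torRank K g p j = 0 ↔ ∀ c ∈ EP.strand K g p j, EP.bdT K g c = 0 →
      ∃ w ∈ EP.strand K g (p + 1) j, EP.bdT K g w = c := by
  unfold EP.torRank
  constructor
  · intro h c hc hb
    have hle : Submodule.map (EP.bdT K g) (EP.strand K g (p+1) j) ⊓
          (EP.strand K g p j ⊓ LinearMap.ker (EP.bdT K g)) ≤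
          EP.strand K g p j ⊓ LinearMap.ker (EP.bdT K g) := inf_le_right
    have := Submodule.eq_of_le_of_finrank_le hle (by omega)
    have hc' : c ∈ EP.strand K g p j ⊓ LinearMap.ker (EP.bdT K g) := ⟨hc, hb⟩
    rw [← this] at hc'
    exact hc'.1
  · intro h
    have : Submodule.map (EP.bdT K g) (EP.strand K g (p+1) j) ⊓
          (EP.strand K g p j ⊓ LinearMap.ker (EP.bdT K g)) =
          EP.strand K g p j ⊓ LinearMap.ker (EP.bdT K g) := by
      apply le_antisymm inf_le_right
      rintro c ⟨hc, hb⟩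
      exact ⟨h c hc hb, hc, hb⟩
    rw [this]; simp

lemma taylor_D {e : Fin r → Finset (Fin n)} {g : Fin r → (Fin n → ℕ)} (h : IsInd e g)
    (p : ℕ) (S : Finset (Fin r)) (b : Finset (Fin r ⊕ Fin n) → K)
    (hb : Sup (Gam e (S.biUnion e)) p b) (c : Finset (Fin r) →₀ K)
    (hc : ∀ T : Finset (Fin r), T.biUnion e = S.biUnion e → c T = b (T.disjSum ∅)) :
    D K (rk r n) b (S.disjSum ∅) = EP.bdT K g c S := by
  rw [D_sum, bdT_apply]
  have h2 : (∑ x, if Sum.inr x ∈ S.disjSum (∅ : Finset (Fin n)) then (0 : K) else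
      sg K (rk r n) (S.disjSum ∅) (Sum.inr x) * b (insert (Sum.inr x) (S.disjSum ∅))) = 0 := by
    refine Finset.sum_eq_zero fun x _ => ?_
    rw [if_neg (by simp)]
    by_contra hne
    obtain ⟨⟨h1, h2⟩, _⟩ := hb _ (right_ne_zero_of_mul hne)
    have hx := h2 x (by simp)
    rw [Finset.mem_biUnion] at hx
    obtain ⟨k, hk, hxk⟩ := hx
    exact (h1 k (by simp [hk]) x hxk).2 (by simp)
  rw [h2, add_zero]
  refine Finset.sum_congr rfl fun k _ => ?_
  simp only [Finset.inl_mem_disjSum, sg_inl, insert_inl_disjSum, mlcm_eq_iff h]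
  split_ifs with h3 h4
  · rfl
  · rw [hc _ h4]
  · suffices b ((insert k S).disjSum ∅) = 0 by rw [this, mul_zero]
    by_contra hne
    obtain ⟨⟨h5, _⟩, _⟩ := hb _ hne
    apply h4
    apply le_antisymm
    · intro x hx
      rw [Finset.mem_biUnion] at hx
      obtain ⟨l, hl, hxl⟩ := hx
      exact (h5 l (by simpa using hl) x hxl).1
    · exact Finset.biUnion_subset_biUnion_of_subset_left _ (Finset.subset_insert _ _)

lemma notMem_A1 {e : Fin r → Finset (Fin n)} {W : Finset (Fin n)} {t : Finset (Fin r ⊕ Fin n)}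
    (h1 : t ∈ Gam e W) (h2 : t ∉ A1 e W) : t = t.toLeft.disjSum ∅ ∧ t.toLeft.biUnion e = W := by
  have hW : ∀ x ∈ W, ∃ k ∈ t.toLeft, x ∈ e k := by
    intro x hx
    by_contra hne
    push Not at hne
    exact h2 ⟨h1, x, hx, hne⟩
  constructor
  · ext (a | a)
    · simp
    · simp only [Finset.inr_mem_disjSum, Finset.notMem_empty, iff_false]
      intro ha
      obtain ⟨k, hk, hak⟩ := hW a (h1.2 a ha)
      exact (h1.1 k (by simpa using hk) a hak).2 ha
  · ext x
    rw [Finset.mem_biUnion]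
    constructor
    · rintro ⟨k, hk, hx⟩
      exact (h1.1 k (by simpa using hk) x hx).1
    · exact hW x

lemma disjSum_notMem_A1 {e : Fin r → Finset (Fin n)} (S : Finset (Fin r)) :
    S.disjSum ∅ ∉ A1 e (S.biUnion e) := by
  rintro ⟨_, x, hx, h⟩
  rw [Finset.mem_biUnion] at hx
  obtain ⟨k, hk, hxk⟩ := hx
  exact h k (by simpa using hk) hxk

lemma disjSum_mem_Gam {e : Fin r → Finset (Fin n)} (S : Finset (Fin r)) :
    S.disjSum ∅ ∈ Gam e (S.biUnion e) := by
  refine ⟨fun k hk x hx => ⟨Finset.mem_biUnion.2 ⟨k, by simpa using hk, hx⟩, by simp⟩, ?_⟩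
  intro x hx; simp at hx

open Classical in
noncomputable def lift (e : Fin r → Finset (Fin n)) (W : Finset (Fin n))
    (c : Finset (Fin r) →₀ K) : Finset (Fin r ⊕ Fin n) → K :=
  fun t => if t = t.toLeft.disjSum ∅ ∧ t.toLeft.biUnion e = W then c t.toLeft else 0

lemma lift_disjSum (e : Fin r → Finset (Fin n)) (c : Finset (Fin r) →₀ K) (S : Finset (Fin r))
    (W : Finset (Fin n)) (hS : S.biUnion e = W) : lift e W c (S.disjSum ∅) = c S := by
  unfold lift
  rw [Finset.toLeft_disjSum, if_pos ⟨rfl, hS⟩]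

lemma sup_lift {e : Fin r → Finset (Fin n)} {W : Finset (Fin n)} {p : ℕ}
    {c : Finset (Fin r) →₀ K} (hc : ∀ S, S.biUnion e = W → c S ≠ 0 → S.card = p) :
    Sup (Gam e W) p (lift e W c) := by
  intro t ht
  unfold lift at ht
  split_ifs at ht with h
  · obtain ⟨h1, h2⟩ := h
    constructor
    · rw [h1, ← h2]; exact disjSum_mem_Gam _
    · rw [h1]; simpa using hc _ h2 ht
  · simp at ht

theorem torRank_iff {e : Fin r → Finset (Fin n)} {g : Fin r → (Fin n → ℕ)} (h : IsInd e g)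
    (q j : ℕ) : EP.torRank K g (q + 1) j = 0 ↔
      ∀ W : Finset (Fin n), W.card = j → RelExact K (rk r n) (Gam e W) (A2 e W) (q + 1) := by
  simp only [← rel_iff]
  rw [torRank_eq_zero]
  classical
  constructor
  · intro hT W hWj b hb hbA
    let c : Finset (Fin r) →₀ K := Finsupp.equivFunOnFinite.symm
      (fun S => if S.biUnion e = W then b (S.disjSum ∅) else 0)
    have hc : ∀ S, c S = if S.biUnion e = W then b (S.disjSum ∅) else 0 := fun S => rfl
    obtain ⟨w, hw, hwc⟩ := hT c (by
        rw [mem_strand h]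
        intro S hS
        rw [hc] at hS
        split_ifs at hS with h1
        · exact ⟨by simpa using (hb _ hS).2, by rw [h1, hWj]⟩
        · simp at hS) (by
        ext S
        rw [Finsupp.zero_apply]
        by_cases hS : S.biUnion e = W
        · subst hS
          rw [← taylor_D h (q + 1) S b hb c (fun T hT => by rw [hc, if_pos hT])]
          exact hbA _ (disjSum_notMem_A1 S)
        · rw [bdT_apply]
          refine Finset.sum_eq_zero fun k _ => ?_
          simp only [mlcm_eq_iff h]
          split_ifs with h1 h2
          · rfl
          · rw [hc, h2, if_neg hS, mul_zero]
          · rfl)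
    rw [mem_strand h] at hw
    have hs : Sup (Gam e W) (q + 1 + 1) (lift e W w) := sup_lift (fun S _ hS => (hw S hS).1)
    refine ⟨lift e W w, hs, ?_⟩
    intro t ht
    by_cases htG : t ∈ Gam e W
    · obtain ⟨h1, h2⟩ := notMem_A1 htG ht
      rw [h1]
      subst h2
      rw [taylor_D h _ _ _ hs w (fun T hT => (lift_disjSum e w T _ hT).symm), hwc, hc, if_pos rfl]
    · have z1 : b t = 0 := by
        by_contra hne; exact htG (hb t hne).1
      have z2 : D K (rk r n) (lift e W w) t = 0 := by
        by_contra hne; exact htG (hs.D (down_Gam e W) (rk r n) t hne).1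
      rw [z1, z2]
  · intro hR c hc hcb
    rw [mem_strand h] at hc
    have hs : ∀ W, Sup (Gam e W) (q + 1) (lift e W c) := fun W =>
      sup_lift (fun S _ hS => (hc S hS).1)
    have hex : ∀ W : Finset (Fin n), ∃ w, W.card = j → (Sup (Gam e W) (q + 1 + 1) w ∧
        ∀ t ∉ A1 e W, lift e W c t = D K (rk r n) w t) := by
      intro W
      by_cases hW : W.card = j
      · obtain ⟨w, hw⟩ := hR W hW (lift e W c) (hs W) (by
          intro t ht
          by_cases htG : t ∈ Gam e W
          · obtain ⟨h1, h2⟩ := notMem_A1 htG ht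
            rw [h1]
            subst h2
            rw [taylor_D h _ _ _ (hs _) c (fun T hT => (lift_disjSum e c T _ hT).symm), hcb]
            rfl
          · by_contra hne; exact htG ((hs W).D (down_Gam e W) (rk r n) t hne).1)
        exact ⟨w, fun _ => hw⟩
      · exact ⟨0, fun h' => absurd h' hW⟩
    choose w hw using hex
    let v : Finset (Fin r) →₀ K := Finsupp.equivFunOnFinite.symm
      (fun S => if (S.biUnion e).card = j then w (S.biUnion e) (S.disjSum ∅) else 0)
    have hv : ∀ S, v S = if (S.biUnion e).card = j then w (S.biUnion e) (S.disjSum ∅) else 0 :=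
      fun S => rfl
    refine ⟨v, ?_, ?_⟩
    · rw [mem_strand h]
      intro S hS
      rw [hv] at hS
      split_ifs at hS with h1
      · exact ⟨by simpa using ((hw _ h1).1 _ hS).2, h1⟩
      · simp at hS
    · ext S
      by_cases hS : (S.biUnion e).card = j
      · obtain ⟨h1, h2⟩ := hw _ hS
        rw [← taylor_D h _ S (w (S.biUnion e)) h1 v (fun T hT => by rw [hv, hT, if_pos hS]),
          ← h2 _ (disjSum_notMem_A1 S), lift_disjSum _ _ _ _ rfl]
      · have z1 : c S = 0 := by
          by_contra hne; exact hS (hc S hne).2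
        rw [z1, bdT_apply]
        refine Finset.sum_eq_zero fun k _ => ?_
        simp only [mlcm_eq_iff h]
        split_ifs with h1 h2
        · rfl
        · rw [hv, h2, if_neg hS, mul_zero]
        · rfl

end pairs

section delta
variable {K : Type} [Field K] {r n : ℕ}

abbrev face (r : ℕ) {n : ℕ} (U : Finset (Fin n)) : Finset (Fin r ⊕ Fin n) :=
  (∅ : Finset (Fin r)).disjSum U

lemma face_inj {U V : Finset (Fin n)} (h : face r U = face r V) : U = V := by
  have := congrArg Finset.toRight h
  rwa [Finset.toRight_disjSum, Finset.toRight_disjSum] at this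

lemma notMem_A2 {e : Fin r → Finset (Fin n)} {W : Finset (Fin n)} {t : Finset (Fin r ⊕ Fin n)}
    (h1 : t ∈ Gam e W) (h2 : t ∉ A2 e W) :
    ∃ U, t = face r U ∧ U ⊆ W ∧ ∀ k, ¬ e k ⊆ W \ U := by
  have hW : ∀ k, ¬ e k ⊆ W \ t.toRight := by
    intro k hk
    exact h2 ⟨h1, k, fun x hx => by simpa using hk hx⟩
  refine ⟨t.toRight, ?_, fun x hx => h1.2 x (by simpa using hx), hW⟩
  ext (a | a)
  · simp only [Finset.inl_mem_disjSum, Finset.notMem_empty, iff_false]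
    intro ha
    exact hW a (fun x hx => by simpa using h1.1 a ha x hx)
  · simp only [Finset.inr_mem_disjSum, Finset.mem_toRight]

lemma face_mem_Gam {e : Fin r → Finset (Fin n)} {W U : Finset (Fin n)} (h : U ⊆ W) :
    face r U ∈ Gam e W := by
  refine ⟨fun k hk => by simp only [Finset.inl_mem_disjSum, Finset.notMem_empty] at hk, fun x hx => h ?_⟩
  rwa [Finset.inr_mem_disjSum] at hx

lemma face_notMem_A2 {e : Fin r → Finset (Fin n)} {W U : Finset (Fin n)}
    (h : ∀ k, ¬ e k ⊆ W \ U) : face r U ∉ A2 e W := by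
  rintro ⟨_, k, hk⟩
  refine h k fun x hx => ?_
  rw [Finset.mem_sdiff]
  have := hk x hx
  rwa [Finset.toRight_disjSum] at this

def sx (K : Type) [Field K] (U : Finset (Fin n)) (x : Fin n) : K :=
  (-1) ^ ((U.filter (fun j => j < x)).card)

lemma sx_sq (U : Finset (Fin n)) (x : Fin n) : sx K U x * sx K U x = 1 := by
  unfold sx; rw [← mul_pow]; simp

lemma sx_ne (U : Finset (Fin n)) (x : Fin n) : sx K U x ≠ 0 := by
  intro h
  have := sx_sq (K := K) U x
  simp [h] at this

lemma sx_insert (t : Finset (Fin n)) (x y : Fin n) (hx : x ∉ t) :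
    sx K (insert x t) y = if x < y then - sx K t y else sx K t y := by
  unfold sx
  rw [Finset.filter_insert]
  split_ifs with h
  · rw [Finset.card_insert_of_notMem (by simp [hx]), pow_succ]; ring
  · rfl

lemma D_face {e : Fin r → Finset (Fin n)} {W U : Finset (Fin n)} {p : ℕ}
    {c : Finset (Fin r ⊕ Fin n) → K} (hc : Sup (Gam e W) p c) (hU : ∀ k, ¬ e k ⊆ W \ U) :
    D K (rk r n) c (face r U) = ∑ x ∈ W \ U, sx K U x * c (face r (insert x U)) := by
  rw [D_sum]
  have h1 : (∑ k, if Sum.inl k ∈ face r U then (0 : K) else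
      sg K (rk r n) (face r U) (Sum.inl k) * c (insert (Sum.inl k) (face r U))) = 0 := by
    refine Finset.sum_eq_zero fun k _ => ?_
    split_ifs with h
    · rfl
    · by_contra hne
      have := (hc _ (right_ne_zero_of_mul hne)).1
      refine hU k fun x hx => ?_
      have := this.1 k (Finset.mem_insert_self _ _) x hx
      rw [Finset.mem_sdiff]
      refine ⟨this.1, fun hxU => this.2 (Finset.mem_insert_of_mem ?_)⟩
      rwa [Finset.inr_mem_disjSum]
  rw [h1, zero_add, ← Finset.sum_subset (Finset.subset_univ (W \ U))]
  · refine Finset.sum_congr rfl fun x hx => ?_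
    rw [Finset.mem_sdiff] at hx
    rw [if_neg (by rw [Finset.inr_mem_disjSum]; exact hx.2), sg_inr, insert_inr_disjSum]
    rfl
  · intro x _ hx
    split_ifs with h
    · rfl
    · by_contra hne
      have := (hc _ (right_ne_zero_of_mul hne)).1
      apply hx
      rw [Finset.mem_sdiff]
      rw [Finset.inr_mem_disjSum] at h
      exact ⟨this.2 x (Finset.mem_insert_self _ _), h⟩

lemma sdiff_sdiff' {W U : Finset (Fin n)} (h : U ⊆ W) : W \ (W \ U) = U := by
  rw [Finset.sdiff_sdiff_eq_self h]

lemma D_one {e : Fin r → Finset (Fin n)} {W : Finset (Fin n)} {p : ℕ}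
    {c : Finset (Fin r ⊕ Fin n) → K} (hc : Sup (Gam e W) p c) {v : Fin n} (hv : v ∈ W)
    (hU : ∀ k, ¬ e k ⊆ {v}) :
    D K (rk r n) c (face r (W \ {v})) = sx K W v * c (face r W) := by
  have h1 : W \ (W \ {v}) = {v} := sdiff_sdiff' (by simpa using hv)
  have h3 : insert v (W \ {v}) = W := by
    ext x; simp only [Finset.mem_insert, Finset.mem_sdiff, Finset.mem_singleton]
    by_cases hx : x = v
    · simp [hx, hv]
    · simp [hx]
  have h2 : sx K (W \ {v}) v = sx K W v := by
    conv_rhs => rw [← h3, sx_insert _ _ _ (by simp)]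
    simp
  rw [D_face hc (by rwa [h1]), h1, Finset.sum_singleton, h2, h3]

def yy (W : Finset (Fin n)) (c : Finset (Fin r ⊕ Fin n) → K) (v : Fin n) : K :=
  sx K W v * c (face r (W \ {v}))

def eps (K : Type) [Field K] (W : Finset (Fin n)) (u v : Fin n) : K :=
  if u < v then sx K W u * sx K W v else - (sx K W u * sx K W v)

lemma eps_ne (W : Finset (Fin n)) (u v : Fin n) : eps K W u v ≠ 0 := by
  unfold eps
  split_ifs
  · exact mul_ne_zero (sx_ne _ _) (sx_ne _ _)
  · exact neg_ne_zero.2 (mul_ne_zero (sx_ne _ _) (sx_ne _ _))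

lemma D_two {e : Fin r → Finset (Fin n)} {W : Finset (Fin n)} {p : ℕ}
    {c : Finset (Fin r ⊕ Fin n) → K} (hc : Sup (Gam e W) p c) {u v : Fin n} (hu : u ∈ W)
    (hv : v ∈ W) (huv : u ≠ v) (hU : ∀ k, ¬ e k ⊆ {u, v}) :
    D K (rk r n) c (face r (W \ {u, v})) = eps K W u v * (yy W c v - yy W c u) := by
  have h1 : W \ (W \ {u, v}) = {u, v} := sdiff_sdiff' (by
    intro x hx; simp only [Finset.mem_insert, Finset.mem_singleton] at hx
    rcases hx with rfl | rfl <;> assumption)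
  have h3 : insert u (W \ {u, v}) = W \ {v} := by
    ext x; simp only [Finset.mem_insert, Finset.mem_sdiff, Finset.mem_singleton]
    by_cases hx : x = u
    · simp [hx, hu, huv]
    · simp [hx]
  have h4 : insert v (W \ {u, v}) = W \ {u} := by
    ext x; simp only [Finset.mem_insert, Finset.mem_sdiff, Finset.mem_singleton]
    by_cases hx : x = v
    · simp [hx, hv, huv.symm]
    · simp [hx]
  have h5 : insert v (W \ {v}) = W := by
    ext x; simp only [Finset.mem_insert, Finset.mem_sdiff, Finset.mem_singleton]
    by_cases hx : x = v
    · simp [hx, hv]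
    · simp [hx]
  have s1 : ∀ z, sx K W z = if v < z then
      -(if u < z then - sx K (W \ {u, v}) z else sx K (W \ {u, v}) z) else
      (if u < z then - sx K (W \ {u, v}) z else sx K (W \ {u, v}) z) := by
    intro z
    conv_lhs => rw [← h5, sx_insert _ _ _ (by simp), ← h3, sx_insert _ _ _ (by simp)]
  rw [D_face hc (by rwa [h1]), h1, Finset.sum_pair huv, h3, h4]
  have q1 := sx_sq (K := K) (W \ {u, v}) u
  have q2 := sx_sq (K := K) (W \ {u, v}) v
  have e1 := s1 u
  have e2 := s1 v
  simp only [yy, eps, e1, e2]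
  generalize c (face r (W \ {u})) = cu
  generalize c (face r (W \ {v})) = cv
  generalize sx K (W \ {u, v}) u = a at *
  generalize sx K (W \ {u, v}) v = b at *
  rcases lt_or_gt_of_ne huv with h | h
  · simp only [h, h.le.not_gt, lt_irrefl, if_true, if_false]
    linear_combination (-a * cv) * q2 - b * cu * q1
  · simp only [h, h.le.not_gt, lt_irrefl, if_true, if_false]
    linear_combination (-a * cv) * q2 - b * cu * q1

variable {e : Fin r → Finset (Fin n)} {W : Finset (Fin n)} {p : ℕ}

lemma rel_of_points (b w : Finset (Fin r ⊕ Fin n) → K) (hb : Sup (Gam e W) p b)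
    (hw : Sup (Gam e W) (p + 1) w)
    (h : ∀ U ⊆ W, (W \ U).card + p = W.card → (∀ k, ¬ e k ⊆ W \ U) →
      b (face r U) = D K (rk r n) w (face r U)) :
    ∀ t ∉ A2 e W, b t = D K (rk r n) w t := by
  intro t ht
  have hD := hw.D (down_Gam e W) (rk r n)
  by_contra hne
  have h0 : t ∈ Gam e W ∧ t.card = p := by
    by_cases hbt : b t = 0
    · exact hD t (fun h => hne (by rw [hbt, h]))
    · exact hb t hbt
  obtain ⟨U, rfl, hU, hk⟩ := notMem_A2 h0.1 ht
  refine hne (h U hU ?_ hk)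
  have : U.card = p := by simpa only [Finset.card_disjSum, Finset.card_empty, zero_add] using h0.2
  rw [← this, Finset.card_sdiff_add_card_eq_card hU]

theorem rel_three (h3 : ∀ F : Finset (Fin n), 3 ≤ F.card → ∃ k, e k ⊆ F) (hp : p + 3 ≤ W.card) :
    RelExact K (rk r n) (Gam e W) (A2 e W) p := by
  intro b hb _
  have hs : Sup (Gam e W) (p + 1) (0 : Finset (Fin r ⊕ Fin n) → K) := fun t ht => by simp at ht
  refine ⟨0, hs, rel_of_points b 0 hb hs ?_⟩
  intro U hU hc hk
  obtain ⟨k, hk'⟩ := h3 (W \ U) (by omega)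
  exact absurd hk' (hk k)

theorem rel_neg (hp : W.card < p) : RelExact K (rk r n) (Gam e W) (A2 e W) p := by
  intro b hb _
  have hs : Sup (Gam e W) (p + 1) (0 : Finset (Fin r ⊕ Fin n) → K) := fun t ht => by simp at ht
  refine ⟨0, hs, rel_of_points b 0 hb hs ?_⟩
  intro U hU hc hk
  omega

theorem rel_zero (h1 : ∀ k v, ¬ e k ⊆ {v}) (hW : W.Nonempty) (hp : p = W.card) :
    RelExact K (rk r n) (Gam e W) (A2 e W) p := by
  intro b hb hbD
  have hs : Sup (Gam e W) (p + 1) (0 : Finset (Fin r ⊕ Fin n) → K) := fun t ht => by simp at ht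
  refine ⟨0, hs, rel_of_points b 0 hb hs ?_⟩
  intro U hU hc hk
  have hU' : W \ U = ∅ := by rw [← Finset.card_eq_zero]; omega
  have : U = W := by rw [← sdiff_sdiff' hU, hU', Finset.sdiff_empty]
  subst this
  obtain ⟨v, hv⟩ := hW
  have := hbD (face r (U \ {v})) (face_notMem_A2 (by
    rw [sdiff_sdiff' (by simpa using hv)]; exact fun k => h1 k v))
  rw [D_one hb hv (fun k => h1 k v)] at this
  rcases mul_eq_zero.1 this with h | h
  · exact absurd h (sx_ne _ _)
  · rw [h, map_zero]; rfl

theorem rel_one (h1 : ∀ k v, ¬ e k ⊆ {v}) (hp : p + 1 = W.card)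
    (hconn : ∀ y : Fin n → K, (∀ u ∈ W, ∀ v ∈ W, u ≠ v → (∀ k, ¬ e k ⊆ {u, v}) → y u = y v) →
      ∀ u ∈ W, ∀ v ∈ W, y u = y v) :
    RelExact K (rk r n) (Gam e W) (A2 e W) p := by
  intro b hb hbD
  have hy := hconn (yy W b) (by
    intro u hu v hv huv hk
    have := hbD (face r (W \ {u, v})) (face_notMem_A2 (by
      rw [sdiff_sdiff' (by
        intro x hx; simp only [Finset.mem_insert, Finset.mem_singleton] at hx
        rcases hx with rfl | rfl <;> assumption)]; exact hk))
    rw [D_two hb hu hv huv hk] at this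
    rcases mul_eq_zero.1 this with h | h
    · exact absurd h (eps_ne _ _ _)
    · exact (sub_eq_zero.1 h).symm)
  obtain ⟨v0, hv0⟩ : W.Nonempty := Finset.card_pos.1 (by omega)
  let w : Finset (Fin r ⊕ Fin n) → K := fun t => if t = face r W then yy W b v0 else 0
  have hs : Sup (Gam e W) (p + 1) w := by
    intro t ht
    simp only [w] at ht
    split_ifs at ht with h
    · subst h
      exact ⟨face_mem_Gam (Finset.Subset.refl _), by
        simpa only [Finset.card_disjSum, Finset.card_empty, zero_add] using hp.symm⟩
    · simp at ht
  refine ⟨w, hs, rel_of_points b w hb hs ?_⟩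
  intro U hU hc hk
  obtain ⟨v, hv⟩ := Finset.card_eq_one.1 (show (W \ U).card = 1 by omega)
  have hUv : U = W \ {v} := by rw [← sdiff_sdiff' hU, hv]
  have hvW : v ∈ W := (Finset.mem_sdiff.1 (by rw [hv]; simp : v ∈ W \ U)).1
  rw [hUv, D_one hs hvW (fun k => h1 k v)]
  simp only [w, if_true]
  rw [hy v0 hv0 v hvW, yy, ← mul_assoc, sx_sq, one_mul]

open Classical in
theorem rel_two (hp : p + 2 = W.card)
    (hcut : ∀ u ∈ W, ∀ v ∈ W, u ≠ v → (∀ k, ¬ e k ⊆ {u, v}) → ∃ A : Set (Fin n), u ∈ A ∧ v ∉ A ∧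
      ∀ x ∈ W, ∀ z ∈ W, x ∈ A → z ∉ A → (∀ k, ¬ e k ⊆ {x, z}) → x = u ∧ z = v) :
    RelExact K (rk r n) (Gam e W) (A2 e W) p := by
  have hpair : ∀ U ⊆ W, (W \ U).card + p = W.card → ∃ u ∈ W, ∃ v ∈ W, u ≠ v ∧ W \ U = {u, v} ∧
      U = W \ {u, v} := by
    intro U hU hc
    obtain ⟨u, v, huv, h⟩ := Finset.card_eq_two.1 (show (W \ U).card = 2 by omega)
    refine ⟨u, ?_, v, ?_, huv, h, ?_⟩
    · exact (Finset.mem_sdiff.1 (by rw [h]; simp : u ∈ W \ U)).1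
    · exact (Finset.mem_sdiff.1 (by rw [h]; simp : v ∈ W \ U)).1
    · rw [← h, sdiff_sdiff' hU]
  have basis : ∀ t : Finset (Fin r ⊕ Fin n), ∃ w : Finset (Fin r ⊕ Fin n) → K,
      Sup (Gam e W) (p + 1) w ∧ (t ∈ Gam e W ∧ t.card = p → ∀ t' ∉ A2 e W,
        (Pi.single t 1 : Finset (Fin r ⊕ Fin n) → K) t' = D K (rk r n) w t') := by
    intro t
    have hs0 : Sup (Gam e W) (p + 1) (0 : Finset (Fin r ⊕ Fin n) → K) := fun t ht => by simp at ht
    by_cases htc : t ∈ Gam e W ∧ t.card = p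
    swap
    · exact ⟨0, hs0, fun h => absurd h htc⟩
    by_cases htA : t ∈ A2 e W
    · refine ⟨0, hs0, fun _ t' ht' => ?_⟩
      rw [map_zero, Pi.single_eq_of_ne (by rintro rfl; exact ht' htA)]; rfl
    obtain ⟨U, rfl, hU, hk⟩ := notMem_A2 htc.1 htA
    have hUp : U.card = p := by
      simpa only [Finset.card_disjSum, Finset.card_empty, zero_add] using htc.2
    obtain ⟨u, hu, v, hv, huv, hWU, hUe⟩ := hpair U hU (by
      rw [← hUp, Finset.card_sdiff_add_card_eq_card hU])
    rw [hWU] at hk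
    obtain ⟨A, huA, hvA, hA⟩ := hcut u hu v hv huv hk
    let w : Finset (Fin r ⊕ Fin n) → K := fun s => ∑ x ∈ W.filter (· ∈ A),
      if s = face r (W \ {x}) then - (eps K W u v)⁻¹ * sx K W x else 0
    have hs : Sup (Gam e W) (p + 1) w := by
      intro s hs
      obtain ⟨x, hx, hne⟩ := Finset.exists_ne_zero_of_sum_ne_zero hs
      split_ifs at hne with h
      · subst h
        refine ⟨face_mem_Gam Finset.sdiff_subset, ?_⟩
        have hxW := (Finset.mem_filter.1 hx).1
        have := Finset.card_sdiff_add_card_eq_card (show {x} ⊆ W by simpa using hxW)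
        rw [Finset.card_singleton] at this
        rw [Finset.card_disjSum, Finset.card_empty]; omega
      · simp at hne
    have hyy : ∀ x ∈ W, yy W w x = if x ∈ A then - (eps K W u v)⁻¹ else 0 := by
      intro x hx
      have : w (face r (W \ {x})) = ∑ z ∈ W.filter (· ∈ A),
          if x = z then - (eps K W u v)⁻¹ * sx K W z else 0 := by
        refine Finset.sum_congr rfl fun z hz => ?_
        have hzW := (Finset.mem_filter.1 hz).1
        congr 1
        apply propext
        constructor
        · intro h
          have h := face_inj h
          have h2 := congrArg (fun V => W \ V) h
          rw [sdiff_sdiff' (by simpa using hx), sdiff_sdiff' (by simpa using hzW)] at h2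
          simpa using h2
        · rintro rfl; rfl
      rw [yy, this, Finset.sum_ite_eq]
      simp only [Finset.mem_filter, hx, true_and]
      split_ifs
      · rw [mul_comm, mul_assoc, sx_sq, mul_one]
      · rw [mul_zero]
    have hsing : Sup (Gam e W) p (Pi.single (face r U) 1 : Finset (Fin r ⊕ Fin n) → K) := by
      intro s hs
      have : s = face r U := by
        by_contra h; exact hs (Pi.single_eq_of_ne h _)
      rw [this]; exact htc
    refine ⟨w, hs, fun _ => rel_of_points _ w hsing hs ?_⟩
    intro U' hU' hc' hk'
    obtain ⟨x, hx, z, hz, hxz, hWU', hUe'⟩ := hpair U' hU' hc'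
    rw [hWU'] at hk'
    by_cases hUU : U' = U
    · rw [hUU, Pi.single_eq_same]
      conv_rhs => rw [hUe]
      rw [D_two hs hu hv huv hk, hyy u hu, hyy v hv, if_pos huA, if_neg hvA]
      have := eps_ne (K := K) W u v
      field_simp
      ring
    · rw [Pi.single_eq_of_ne (fun h => hUU (face_inj h)), hUe', D_two hs hx hz hxz hk', hyy x hx,
        hyy z hz]
      have e1 : x ∈ A → z ∈ A := by
        intro h; by_contra h'
        obtain ⟨rfl, rfl⟩ := hA x hx z hz h h' hk'
        exact hUU (by rw [hUe', hUe])
      have e2 : z ∈ A → x ∈ A := by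
        intro h; by_contra h'
        obtain ⟨rfl, rfl⟩ := hA z hz x hx h h' (by rwa [Finset.pair_comm])
        exact hUU (by rw [hUe', hUe, Finset.pair_comm])
      have : x ∈ A ↔ z ∈ A := ⟨e1, e2⟩
      simp only [this, sub_self, mul_zero]
  choose w hw hw2 using basis
  intro b hb _
  have hsum : ∀ t, (∑ s, b s • w s) t = ∑ s, b s * w s t := by
    intro t; simp [Finset.sum_apply]
  refine ⟨∑ s, b s • w s, ?_, ?_⟩
  · intro t ht
    rw [hsum] at ht
    obtain ⟨s, _, hne⟩ := Finset.exists_ne_zero_of_sum_ne_zero ht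
    exact hw s t (right_ne_zero_of_mul hne)
  · intro t ht
    rw [map_sum, Finset.sum_apply, Finset.sum_eq_single t]
    · by_cases hbt : b t = 0
      · simp [hbt]
      · rw [map_smul, Pi.smul_apply, ← hw2 t (hb t hbt) t ht]; simp
    · intro s _ hst
      by_cases hbs : b s = 0
      · simp [hbs]
      · rw [map_smul, Pi.smul_apply, ← hw2 s (hb s hbs) t ht, Pi.single_eq_of_ne (Ne.symm hst),
          smul_zero]
    · simp

theorem not_rel_two (h3 : ∀ F : Finset (Fin n), 3 ≤ F.card → ∃ k, e k ⊆ F) (q : ℕ)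
    (hp : q + 1 + 2 = W.card) (u v : Fin n) (hu : u ∈ W) (hv : v ∈ W) (huv : u ≠ v)
    (hk : ∀ k, ¬ e k ⊆ {u, v})
    (hy : ∀ y : Fin n → K, (∀ x ∈ W, ∀ z ∈ W, x ≠ z → (∀ k, ¬ e k ⊆ {x, z}) →
      ({x, z} : Finset (Fin n)) ≠ {u, v} → y x = y z) → y u = y v) :
    ¬ RelExact K (rk r n) (Gam e W) (A2 e W) (q + 1) := by
  classical
  intro hR
  have hsub : ∀ x ∈ W, ∀ z ∈ W, ({x, z} : Finset (Fin n)) ⊆ W := by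
    intro x hx z hz a ha
    simp only [Finset.mem_insert, Finset.mem_singleton] at ha
    rcases ha with rfl | rfl <;> assumption
  have hb : Sup (Gam e W) (q + 1)
      (Pi.single (face r (W \ {u, v})) 1 : Finset (Fin r ⊕ Fin n) → K) := by
    intro s hs
    have : s = face r (W \ {u, v}) := by
      by_contra h; exact hs (Pi.single_eq_of_ne h _)
    rw [this]
    refine ⟨face_mem_Gam Finset.sdiff_subset, ?_⟩
    have := Finset.card_sdiff_add_card_eq_card (hsub u hu v hv)
    rw [Finset.card_pair huv] at this
    rw [Finset.card_disjSum, Finset.card_empty]; omega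
  obtain ⟨w, hw, hwt⟩ := hR _ hb (by
    intro t ht
    by_contra hne
    obtain ⟨h1, h2⟩ := hb.D (down_Gam e W) (rk r n) t hne
    obtain ⟨U, rfl, hU, hk⟩ := notMem_A2 h1 ht
    rw [Finset.card_disjSum, Finset.card_empty] at h2
    have := Finset.card_sdiff_add_card_eq_card hU
    obtain ⟨k, hk'⟩ := h3 (W \ U) (by omega)
    exact hk k hk')
  have key := hy (yy W w) (by
    intro x hx z hz hxz hk' hne
    have := hwt (face r (W \ {x, z})) (face_notMem_A2 (by
      rwa [sdiff_sdiff' (hsub x hx z hz)]))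
    rw [D_two hw hx hz hxz hk', Pi.single_eq_of_ne] at this
    · rcases mul_eq_zero.1 this.symm with h | h
      · exact absurd h (eps_ne _ _ _)
      · exact (sub_eq_zero.1 h).symm
    · intro h
      have h2 := congrArg (fun V => W \ V) (face_inj h)
      rw [sdiff_sdiff' (hsub x hx z hz), sdiff_sdiff' (hsub u hu v hv)] at h2
      exact hne h2)
  have := hwt (face r (W \ {u, v})) (face_notMem_A2 (by
      rwa [sdiff_sdiff' (hsub u hu v hv)]))
  rw [D_two hw hu hv huv hk, Pi.single_eq_same, key, sub_self, mul_zero] at this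
  exact one_ne_zero this

end delta

section graph
variable {K : Type} [Field K]

noncomputable def eG {n : ℕ} (G : SimpleGraph (Fin n)) :
    Fin (EP.edgeFins G).card → Finset (Fin n) :=
  fun k => Finset.univ.filter (fun x => x ∈ ((EP.edgeFins G).equivFin.symm k : Sym2 (Fin n)))

lemma isInd_eG {n : ℕ} (G : SimpleGraph (Fin n)) : IsInd (eG G) (EP.edgeGens G) := by
  intro k x
  simp [eG, EP.edgeGens]

lemma eG_sub {n : ℕ} (G : SimpleGraph (Fin n)) (F : Finset (Fin n)) :
    (∃ k, eG G k ⊆ F) ↔ ∃ u ∈ F, ∃ v ∈ F, G.Adj u v := by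
  constructor
  · rintro ⟨k, hk⟩
    have hm := ((EP.edgeFins G).equivFin.symm k).2
    have hk' : ∀ x, x ∈ ((EP.edgeFins G).equivFin.symm k : Sym2 (Fin n)) → x ∈ F := by
      intro x hx; exact hk (by simp [eG, hx])
    generalize ((EP.edgeFins G).equivFin.symm k : Sym2 (Fin n)) = z at hm hk'
    induction z using Sym2.ind with
    | _ u v =>
      refine ⟨u, hk' u (by simp), v, hk' v (by simp), ?_⟩
      simpa [EP.edgeFins] using hm
  · rintro ⟨u, hu, v, hv, h⟩
    have hm : s(u, v) ∈ EP.edgeFins G := by simpa [EP.edgeFins] using h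
    refine ⟨(EP.edgeFins G).equivFin ⟨s(u, v), hm⟩, ?_⟩
    intro x hx
    simp only [eG, Finset.mem_filter, Equiv.symm_apply_apply, Sym2.mem_iff] at hx
    rcases hx.2 with rfl | rfl <;> assumption

def RR (t u v : ℕ) : Prop :=
  (v = u + 1 ∧ v ≤ t + 2) ∨ (u = 0 ∧ v = t + 2) ∨ (u = 0 ∧ v = t + 3)

variable {t : ℕ} {G : SimpleGraph (Fin (t + 4))}

lemma adjc (hG : Gᶜ = Ga1 t) {u v : Fin (t + 4)} (h : u ≠ v) :
    ¬ G.Adj u v ↔ (RR t u v ∨ RR t v u) := by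
  have h1 : Gᶜ.Adj u v ↔ (Ga1 t).Adj u v := by rw [hG]
  rw [SimpleGraph.compl_adj] at h1
  simp only [Ga1, SimpleGraph.fromRel_adj] at h1
  unfold RR
  tauto

lemma noedge (hG : Gᶜ = Ga1 t) {u v : Fin (t + 4)} (h : u ≠ v) :
    (∀ k, ¬ eG G k ⊆ {u, v}) ↔ (RR t u v ∨ RR t v u) := by
  rw [← adjc hG h, ← not_exists, eG_sub]
  apply not_congr
  constructor
  · rintro ⟨a, ha, b, hb, hab⟩
    simp only [Finset.mem_insert, Finset.mem_singleton] at ha hb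
    rcases ha with rfl | rfl <;> rcases hb with rfl | rfl
    · exact absurd hab (G.loopless.irrefl _)
    · exact hab
    · exact hab.symm
    · exact absurd hab (G.loopless.irrefl _)
  · intro hh
    exact ⟨u, by simp, v, by simp, hh⟩

lemma nosing (k) (v : Fin (t + 4)) : ¬ eG G k ⊆ {v} := by
  intro h
  obtain ⟨a, ha, b, hb, hab⟩ := (eG_sub G {v}).1 ⟨k, h⟩
  simp only [Finset.mem_singleton] at ha hb
  subst ha; subst hb
  exact G.loopless.irrefl _ hab

lemma three (ht : 1 ≤ t) (hG : Gᶜ = Ga1 t) (F : Finset (Fin (t + 4))) (hF : 3 ≤ F.card) :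
    ∃ k, eG G k ⊆ F := by
  rw [eG_sub]
  obtain ⟨a, b, c, ha, hb, hc, hab, hac, hbc⟩ := Finset.two_lt_card_iff.1 hF
  by_contra hne
  push Not at hne
  have h1 := (adjc hG hab).1 (hne a ha b hb)
  have h2 := (adjc hG hac).1 (hne a ha c hc)
  have h3 := (adjc hG hbc).1 (hne b hb c hc)
  unfold RR at h1 h2 h3
  omega

lemma exists_missing (W : Finset (Fin (t + 4))) (hW : W.card < t + 3) :
    ∃ x : Fin (t + 4), x.val ≤ t + 2 ∧ x ∉ W := by
  by_contra hne
  push Not at hne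
  have : (Finset.univ : Finset (Fin (t + 3))).map Fin.castSuccEmb ⊆ W := by
    intro x hx
    rw [Finset.mem_map] at hx
    obtain ⟨y, _, rfl⟩ := hx
    apply hne
    have := y.2
    simp only [Fin.coe_castSuccEmb, Fin.val_castSucc]
    omega
  have := Finset.card_le_card this
  rw [Finset.card_map, Finset.card_univ, Fintype.card_fin] at this
  omega

lemma cut1 {W : Finset (Fin (t + 4))} {x0 : Fin (t + 4)} (hx0 : x0.val ≤ t + 2) (hxW : x0 ∉ W)
    {u v : Fin (t + 4)} (hu : u ∈ W) (hv : v ∈ W) (h : RR t u v) :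
    ∃ A : Set (Fin (t + 4)), u ∈ A ∧ v ∉ A ∧
      ∀ x ∈ W, ∀ z ∈ W, x ∈ A → z ∉ A → (RR t x z ∨ RR t z x) → x = u ∧ z = v := by
  have key : ∀ x ∈ W, x.val ≠ x0.val := fun x hx h => hxW (by rwa [← Fin.ext h])
  have hu' := key u hu
  have hv' := key v hv
  have red : ∀ P : ℕ → Prop, P u → ¬ P v → (∀ x z : ℕ, x < t + 4 → z < t + 4 → x ≠ x0 → z ≠ x0 →
      P x → ¬ P z → (RR t x z ∨ RR t z x) → x = u ∧ z = v) → ∃ A : Set (Fin (t + 4)), u ∈ A ∧ v ∉ A ∧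
      ∀ x ∈ W, ∀ z ∈ W, x ∈ A → z ∉ A → (RR t x z ∨ RR t z x) → x = u ∧ z = v := by
    intro P h1 h2 h3
    refine ⟨{x | P x}, h1, h2, fun x hx z hz hxA hzA hR => ?_⟩
    have := h3 x z x.2 z.2 (key x hx) (key z hz) hxA hzA hR
    exact ⟨Fin.ext this.1, Fin.ext this.2⟩
  have hu4 := u.2
  have hv4 := v.2
  unfold RR at h
  generalize u.val = u at *
  generalize v.val = v at *
  generalize x0.val = x0 at *
  rcases h with h | h | h
  · by_cases hlt : v < x0
    · refine red (fun y => ¬ (v ≤ y ∧ y ≤ x0)) (by omega) (by omega) ?_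
      intro x z; unfold RR; omega
    · refine red (fun y => x0 ≤ y ∧ y ≤ u) (by omega) (by omega) ?_
      intro x z; unfold RR; omega
  · refine red (fun y => ¬ (x0 ≤ y ∧ y ≤ t + 2)) (by omega) (by omega) ?_
    intro x z; unfold RR; omega
  · refine red (fun y => y ≠ t + 3) (by omega) (by omega) ?_
    intro x z; unfold RR; omega

lemma relA (hG : Gᶜ = Ga1 t) (W : Finset (Fin (t + 4))) (hW : W.card < t + 3) (p : ℕ)
    (hp : p + 2 = W.card) :
    RelExact K (rk _ _) (Gam (eG G) W) (A2 (eG G) W) p := by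
  obtain ⟨x0, hx0, hxW⟩ := exists_missing W hW
  refine rel_two hp ?_
  intro u hu v hv huv hk
  rw [noedge hG huv] at hk
  have conv : ∀ A : Set (Fin (t + 4)), ∀ a b : Fin (t + 4),
      (∀ x ∈ W, ∀ z ∈ W, x ∈ A → z ∉ A → (RR t x z ∨ RR t z x) → x = a ∧ z = b) →
      (∀ x ∈ W, ∀ z ∈ W, x ∈ A → z ∉ A → (∀ k, ¬ eG G k ⊆ {x, z}) → x = a ∧ z = b) := by
    intro A a b h x hx z hz hxA hzA hk
    have : x ≠ z := by rintro rfl; exact hzA hxA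
    exact h x hx z hz hxA hzA ((noedge hG this).1 hk)
  rcases hk with hk | hk
  · obtain ⟨A, h1, h2, h3⟩ := cut1 hx0 hxW hu hv hk
    exact ⟨A, h1, h2, conv A u v h3⟩
  · obtain ⟨A, h1, h2, h3⟩ := cut1 hx0 hxW hv hu hk
    refine ⟨Aᶜ, h2, fun h => h h1, conv Aᶜ u v ?_⟩
    intro x hx z hz hxA hzA hR
    have := h3 z hz x hx (not_not.1 hzA) hxA hR.symm
    exact ⟨this.2, this.1⟩

lemma relD1 (hG : Gᶜ = Ga1 t) (p : ℕ) (hp : p = t + 3) :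
    RelExact K (rk _ _) (Gam (eG G) Finset.univ) (A2 (eG G) Finset.univ) p := by
  refine rel_one nosing (by simp [hp]) ?_
  intro y hy
  have hy' : ∀ u v : Fin (t + 4), u ≠ v → (RR t u v ∨ RR t v u) → y u = y v := fun u v huv h =>
    hy u (Finset.mem_univ _) v (Finset.mem_univ _) huv ((noedge hG huv).2 h)
  have h0 : ∀ k (h : k ≤ t + 2), y ⟨k, by omega⟩ = y 0 := by
    intro k
    induction k with
    | zero => intro _; rfl
    | succ k ih =>
      intro h
      rw [← ih (by omega)]
      refine hy' _ _ ?_ (Or.inr (Or.inl ⟨rfl, h⟩))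
      intro h; simp at h
  have h1 : ∀ u, y u = y 0 := by
    intro u
    by_cases hu : u.val ≤ t + 2
    · exact h0 u.val hu
    · have := u.2
      refine hy' u 0 ?_ (Or.inr (Or.inr (Or.inr ⟨rfl, by omega⟩)))
      rintro rfl; simp at hu
  intro u _ v _
  rw [h1 u, h1 v]

lemma not_relN (ht : 1 ≤ t) (hG : Gᶜ = Ga1 t) (W : Finset (Fin (t + 4)))
    (hW : ∀ x : Fin (t + 4), x.val ≤ t + 2 → x ∈ W) (q : ℕ) (hq : q + 1 + 2 = W.card) :
    ¬ RelExact K (rk _ _) (Gam (eG G) W) (A2 (eG G) W) (q + 1) := by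
  have h01 : (⟨0, by omega⟩ : Fin (t + 4)) ≠ ⟨1, by omega⟩ := by intro h; simp at h
  refine not_rel_two (three ht hG) q hq ⟨0, by omega⟩ ⟨1, by omega⟩ (hW _ (by simp))
    (hW _ (by simp)) h01 ((noedge hG h01).2 (Or.inl (Or.inl ⟨rfl, by simp⟩))) ?_
  intro y hy
  have hy' : ∀ u v : Fin (t + 4), u.val ≤ t + 2 → v.val ≤ t + 2 → u ≠ v → 2 ≤ v.val →
      (RR t u v ∨ RR t v u) → y u = y v := by
    intro u v hu hv huv h2 h
    refine hy u (hW u hu) v (hW v hv) huv ((noedge hG huv).2 h) ?_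
    intro he
    have : v ∈ ({u, v} : Finset (Fin (t + 4))) := by simp
    rw [he] at this
    simp only [Finset.mem_insert, Finset.mem_singleton, Fin.ext_iff] at this
    omega
  have h0 : ∀ k (h : k + 1 ≤ t + 2), y ⟨k + 1, by omega⟩ = y ⟨1, by omega⟩ := by
    intro k
    induction k with
    | zero => intro _; rfl
    | succ k ih =>
      intro h
      rw [← ih (by omega)]
      refine (hy' _ _ ?_ ?_ ?_ ?_ (Or.inl (Or.inl ⟨rfl, h⟩))).symm
      · simp only; omega
      · simp only; omega
      · intro h; simp at h
      · simp only; omega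
  rw [← h0 (t + 1) (by omega)]
  refine hy' _ _ (by simp) (by simp) ?_ (by simp) (Or.inl (Or.inr (Or.inl ⟨rfl, rfl⟩)))
  intro h; simp at h

lemma gB_iff (i j : ℕ) : EP.gBetti K G i j = 0 ↔ ∀ W : Finset (Fin (t + 4)), W.card = j →
    RelExact K (rk _ _) (Gam (eG G) W) (A2 (eG G) W) (i + 1) :=
  torRank_iff (isInd_eG G) i j

lemma gB_low (ht : 1 ≤ t) (hG : Gᶜ = Ga1 t) (i j : ℕ) (hi : i < t) (hj : i + 2 < j) :
    EP.gBetti K G i j = 0 := by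
  rw [gB_iff]
  intro W hW
  by_cases h : i + 3 = j
  · exact relA hG W (by omega) _ (by omega)
  · exact rel_three (three ht hG) (by omega)

lemma gB_high (hG : Gᶜ = Ga1 t) (i j : ℕ) (hi : t + 2 ≤ i) : EP.gBetti K G i j = 0 := by
  rw [gB_iff]
  intro W hW
  have hc : W.card ≤ t + 4 := by simpa using Finset.card_le_univ W
  rcases lt_trichotomy W.card (i + 1) with h | h | h
  · exact rel_neg h
  · exact rel_zero nosing (Finset.card_pos.1 (by omega)) h.symm
  · have : W = Finset.univ := by
      rw [← Finset.card_eq_iff_eq_univ, Fintype.card_fin]; omega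
    rw [this]
    exact relD1 hG _ (by omega)

lemma gB_t1 (ht : 1 ≤ t) (hG : Gᶜ = Ga1 t) : EP.gBetti K G (t + 1) (t + 4) ≠ 0 := by
  rw [Ne, gB_iff]
  intro h
  exact not_relN ht hG Finset.univ (fun _ _ => Finset.mem_univ _) (t + 1) (by simp)
    (h Finset.univ (by simp))

lemma gB_t (ht : 1 ≤ t) (hG : Gᶜ = Ga1 t) : EP.gBetti K G t (t + 3) ≠ 0 := by
  rw [Ne, gB_iff]
  intro h
  have hc : ((Finset.univ : Finset (Fin (t + 3))).map Fin.castSuccEmb).card = t + 3 := by simp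
  refine not_relN ht hG ((Finset.univ : Finset (Fin (t + 3))).map Fin.castSuccEmb) ?_ t
    (by rw [hc]) (h _ hc)
  intro x hx
  rw [Finset.mem_map]
  exact ⟨⟨x.val, by omega⟩, Finset.mem_univ _, by ext; simp⟩

end graph

end Aux

/-- If the complement of `G` is `G_{(a)_1}` (a `(t+3)`-cycle with one
extra vertex joined to a single vertex of the cycle, `t ≥ 1`), then
`β_{t+1,t+4}(I(G)) ≠ 0` and `β_{t+2,j}(I(G)) = 0` for all `j`, so `pd(I(G)) = t + 1` while
`index(I(G)) = t`. -/
theorem statement11 (K : Type) [Field K] (t : ℕ) (ht : 1 ≤ t)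
    (G : SimpleGraph (Fin (t + 4))) (hG : Gᶜ = Ga1 t) :
    EP.gBetti K G (t + 1) (t + 4) ≠ 0 ∧ (∀ j, EP.gBetti K G (t + 2) j = 0) ∧
    EP.gPd K G = t + 1 ∧ EP.gIndex K G = (t : ℕ∞) := by
  refine ⟨Aux.gB_t1 ht hG, fun j => Aux.gB_high hG _ j le_rfl, ?_, ?_⟩
  · have h1 : IsGreatest {i | ∃ j, EP.gBetti K G i j ≠ 0} (t + 1) := by
      refine ⟨⟨t + 4, Aux.gB_t1 ht hG⟩, ?_⟩
      rintro i ⟨j, hj⟩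
      by_contra hlt
      exact hj (Aux.gB_high hG i j (by omega))
    exact h1.csSup_eq
  · have h1 : IsLeast {N : ℕ∞ | ∃ i j : ℕ, N = (i : ℕ∞) ∧ i + 2 < j ∧ EP.gBetti K G i j ≠ 0}
        (t : ℕ∞) := by
      refine ⟨⟨t, t + 3, rfl, by omega, Aux.gB_t ht hG⟩, ?_⟩
      rintro N ⟨i, j, rfl, hij, hne⟩
      rw [Nat.cast_le]
      by_contra hlt
      exact hne (Aux.gB_low ht hG i j (by omega) hij)
    exact h1.csInf_eq
end
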